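/- Let (R, m) be a catenary equidimensional Noetherian local ring of dimension t. There exists a positive integer ℓ, depending only on R, with the following property: whenever x = x_1, ..., x_t is a system of parameters of R with (x_1, ..., x_t) ⊆ m^ℓ and y = y_1, ..., y_t is a sequence of elements with (y) ⊆^A (x) for some t×t matrix A over R, then y is a system of parameters of R if and only if the determinantal map det(A): R/(x)^lim → R/(y)^lim is injective. -/

import Mathlib

/-!
If `x` and `y` both generate ideals primary to the maximal ideal `m`, the determinantal map from
`R/(x)^lim` to `R/(y)^lim` is injective by a formal argument (`mem_of_det_mul_mem_limitClosure`): the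
limit of the modules `R/(xⁿ)^lim` along determinantal maps depends only on the radical. The content
is the converse, where an injective determinantal map has to force `y` to be `m`-primary.

If `y` is not `m`-primary, it is contained in a prime `p ≠ m` which is directly below `m`. Let
`detKer p x` be the ideal of all `a` killed by *every* determinantal map from `x` to a sequence
inside `p`. It is enough to find, at one fixed level that works for all `p`, an element of
`detKer p` outside the limit closure.

*Uniformity.* The limit of the modules `R/(zⁿ)^lim` along a system of parameters `z` is the top local
cohomology module of `R`. It is Artinian, so its socle is finitely generated and is contained in the
image of `R/(z^n₀)^lim` for some `n₀` (`exists_level`). Thus a nonzero determinantal kernel, at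
whatever level it is found, is already visible for `z^n₀` (`exists_mem_detKer_level`), and `ℓ` is
chosen with `m^ℓ ⊆ (z^n₀)`, so that every `x ⊆ m^ℓ` receives an injective determinantal map from
`z^n₀`. The Artinian property is proved with Čech complexes, viewed as iterated cones of differential
modules, and Melkersson's criterion (`isArtinian_of_torsion`, `DiffModule.isArtinian_cech_quotient`,
`exists_fracModel`).

*Nonvanishing.* For a local domain `D` of dimension at most `r + 1` and a prime `p` of height at least `r`
directly below `m`, every `b ≠ 0` has a multiple `b * a` outside the limit closure of some
`m`-primary sequence `x` of length `r + 1` with `a ∈ detKer p x` (`detectsDetKer`). The proof is by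
induction on `r`. A generic `z ∈ p` is chosen so that limit closures of sequences beginning with `z^s`
are controlled by limit closures modulo `z^s`, up to multiplication by `p^e` with `e` independent
of `s`; this is the statement on Artinian modules in `exists_pow_smul_le`, applied to the `z`-power
torsion of a top local cohomology module (`exists_generic_limitClosure`). For `r = 1` one concludes
with Krull's intersection theorem in the localization at `p`; for larger `r` the induction hypothesis
is applied in a quotient of `D/(z)` by a minimal prime, and classes are lifted back by
`exists_lift_detKer`.

For the ring `R` itself one takes a minimal prime `P ⊆ p`. Equidimensionality gives
`dim R/P = t` and the catenary property gives that `p/P` has height `t - 1`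
(`le_height_map_mk_of_catenary`), so the nonvanishing statement applies to `R/P`; the class found there
lifts to `R` by `exists_lift_detKer`.
-/

open IsLocalRing

/-- The limit closure `(x)^lim = ⋃_{n>0} ((x₁^{n+1}, …, x_r^{n+1}) :_R (x₁⋯x_r)^n)` of a
sequence `x = x₁, …, x_r` of elements of `R`; the union of the increasing family of ideals
is expressed as a supremum. -/
def limitClosure {R : Type*} [CommRing R] {M : Type*} [AddCommGroup M] [Module R M]
    {r : ℕ} (x : Fin r → R) : Submodule R M :=
  ⨆ n : ℕ, (Ideal.span (Set.range fun i => x i ^ (n + 2)) • (⊤ : Submodule R M)).comap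
    (LinearMap.lsmul R M ((∏ i, x i) ^ (n + 1)))

/-- A system of parameters of a Noetherian local ring `R` of dimension `t`: a sequence of `t`
elements of the maximal ideal generating an ideal primary to the maximal ideal. -/
def IsSOP (R : Type*) [CommRing R] [IsLocalRing R] {t : ℕ} (x : Fin t → R) : Prop :=
  (∀ i, x i ∈ maximalIdeal R) ∧ (Ideal.span (Set.range x)).radical = maximalIdeal R

/-- A ring is catenary if, for any primes `p ≤ q`, all saturated chains of primes from `p`
to `q` have the same length. -/
def IsCatenaryRing (R : Type*) [CommRing R] : Prop :=
  ∀ p q : PrimeSpectrum R, p ≤ q →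
    ∀ c₁ c₂ : LTSeries (PrimeSpectrum R),
      c₁.head = p → c₁.last = q → c₂.head = p → c₂.last = q →
      (∀ i : Fin c₁.length, c₁ i.castSucc ⋖ c₁ i.succ) →
      (∀ i : Fin c₂.length, c₂ i.castSucc ⋖ c₂ i.succ) →
      c₁.length = c₂.length

/-- A ring is equidimensional if `dim R/p = dim R` for every minimal prime `p`. -/
def IsEquidimensionalRing (R : Type*) [CommRing R] : Prop :=
  ∀ p ∈ minimalPrimes R, ringKrullDim (R ⧸ p) = ringKrullDim R

/-! ### Limit closures and determinantal maps -/

section LimitClosure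
variable {R : Type*} [CommRing R] {t : ℕ}

/-- The ideal `(x₁^n, …, x_t^n)`. -/
def powSpan (x : Fin t → R) (n : ℕ) : Ideal R := Ideal.span (Set.range fun i => x i ^ n)

lemma pow_mem_powSpan (x : Fin t → R) (n : ℕ) (i : Fin t) : x i ^ n ∈ powSpan x n :=
  Ideal.subset_span ⟨i, rfl⟩

lemma powSpan_le {x : Fin t → R} {n : ℕ} {I : Ideal R} (h : ∀ i, x i ^ n ∈ I) :
    powSpan x n ≤ I := by
  rw [powSpan, Ideal.span_le]; rintro _ ⟨i, rfl⟩; exact h i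

lemma mul_mem_of_mem_span {s : Set R} {I : Ideal R} {c a : R} (h : ∀ b ∈ s, c * b ∈ I)
    (ha : a ∈ Ideal.span s) : c * a ∈ I := by
  have : Ideal.span s ≤ Submodule.comap (LinearMap.lsmul R R c) I := Ideal.span_le.2 h
  exact this ha

lemma prod_pow_mul_mem_powSpan {x : Fin t → R} {n k : ℕ} {a : R} (h : a ∈ powSpan x n) :
    (∏ i, x i) ^ k * a ∈ powSpan x (n + k) := by
  refine mul_mem_of_mem_span ?_ h
  rintro _ ⟨i, rfl⟩
  obtain ⟨c, hc⟩ : x i ∣ ∏ i, x i := Finset.dvd_prod_of_mem _ (Finset.mem_univ i)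
  have : (∏ i, x i) ^ k * x i ^ n = c ^ k * x i ^ (n + k) := by rw [hc]; ring
  simp only [this]
  exact Ideal.mul_mem_left _ _ (pow_mem_powSpan x _ i)

lemma mem_limitClosure {x : Fin t → R} {a : R} :
    a ∈ limitClosure (M := R) x ↔ ∃ j, (∏ i, x i) ^ j * a ∈ powSpan x (j + 1) := by
  unfold limitClosure
  rw [Submodule.mem_iSup_of_directed]
  · have e : ∀ n, (Ideal.span (Set.range fun i => x i ^ (n + 2)) • (⊤ : Submodule R R))
        = powSpan x (n + 2) := fun n => by simp [powSpan]
    simp only [e]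
    constructor
    · rintro ⟨j, hj⟩; exact ⟨j + 1, hj⟩
    · rintro ⟨j, hj⟩
      refine ⟨j, ?_⟩
      have := prod_pow_mul_mem_powSpan (k := 1) hj
      rw [← mul_assoc, ← pow_add, add_comm 1 j] at this
      exact this
  · refine directed_of_isDirected_le (monotone_nat_of_le_succ fun n a ha => ?_)
    have e : ∀ n, (Ideal.span (Set.range fun i => x i ^ (n + 2)) • (⊤ : Submodule R R))
        = powSpan x (n + 2) := fun n => by simp [powSpan]
    rw [Submodule.mem_comap, e] at ha ⊢
    change (∏ i, x i) ^ (n + 1) * a ∈ powSpan x (n + 2) at ha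
    change (∏ i, x i) ^ (n + 1 + 1) * a ∈ powSpan x (n + 1 + 2)
    have := prod_pow_mul_mem_powSpan (x := x) (k := 1) (n := n + 2) ha
    rw [← mul_assoc, ← pow_add, add_comm 1] at this
    exact this

lemma powSpan_one (x : Fin t → R) : powSpan x 1 = Ideal.span (Set.range x) := by simp [powSpan]

lemma powSpan_one_le_limitClosure (x : Fin t → R) : powSpan x 1 ≤ limitClosure (M := R) x :=
  fun a ha => mem_limitClosure.2 ⟨0, by simpa using ha⟩

lemma span_le_limitClosure (x : Fin t → R) :
    Ideal.span (Set.range x) ≤ limitClosure (M := R) x := by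
  rw [← powSpan_one]; exact powSpan_one_le_limitClosure x

lemma powSpan_pow (x : Fin t → R) (m n : ℕ) :
    powSpan (fun i => x i ^ m) n = powSpan x (m * n) := by simp [powSpan, pow_mul]

lemma mem_of_prod_pow_mul_mem_limitClosure {x : Fin t → R} {m : ℕ} {a : R}
    (h : (∏ i, x i) ^ m * a ∈ limitClosure (M := R) fun i => x i ^ (m + 1)) :
    a ∈ limitClosure (M := R) x := by
  obtain ⟨j, hj⟩ := mem_limitClosure.1 h
  rw [powSpan_pow, Finset.prod_pow, ← mul_assoc, ← pow_mul, ← pow_add] at hj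
  exact mem_limitClosure.2 ⟨(m + 1) * j + m, by convert hj using 2; ring⟩

/-- Cramer's rule. -/
lemma det_mul_mem_span {x y : Fin t → R} {A : Matrix (Fin t) (Fin t) R}
    (h : A.mulVec x = y) {a : R} (ha : a ∈ Ideal.span (Set.range x)) :
    A.det * a ∈ Ideal.span (Set.range y) := by
  refine mul_mem_of_mem_span ?_ ha
  rintro _ ⟨i, rfl⟩
  have h2 : (A.adjugate.mulVec y) i = A.det * x i := by
    rw [← h, Matrix.mulVec_mulVec, Matrix.adjugate_mul, Matrix.smul_mulVec, Matrix.one_mulVec]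
    rfl
  rw [← h2, Matrix.mulVec, dotProduct]
  exact Ideal.sum_mem _ fun j _ => Ideal.mul_mem_left _ _ (Ideal.subset_span (Set.mem_range_self j))

lemma mulVec_mem_span (A : Matrix (Fin t) (Fin t) R) (x : Fin t → R) (i : Fin t) :
    A.mulVec x i ∈ Ideal.span (Set.range x) := by
  rw [Matrix.mulVec, dotProduct]
  exact Ideal.sum_mem _ fun j _ => Ideal.mul_mem_left _ _ (Ideal.subset_span (Set.mem_range_self j))

lemma exists_mulVec_eq {x y : Fin t → R} (h : ∀ i, y i ∈ Ideal.span (Set.range x)) :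
    ∃ A : Matrix (Fin t) (Fin t) R, A.mulVec x = y := by
  choose c hc using fun i => Ideal.mem_span_range_iff_exists_fun.1 (h i)
  exact ⟨Matrix.of c, funext fun i => by simpa [Matrix.mulVec, dotProduct] using hc i⟩

/-- A matrix expressing `y` with its `i`-th entry replaced by `0` has determinant in the limit
closure of `y`, provided `yᵢ` is a combination of `x`. -/
lemma det_mem_limitClosure_of_update {x y : Fin t → R} (hy : ∀ i, y i ∈ Ideal.span (Set.range x))
    {E : Matrix (Fin t) (Fin t) R} {i : Fin t} (h : E.mulVec x = Function.update y i 0) :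
    E.det ∈ limitClosure (M := R) y := by
  refine mem_limitClosure.2 ⟨1, ?_⟩
  have h1 := det_mul_mem_span h (hy i)
  have h3 : (∏ l ∈ Finset.univ.erase i, y l) * (E.det * y i) ∈ powSpan y 2 := by
    refine mul_mem_of_mem_span ?_ h1
    rintro _ ⟨l, rfl⟩
    by_cases hl : l = i
    · subst hl; simp
    · obtain ⟨c, hc⟩ : y l ∣ ∏ l ∈ Finset.univ.erase i, y l :=
        Finset.dvd_prod_of_mem _ (by simp [hl])
      have : y l * c * y l = c * y l ^ 2 := by ring
      rw [Function.update_of_ne hl, hc, this]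
      exact Ideal.mul_mem_left _ _ (pow_mem_powSpan _ _ _)
  rw [pow_one, ← Finset.mul_prod_erase _ _ (Finset.mem_univ i)]
  convert h3 using 1; ring

/-- The determinantal map does not depend on the choice of the matrix. -/
lemma det_sub_det_mem_limitClosure {x y : Fin t → R} {A A' : Matrix (Fin t) (Fin t) R}
    (h : A.mulVec x = y) (h' : A'.mulVec x = y) :
    A.det - A'.det ∈ limitClosure (M := R) y := by
  classical
  let M : Finset (Fin t) → Matrix (Fin t) (Fin t) R := fun s => Matrix.of fun i =>
    if i ∈ s then A i else A' i
  have hM : ∀ s, (M s).mulVec x = y := by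
    intro s; funext i
    by_cases hi : i ∈ s
    · rw [← h]; simp [M, Matrix.mulVec, hi]
    · rw [← h']; simp [M, Matrix.mulVec, hi]
  have key : ∀ s, (M s).det - A'.det ∈ limitClosure (M := R) y := by
    intro s
    induction s using Finset.induction_on with
    | empty =>
      have : M ∅ = A' := by ext; simp [M]
      simp [this]
    | insert i s hi ih =>
      have e : M (insert i s) = (M s).updateRow i (A' i + (A i - A' i)) := by
        ext k l
        by_cases hk : k = i
        · subst hk; simp [M]
        · simp [M, hk, Matrix.updateRow_ne hk]
      have e2 : (M s).updateRow i (A' i) = M s := by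
        ext k l
        by_cases hk : k = i
        · subst hk; simp [M, hi]
        · simp [Matrix.updateRow_ne hk]
      rw [e, Matrix.det_updateRow_add, e2, add_sub_right_comm]
      refine add_mem ih (det_mem_limitClosure_of_update (x := x) (i := i) ?_ ?_)
      · rw [← h]; exact mulVec_mem_span A x
      · funext k
        by_cases hk : k = i
        · subst hk
          have h1 := congrFun h k
          have h2 := congrFun h' k
          simp only [Matrix.mulVec] at h1 h2
          simp only [Matrix.mulVec, Matrix.updateRow_self, Function.update_self]
          change (A k - A' k) ⬝ᵥ x = 0
          rw [sub_dotProduct]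
          exact sub_eq_zero.2 (h1.trans h2.symm)
        · rw [Function.update_of_ne hk, ← congrFun (hM s) k]
          simp [Matrix.mulVec, Matrix.updateRow_ne hk]
  have := key Finset.univ
  have e : M Finset.univ = A := by ext; simp [M]
  rwa [e] at this

lemma det_mul_mem_iff {x y : Fin t → R} {A A' : Matrix (Fin t) (Fin t) R}
    (h : A.mulVec x = y) (h' : A'.mulVec x = y) (r : R) :
    A.det * r ∈ limitClosure (M := R) y ↔ A'.det * r ∈ limitClosure (M := R) y := by
  have := Ideal.mul_mem_right r (limitClosure (M := R) y) (det_sub_det_mem_limitClosure h h')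
  rw [sub_mul] at this
  exact ⟨fun h => by simpa using sub_mem h this, fun h => by simpa using add_mem this h⟩

lemma exists_uniform_pow {y : Fin t → R} {I : Ideal R} (h : ∀ i, y i ∈ I.radical) :
    ∃ N, ∀ i, y i ^ (N + 1) ∈ I := by
  choose n hn using h
  refine ⟨∑ i, n i, fun i => Ideal.mem_of_dvd _ (pow_dvd_pow _ ?_) (hn i)⟩
  exact (Finset.single_le_sum (fun _ _ => Nat.zero_le _) (Finset.mem_univ i)).trans (Nat.le_succ _)

lemma diagonal_pow_mulVec (x : Fin t → R) (n : ℕ) :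
    (Matrix.diagonal fun i => x i ^ n).mulVec x = fun i => x i ^ (n + 1) := by
  funext i; simp [Matrix.mulVec_diagonal, pow_succ]

lemma radical_powSpan (x : Fin t → R) (n : ℕ) (i : Fin t) : x i ∈ (powSpan x n).radical :=
  ⟨n, pow_mem_powSpan x n i⟩

lemma mem_radical_of_mulVec {x y : Fin t → R} {A : Matrix (Fin t) (Fin t) R} {I : Ideal R}
    (h : A.mulVec x = y) (hx : ∀ i, x i ∈ I.radical) (i : Fin t) : y i ∈ I.radical := by
  rw [← h]
  exact (Ideal.span_le.2 (by rintro _ ⟨j, rfl⟩; exact hx j)) (mulVec_mem_span A x i)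

/-- If some power `y^(N+1)` is obtained from `x` through a matrix whose determinant multiplies `r`
into the limit closure, then so does any matrix expressing `y`. -/
lemma det_mul_mem_of_pow {x y : Fin t → R} {A C : Matrix (Fin t) (Fin t) R} {N : ℕ} {r : R}
    (h : A.mulVec x = y) (hC : C.mulVec x = fun i => y i ^ (N + 1))
    (hr : C.det * r ∈ limitClosure (M := R) fun i => y i ^ (N + 1)) :
    A.det * r ∈ limitClosure (M := R) y := by
  refine mem_of_prod_pow_mul_mem_limitClosure (m := N) ?_
  have h2 : ((Matrix.diagonal fun i => y i ^ N) * A).mulVec x = fun i => y i ^ (N + 1) := by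
    rw [← Matrix.mulVec_mulVec, h, diagonal_pow_mulVec]
  have := (det_mul_mem_iff h2 hC r).2 hr
  rwa [Matrix.det_mul, Matrix.det_diagonal, Finset.prod_pow, mul_assoc] at this

lemma det_mul_mem_limitClosure {x y : Fin t → R} {A : Matrix (Fin t) (Fin t) R}
    (h : A.mulVec x = y) {r : R} (hr : r ∈ limitClosure (M := R) x) :
    A.det * r ∈ limitClosure (M := R) y := by
  obtain ⟨n, hn⟩ := mem_limitClosure.1 hr
  obtain ⟨N, hN⟩ := exists_uniform_pow
    (mem_radical_of_mulVec h (radical_powSpan x (n + 1)))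
  obtain ⟨B, hB⟩ := exists_mulVec_eq hN
  refine det_mul_mem_of_pow (N := N) (C := B * Matrix.diagonal fun i => x i ^ n) h ?_ ?_
  · rw [← Matrix.mulVec_mulVec, diagonal_pow_mulVec, hB]
  · rw [Matrix.det_mul, Matrix.det_diagonal, Finset.prod_pow, mul_assoc]
    exact span_le_limitClosure _ (det_mul_mem_span hB hn)

/-- The determinantal map is injective when the two ideals have the same radical. -/
lemma mem_of_det_mul_mem_limitClosure {x y : Fin t → R} {A : Matrix (Fin t) (Fin t) R}
    (h : A.mulVec x = y) (hx : ∀ i, x i ∈ (Ideal.span (Set.range y)).radical) {r : R}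
    (hr : A.det * r ∈ limitClosure (M := R) y) : r ∈ limitClosure (M := R) x := by
  obtain ⟨N, hN⟩ := exists_uniform_pow hx
  obtain ⟨B, hB⟩ := exists_mulVec_eq hN
  have h1 : (B * A).det * r ∈ limitClosure (M := R) fun i => x i ^ (N + 1) := by
    rw [Matrix.det_mul, mul_assoc]; exact det_mul_mem_limitClosure hB hr
  have := det_mul_mem_of_pow (A := 1) (Matrix.one_mulVec x) (by rw [← Matrix.mulVec_mulVec, h, hB]) h1
  simpa using this

/-- Diagonal case of the determinantal map. -/
lemma prod_mul_mem_limitClosure_iff {x y d : Fin t → R} (h : ∀ i, y i = d i * x i)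
    (hx : ∀ i, x i ∈ (Ideal.span (Set.range y)).radical) {r : R} :
    (∏ i, d i) * r ∈ limitClosure (M := R) y ↔ r ∈ limitClosure (M := R) x := by
  have h1 : (Matrix.diagonal d).mulVec x = y := by
    funext i; simp [Matrix.mulVec_diagonal, h]
  rw [← Matrix.det_diagonal]
  exact ⟨mem_of_det_mul_mem_limitClosure h1 hx, det_mul_mem_limitClosure h1⟩

/-- The classes of `R/(x)^lim` killed by every determinantal map to a sequence `y` inside `p`. -/
def detKer (p : Ideal R) (x : Fin t → R) : Ideal R where
  carrier := {a | ∀ (y : Fin t → R) (B : Matrix (Fin t) (Fin t) R), (∀ i, y i ∈ p) →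
    B.mulVec x = y → B.det * a ∈ limitClosure (M := R) y}
  add_mem' := fun ha hb y B hy hB => by
    rw [mul_add]; exact add_mem (ha y B hy hB) (hb y B hy hB)
  zero_mem' := fun y B _ _ => by simp
  smul_mem' := fun c a ha y B hy hB => by
    rw [smul_eq_mul, mul_left_comm]; exact Ideal.mul_mem_left _ _ (ha y B hy hB)

lemma limitClosure_le_detKer (p : Ideal R) (x : Fin t → R) :
    limitClosure (M := R) x ≤ detKer p x := fun _ ha _ _ _ hB => det_mul_mem_limitClosure hB ha

lemma detKer_mulVec {p : Ideal R} {x x' : Fin t → R} {C : Matrix (Fin t) (Fin t) R}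
    (h : C.mulVec x = x') {a : R} (ha : a ∈ detKer p x) : C.det * a ∈ detKer p x' := by
  intro y B hy hB
  rw [← mul_assoc, ← Matrix.det_mul]
  exact ha y _ hy (by rw [← Matrix.mulVec_mulVec, h, hB])

lemma mem_detKer_of_mulVec {p : Ideal R} {x x' : Fin t → R} {C : Matrix (Fin t) (Fin t) R}
    (h : C.mulVec x = x') (hx : ∀ i, x i ∈ (Ideal.span (Set.range x')).radical) {a : R}
    (ha : C.det * a ∈ detKer p x') : a ∈ detKer p x := by
  intro y B hy hB
  obtain ⟨N, hN⟩ := exists_uniform_pow (mem_radical_of_mulVec hB hx)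
  obtain ⟨B', hBpow⟩ := exists_mulVec_eq hN
  refine det_mul_mem_of_pow (N := N) (C := B' * C) hB ?_ ?_
  · rw [← Matrix.mulVec_mulVec, h, hBpow]
  · rw [Matrix.det_mul, mul_assoc]
    exact ha _ B' (fun i => Ideal.pow_mem_of_mem _ (hy i) _ (Nat.succ_pos N)) hBpow

/-- If `v^s a ∈ (Z)` and `p` is contained in the radical of `(v^s W, Z)`, every determinantal map
to a sequence inside `p` factors, up to powers, through multiplication by `v^s`. -/
lemma mem_detKer_cons {r : ℕ} {p : Ideal R} {W v : R} {Z : Fin r → R} {s : ℕ} {a : R}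
    (ha : v ^ s * a ∈ Ideal.span (Set.range Z))
    (hp : p ≤ (Ideal.span (Set.range (Fin.cons (v ^ s * W) Z : Fin (r + 1) → R))).radical) :
    a ∈ detKer p (Fin.cons W Z : Fin (r + 1) → R) := by
  intro y B hy hB
  obtain ⟨N, hN⟩ := exists_uniform_pow fun i => hp (hy i)
  obtain ⟨B', hB'⟩ := exists_mulVec_eq hN
  refine det_mul_mem_of_pow (N := N)
    (C := B' * Matrix.diagonal (Fin.cons (v ^ s) fun _ => 1 : Fin (r + 1) → R)) hB ?_ ?_
  · rw [← Matrix.mulVec_mulVec, ← hB']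
    congr 1
    funext i
    rw [Matrix.mulVec_diagonal]
    refine Fin.cases ?_ (fun i => ?_) i <;> simp
  · rw [Matrix.det_mul, Matrix.det_diagonal, Fin.prod_univ_succ]
    simp only [Fin.cons_zero, Fin.cons_succ, Finset.prod_const_one, mul_one, mul_assoc]
    refine span_le_limitClosure _ (det_mul_mem_span hB' ?_)
    refine Ideal.span_mono ?_ ha
    rintro _ ⟨i, rfl⟩
    exact ⟨i.succ, by simp⟩

end LimitClosure

/-! ### Lifting classes of the determinantal kernel -/

section Lifting
variable {R : Type*} [CommRing R] {r : ℕ}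

lemma span_range_cons (w : R) (Z : Fin r → R) :
    Ideal.span (Set.range (Fin.cons w Z : Fin (r + 1) → R)) =
      Ideal.span {w} ⊔ Ideal.span (Set.range Z) := by
  rw [Fin.range_cons, ← Set.singleton_union, Ideal.span_union]

lemma powSpan_cons (w : R) (Z : Fin r → R) (n : ℕ) :
    powSpan (Fin.cons w Z : Fin (r + 1) → R) n = Ideal.span {w ^ n} ⊔ powSpan Z n := by
  have : (fun i => (Fin.cons w Z : Fin (r + 1) → R) i ^ n) = Fin.cons (w ^ n) fun i => Z i ^ n := by
    funext i; refine Fin.cases ?_ (fun i => ?_) i <;> simp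
  rw [powSpan, this, span_range_cons]; rfl

lemma cons_pow (w : R) (Z : Fin r → R) (n : ℕ) :
    (fun i => (Fin.cons w Z : Fin (r + 1) → R) i ^ n) = Fin.cons (w ^ n) fun i => Z i ^ n := by
  funext i; refine Fin.cases ?_ (fun i => ?_) i <;> simp

lemma mem_span_singleton_sup {I : Ideal R} {a g : R} (h : a ∈ Ideal.span {g} ⊔ I) :
    ∃ b, a - g * b ∈ I := by
  obtain ⟨c, hc, d, hd, rfl⟩ := Submodule.mem_sup.1 h
  obtain ⟨b, rfl⟩ := Ideal.mem_span_singleton.1 hc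
  exact ⟨b, by simpa using hd⟩

/-- The matrix expressing `(c w + Σ eᵢ Zᵢ, Z)` in terms of `(w, Z)`. -/
lemma exists_matrix_cons (w c : R) (e Z : Fin r → R) :
    ∃ B : Matrix (Fin (r + 1)) (Fin (r + 1)) R, B.det = c ∧
      B.mulVec (Fin.cons w Z) = Fin.cons (c * w + ∑ i, e i * Z i) Z := by
  let B : Matrix (Fin (r + 1)) (Fin (r + 1)) R :=
    Matrix.of (Fin.cons (Fin.cons c e) fun i => Pi.single i.succ 1)
  refine ⟨B, ?_, ?_⟩
  · have hB : B.BlockTriangular id := by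
      intro i j hij
      obtain ⟨i, rfl⟩ := Fin.exists_succ_eq.2 (Fin.ne_of_gt (lt_of_le_of_lt (Fin.zero_le j) hij))
      exact Pi.single_eq_of_ne (Fin.ne_of_lt hij) _
    rw [Matrix.det_of_upperTriangular hB, Fin.prod_univ_succ]
    simp [B]
  · funext i
    refine Fin.cases ?_ (fun i => ?_) i
    · simp [B, Matrix.mulVec, dotProduct, Fin.sum_univ_succ]
    · simp [B, Matrix.mulVec]

lemma mem_radical_span_cons_pow {w : R} {Z : Fin r → R} {I : Ideal R} (hw : w ∈ I.radical)
    (hZ : ∀ i, Z i ∈ I.radical) : Ideal.span (Set.range (Fin.cons w Z : Fin (r + 1) → R)) ≤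
      I.radical := by
  rw [Ideal.span_le]; rintro _ ⟨i, rfl⟩
  refine Fin.cases ?_ (fun i => ?_) i
  · simpa using hw
  · simpa using hZ i

lemma mem_radical_of_pow_mem' {I : Ideal R} {a : R} {n : ℕ} (h : a ^ n ∈ I) : a ∈ I.radical :=
  ⟨n, h⟩

/-- Changing the exponents of `(w^k, Z^m)` does not change limit closures, up to the evident
multiplication. -/
lemma mem_limitClosure_cons_iff (w : R) (Z : Fin r → R) {k k' m m' : ℕ} (hk : 0 < k) (hm : 0 < m)
    {a : R} :
    w ^ k' * ((∏ i, Z i) ^ m' * a) ∈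
      limitClosure (M := R) (Fin.cons (w ^ (k + k')) fun i => Z i ^ (m + m') : Fin (r + 1) → R) ↔
    a ∈ limitClosure (M := R) (Fin.cons (w ^ k) fun i => Z i ^ m : Fin (r + 1) → R) := by
  have key := prod_mul_mem_limitClosure_iff
    (x := (Fin.cons (w ^ k) fun i => Z i ^ m : Fin (r + 1) → R))
    (y := (Fin.cons (w ^ (k + k')) fun i => Z i ^ (m + m') : Fin (r + 1) → R))
    (d := (Fin.cons (w ^ k') fun i => Z i ^ m' : Fin (r + 1) → R)) (r := a) ?_ ?_
  · rw [← key, Fin.prod_univ_succ]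
    simp [Finset.prod_pow, mul_assoc]
  · intro i; refine Fin.cases ?_ (fun i => ?_) i <;> simp [pow_add, mul_comm]
  · intro i
    refine mem_radical_span_cons_pow ?_ ?_ (Ideal.subset_span (Set.mem_range_self i))
    · refine Ideal.pow_mem_of_mem _ (mem_radical_of_pow_mem' (n := k + k') ?_) _ hk
      exact Ideal.subset_span ⟨0, by simp⟩
    · refine fun i => Ideal.pow_mem_of_mem _ (mem_radical_of_pow_mem' (n := m + m') ?_) _ hm
      exact Ideal.subset_span ⟨i.succ, by simp⟩

lemma mul_prod_pow_mem_powSpan {Z : Fin r → R} {n k : ℕ} {a : R} (h : a ∈ powSpan Z n) :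
    a * (∏ i, Z i) ^ k ∈ powSpan Z (n + k) := by
  rw [mul_comm]; exact prod_pow_mul_mem_powSpan h

/-- Elements of `detKer` are represented, after raising exponents, by elements `a'` that a power of
`v` multiplies into `(Z^n')`. -/
lemma exists_representative_of_mem_detKer {p : Ideal R} {w v : R} {Z : Fin r → R} {n : ℕ}
    (hn : 0 < n) (hZ : ∀ i, Z i ∈ p) (hv : v ∈ p)
    (hvw : v ∈ (Ideal.span (Set.range (Fin.cons w Z : Fin (r + 1) → R))).radical)
    {a β : R} (ha : a ∈ detKer p fun i => (Fin.cons w Z : Fin (r + 1) → R) i ^ n)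
    (hβ : β * a ∉ limitClosure (M := R) fun i => (Fin.cons w Z : Fin (r + 1) → R) i ^ n) :
    ∃ n' a' s, 0 < n' ∧ v ^ s * a' ∈ powSpan Z n' ∧
      β * a' ∉ limitClosure (M := R) (Fin.cons (w ^ n) fun i => Z i ^ n' : Fin (r + 1) → R) := by
  rw [cons_pow] at ha hβ
  obtain ⟨N, hN0, c, hc⟩ : ∃ N, 0 < N ∧ ∃ c, v ^ N - w ^ n * c ∈ powSpan Z n := by
    have : v ∈ (powSpan (Fin.cons w Z : Fin (r + 1) → R) n).radical := by
      rw [← Ideal.radical_idem]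
      refine Ideal.radical_mono (Ideal.span_le.2 ?_) hvw
      rintro _ ⟨i, rfl⟩
      exact radical_powSpan _ n i
    obtain ⟨N, hN⟩ := this
    have hN' := Ideal.mul_mem_left _ v hN
    rw [← pow_succ', powSpan_cons] at hN'
    exact ⟨N + 1, N.succ_pos, mem_span_singleton_sup hN'⟩
  obtain ⟨e, he⟩ := Ideal.mem_span_range_iff_exists_fun.1 hc
  obtain ⟨B, hB, hBx⟩ := exists_matrix_cons (w ^ n) c e fun i => Z i ^ n
  rw [he, mul_comm c, add_sub_cancel] at hBx
  have h1 := ha _ B (fun i => ?_) hBx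
  swap
  · refine Fin.cases ?_ (fun i => ?_) i
    · simpa using Ideal.pow_mem_of_mem _ hv _ hN0
    · simpa using Ideal.pow_mem_of_mem _ (hZ i) _ hn
  obtain ⟨j, hj⟩ := mem_limitClosure.1 h1
  rw [powSpan_cons, powSpan_pow, hB, Fin.prod_univ_succ] at hj
  simp only [Fin.cons_zero, Fin.cons_succ, Finset.prod_pow] at hj
  obtain ⟨b, hb⟩ := mem_span_singleton_sup hj
  set P := ∏ i, Z i with hP
  have h2 : v ^ (N * j) * (c * (P ^ (n * j) * a) - v ^ N * b) ∈ powSpan Z (n * (j + 1)) := by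
    convert hb using 1; ring
  refine ⟨n * (j + 1), P ^ (n * j) * a - w ^ n * b, N * (j + 1), by positivity, ?_, ?_⟩
  · have h3 : v ^ (N * j) * a * ((v ^ N - w ^ n * c) * P ^ (n * j)) ∈ powSpan Z (n * (j + 1)) := by
      have := mul_prod_pow_mem_powSpan (k := n * j) hc
      rw [show n + n * j = n * (j + 1) by ring] at this
      exact Ideal.mul_mem_left _ _ this
    have h4 := add_mem h3 (Ideal.mul_mem_left _ (w ^ n) h2)
    convert h4 using 1; ring
  · intro h
    apply hβ
    rw [← mem_limitClosure_cons_iff w Z (k' := 0) (m' := n * j) hn hn]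
    have h5 : w ^ n * (β * b) ∈ limitClosure (M := R)
        (Fin.cons (w ^ n) fun i => Z i ^ (n * (j + 1)) : Fin (r + 1) → R) :=
      Ideal.mul_mem_right _ _ (span_le_limitClosure _ (Ideal.subset_span ⟨0, by simp⟩))
    have h6 := add_mem h h5
    rw [show n + n * j = n * (j + 1) by ring, add_zero]
    convert h6 using 1
    rw [← hP]; ring

lemma map_powSpan {S : Type*} [CommRing S] (f : R →+* S) (Z : Fin r → R) (n : ℕ) :
    (powSpan Z n).map f = powSpan (fun i => f (Z i)) n := by
  rw [powSpan, Ideal.map_span, ← Set.range_comp]; simp [powSpan, Function.comp_def]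

/-- Lifting of representatives along a surjection, at the cost of a power of `w`. -/
lemma exists_lift_representative {S : Type*} [CommRing S] {f : R →+* S}
    (hf : Function.Surjective f) {w v u : R} {c : ℕ} {Z : Fin r → R}
    (hu : u * v ^ c ∈ Ideal.span (Set.range Z))
    (hw : w ∈ (Ideal.span {u} ⊔ Ideal.span {v} ⊔ Ideal.span (Set.range Z)).radical)
    {s n : ℕ} {a' : S} (ha : f v ^ s * a' ∈ powSpan (fun i => f (Z i)) n) :
    ∃ a j s', v ^ s' * a ∈ powSpan Z n ∧ f a = f w ^ j * a' := by
  have hrad : Ideal.span (Set.range Z) ≤ (powSpan Z n).radical :=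
    Ideal.span_le.2 (by rintro _ ⟨i, rfl⟩; exact radical_powSpan _ n i)
  obtain ⟨M, hM⟩ := hrad hu
  obtain ⟨j, hj⟩ : w ∈ (Ideal.span {v ^ s} ⊔ (Ideal.span {u ^ M} ⊔ powSpan Z n)).radical := by
    rw [← Ideal.radical_idem]
    refine Ideal.radical_mono (sup_le (sup_le ?_ ?_) ?_) hw
    · rw [Ideal.span_singleton_le_iff_mem]
      exact ⟨M, Ideal.mem_sup_right (Ideal.mem_sup_left (Ideal.mem_span_singleton_self _))⟩
    · rw [Ideal.span_singleton_le_iff_mem]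
      exact ⟨s, Ideal.mem_sup_left (Ideal.mem_span_singleton_self _)⟩
    · exact hrad.trans (Ideal.radical_mono (le_sup_right.trans le_sup_right))
  obtain ⟨b, hb⟩ := mem_span_singleton_sup hj
  obtain ⟨b', hb'⟩ := mem_span_singleton_sup hb
  have h1 : v ^ (c * M) * (w ^ j - v ^ s * b) ∈ powSpan Z n := by
    have := add_mem (Ideal.mul_mem_left _ (v ^ (c * M)) hb') (Ideal.mul_mem_right b' _ hM)
    convert this using 1; ring
  obtain ⟨a, rfl⟩ := hf a'
  rw [← map_powSpan, ← map_pow, ← map_mul, Ideal.mem_map_iff_of_surjective f hf] at ha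
  obtain ⟨ζ, hζ, hζ'⟩ := ha
  refine ⟨w ^ j * a - b * (v ^ s * a - ζ), j, s + c * M, ?_, ?_⟩
  · have := add_mem (Ideal.mul_mem_right (v ^ s * a - ζ) _ h1)
      (Ideal.mul_mem_left _ (v ^ (c * M) * w ^ j) hζ)
    convert this using 1; ring
  · simp only [map_sub, map_mul, map_pow] at hζ' ⊢
    rw [hζ']; ring

lemma map_mem_limitClosure {S : Type*} [CommRing S] (f : R →+* S) {x : Fin r → R} {a : R}
    (h : a ∈ limitClosure (M := R) x) : f a ∈ limitClosure (M := S) fun i => f (x i) := by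
  obtain ⟨j, hj⟩ := mem_limitClosure.1 h
  refine mem_limitClosure.2 ⟨j, ?_⟩
  rw [← map_powSpan, ← map_prod, ← map_pow, ← map_mul]
  exact Ideal.mem_map_of_mem f hj

/-- Nonvanishing classes in `detKer` over a quotient lift to nonvanishing classes that a power of
`v` annihilates. -/
lemma exists_lift_detKer {S : Type*} [CommRing S] {f : R →+* S}
    (hf : Function.Surjective f) {p : Ideal S} {w v u : R} {c : ℕ} {Z : Fin r → R}
    (hZ : ∀ i, f (Z i) ∈ p) (hv : f v ∈ p)
    (hvw : v ∈ (Ideal.span (Set.range (Fin.cons w Z : Fin (r + 1) → R))).radical)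
    (hu : u * v ^ c ∈ Ideal.span (Set.range Z))
    (hw : w ∈ (Ideal.span {u} ⊔ Ideal.span {v} ⊔ Ideal.span (Set.range Z)).radical)
    {x : Fin (r + 1) → S}
    (hx : ∀ i, x i ∈ ((Ideal.span (Set.range (Fin.cons w Z : Fin (r + 1) → R))).map f).radical)
    (hx' : ∀ i, f ((Fin.cons w Z : Fin (r + 1) → R) i) ∈ (Ideal.span (Set.range x)).radical)
    {a : S} {β : R} (ha : a ∈ detKer p x) (hβ : f β * a ∉ limitClosure (M := S) x) :
    ∃ N b s, 0 < N ∧ v ^ s * b ∈ powSpan Z N ∧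
      β * b ∉ limitClosure (M := R) fun i => (Fin.cons w Z : Fin (r + 1) → R) i ^ N := by
  have hcons : (fun i => f ((Fin.cons w Z : Fin (r + 1) → R) i)) =
      Fin.cons (f w) fun i => f (Z i) := by
    funext i; refine Fin.cases ?_ (fun i => ?_) i <;> simp
  obtain ⟨n, hn⟩ := exists_uniform_pow hx'
  obtain ⟨C, hC⟩ := exists_mulVec_eq hn
  have h1 := detKer_mulVec hC ha
  have h2 : f β * (C.det * a) ∉ limitClosure (M := S)
      fun i => f ((Fin.cons w Z : Fin (r + 1) → R) i) ^ (n + 1) := by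
    rw [mul_left_comm]
    refine fun h => hβ (mem_of_det_mul_mem_limitClosure hC (fun i => ?_) h)
    refine (Ideal.radical_le_radical_iff.2 ?_) (hx i)
    rw [Ideal.map_span, Ideal.span_le]
    rintro _ ⟨_, ⟨i, rfl⟩, rfl⟩
    exact radical_powSpan (fun i => f ((Fin.cons w Z : Fin (r + 1) → R) i)) (n + 1) i
  simp only [congrFun hcons] at h1 h2
  have hvw' : f v ∈ (Ideal.span (Set.range
      (Fin.cons (f w) fun i => f (Z i) : Fin (r + 1) → S))).radical := by
    rw [← hcons]
    have := Ideal.mem_map_of_mem f hvw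
    have := Ideal.map_radical_le f this
    rwa [Ideal.map_span, ← Set.range_comp] at this
  obtain ⟨n', a', s, hn', hs, ha'⟩ :=
    exists_representative_of_mem_detKer n.succ_pos hZ hv hvw' h1 h2
  obtain ⟨b, j, s', hb, hfb⟩ := exists_lift_representative hf hu hw hs
  refine ⟨n + 1 + j + n', w ^ n' * ((∏ i, Z i) ^ (n + 1 + j) * b), s', by positivity, ?_, ?_⟩
  · have := Ideal.mul_mem_left _ (w ^ n') (mul_prod_pow_mem_powSpan (k := n + 1 + j) hb)
    rw [show n' + (n + 1 + j) = n + 1 + j + n' by ring] at this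
    convert this using 1; ring
  · intro h
    apply ha'
    rw [← mem_limitClosure_cons_iff _ _ (k' := j + n') (m' := n + 1 + j) n.succ_pos hn']
    have := map_mem_limitClosure f h
    simp only [map_pow, map_mul, map_prod, hfb, congrFun hcons] at this
    rw [cons_pow] at this
    rw [show n' + (n + 1 + j) = n + 1 + j + n' by ring,
      show n + 1 + (j + n') = n + 1 + j + n' by ring]
    convert this using 1; ring

/-- In one parameter, an element with nonvanishing multiples by all powers of `w` is not in the
limit closure of a high power of `w`. -/
lemma exists_notMem_limitClosure_pow [IsNoetherianRing R] [IsLocalRing R] {w : R}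
    (hw : w ∈ maximalIdeal R) {a : R} (ha : ∀ N, w ^ N * a ≠ 0) :
    ∃ n, 0 < n ∧ a ∉ limitClosure (M := R) (fun _ : Fin 1 => w ^ n) := by
  by_contra! hcon
  -- the ideal of elements killed by a power of `w`
  obtain ⟨k, hk⟩ : ∃ k, ∀ b : R, (∃ N, w ^ N * b = 0) → w ^ k * b = 0 := by
    let g : ℕ →o Submodule R R :=
      ⟨fun n => LinearMap.ker (LinearMap.lsmul R R (w ^ n)), monotone_nat_of_le_succ fun n b hb => by
        simp only [LinearMap.mem_ker, LinearMap.lsmul_apply, smul_eq_mul] at hb ⊢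
        rw [pow_succ', mul_assoc, hb, mul_zero]⟩
    obtain ⟨k, hk⟩ := monotone_stabilizes_iff_noetherian.2 ‹IsNoetherianRing R› g
    refine ⟨k, ?_⟩
    rintro b ⟨N, hN⟩
    have h1 : b ∈ g (max k N) := g.monotone (le_max_right k N) (by simpa [g] using hN)
    rw [← hk _ (le_max_left _ _)] at h1
    simpa [g] using h1
  have h0 : w ^ k * a = 0 := by
    have hI : w ^ k * a ∈ (⨅ i : ℕ, maximalIdeal R ^ i : Ideal R) := by
      rw [Ideal.mem_iInf]
      intro i
      obtain ⟨j, hj⟩ := mem_limitClosure.1 (hcon (i + 1) i.succ_pos)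
      simp only [Finset.univ_unique, Finset.prod_const, Finset.card_singleton, pow_one, powSpan,
        Set.range_const, ← pow_mul] at hj
      obtain ⟨b, hb⟩ := Ideal.mem_span_singleton.1 hj
      have h3 : w ^ k * (a - w ^ (i + 1) * b) = 0 := by
        refine hk _ ⟨(i + 1) * j, ?_⟩
        rw [mul_sub, hb]; ring
      have h4 : w ^ k * a = w ^ k * w * b * w ^ i := by
        rw [mul_sub, sub_eq_zero] at h3; rw [h3]; ring
      rw [h4]
      exact Ideal.mul_mem_left _ _ (Ideal.pow_mem_pow hw i)
    rw [Ideal.iInf_pow_eq_bot_of_isLocalRing _ (IsLocalRing.maximalIdeal.isMaximal R).ne_top] at hI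
    simpa using hI
  exact ha k h0

end Lifting

/-! ### Artinian modules and Melkersson's criterion -/

section Artinian
universe u
variable {R : Type u} [CommRing R]

lemma isArtinian_of_ker_le {W N P : Type*} [AddCommGroup W] [AddCommGroup N] [AddCommGroup P]
    [Module R W] [Module R N] [Module R P] [IsArtinian R N] (ψ : W →ₗ[R] N) (φ : W →ₗ[R] P)
    (h : LinearMap.ker ψ ≤ LinearMap.ker φ) (hφ : Function.Surjective φ) : IsArtinian R P := by
  have : IsArtinian R (W ⧸ LinearMap.ker ψ) :=
    isArtinian_of_injective (Submodule.liftQ _ ψ le_rfl)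
      (LinearMap.ker_eq_bot.1 (Submodule.ker_liftQ_eq_bot _ _ _ le_rfl))
  refine isArtinian_of_surjective (W ⧸ LinearMap.ker ψ) (Submodule.liftQ _ φ h) ?_
  intro p
  obtain ⟨a, rfl⟩ := hφ p
  exact ⟨Submodule.Quotient.mk a, by simp⟩

/-- Melkersson's criterion: a module that is `x`-power torsion and has Artinian `x`-torsion
`0 :_M x` is Artinian. -/
lemma isArtinian_of_torsion {M : Type*} [AddCommGroup M] [Module R M] (x : R)
    (hx : ∀ a : M, ∃ k, x ^ k • a = 0)
    (h : IsArtinian R (LinearMap.ker (LinearMap.lsmul R M x))) : IsArtinian R M := by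
  rw [← monotone_stabilizes_iff_artinian] at h ⊢
  intro f
  let g : ℕ → Submodule R M := fun i => OrderDual.ofDual (f i)
  have hg : Antitone g := fun i j hij => f.monotone hij
  let K : ℕ → ℕ → Submodule R (LinearMap.ker (LinearMap.lsmul R M x)) := fun i n =>
    ((g i).map (LinearMap.lsmul R M (x ^ n))).comap (Submodule.subtype _)
  have hK : ∀ {i j n m}, i ≤ j → n ≤ m → K j m ≤ K i n := by
    rintro i j n m hij hnm ⟨a, ha⟩ ⟨b, hb, hba⟩
    refine ⟨x ^ (m - n) • b, Submodule.smul_mem _ _ (hg hij hb), ?_⟩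
    simp only [LinearMap.lsmul_apply, Submodule.subtype_apply, smul_smul] at hba ⊢
    rw [← hba, ← pow_add, Nat.add_sub_cancel' hnm]
  have stab : ∀ k : ℕ → Submodule R (LinearMap.ker (LinearMap.lsmul R M x)), Antitone k →
      ∃ n, ∀ m, n ≤ m → k n = k m := fun k hk => h ⟨fun i => OrderDual.toDual (k i), hk⟩
  obtain ⟨i0, hi0⟩ := stab (fun i => K i i) fun i j hij => hK hij hij
  choose c hc using fun n => stab (fun i => K i n) fun i j hij => hK hij le_rfl
  let I := i0 + ∑ n ∈ Finset.range i0, c n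
  have hI : ∀ n i, I ≤ i → K I n ≤ K i n := by
    intro n i hi
    by_cases hn : n < i0
    · have hcn : c n ≤ I := le_add_left (Finset.single_le_sum (f := c) (fun _ _ => Nat.zero_le _)
        (Finset.mem_range.2 hn))
      exact ((hc n I hcn).symm.trans (hc n i (hcn.trans hi))).le
    · push Not at hn
      have h1 : K I n ≤ K i0 i0 := hK (Nat.le_add_right _ _) hn
      refine h1.trans ((hi0 (max i n) (hn.trans (le_max_right _ _))).le.trans ?_)
      exact hK (le_max_left _ _) (le_max_right _ _)
  refine ⟨I, fun i hi => ?_⟩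
  refine le_antisymm (α := (Submodule R M)ᵒᵈ) (f.monotone hi) ?_
  have key : ∀ k, ∀ a ∈ g I, x ^ k • a = 0 → a ∈ g i := by
    intro k
    induction k with
    | zero => intro a _ h0; rw [pow_zero, one_smul] at h0; simp [h0]
    | succ k ih =>
      intro a ha h0
      have h1 : (⟨x ^ k • a, by
          simpa [smul_smul, pow_succ', mul_comm] using h0⟩ :
            LinearMap.ker (LinearMap.lsmul R M x)) ∈ K I k := ⟨a, ha, rfl⟩
      obtain ⟨b, hb, hba⟩ := hI k i hi h1
      simp only [LinearMap.lsmul_apply, Submodule.subtype_apply] at hba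
      have h2 := ih (a - b) (sub_mem ha (hg hi hb)) (by rw [smul_sub, hba, sub_self])
      simpa using add_mem h2 hb
  intro a ha
  obtain ⟨k, hk⟩ := hx a
  exact key k a ha hk

/-! ### Localization at an element -/

/-- The localization `M_x`. -/
abbrev Loc (x : R) (M : Type u) [AddCommGroup M] [Module R M] : Type u :=
  LocalizedModule (Submonoid.powers x) M

variable {M N P : Type u} [AddCommGroup M] [Module R M] [AddCommGroup N] [Module R N]
  [AddCommGroup P] [Module R P]

/-- The canonical map `M → M_x`. -/
noncomputable abbrev toLoc (x : R) (M : Type u) [AddCommGroup M] [Module R M] : M →ₗ[R] Loc x M :=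
  LocalizedModule.mkLinearMap (Submonoid.powers x) M

/-- The map `M_x → N_x` induced by `M → N`. -/
noncomputable def locMap (x : R) (f : M →ₗ[R] N) : Loc x M →ₗ[R] Loc x N :=
  IsLocalizedModule.map (Submonoid.powers x) (toLoc x M) (toLoc x N) f

lemma locMap_toLoc (x : R) (f : M →ₗ[R] N) (a : M) :
    locMap x f (toLoc x M a) = toLoc x N (f a) :=
  IsLocalizedModule.map_apply _ _ _ _ _

lemma toLoc_surj (x : R) (b : Loc x M) : ∃ (k : ℕ) (a : M), x ^ k • b = toLoc x M a := by
  obtain ⟨⟨a, ⟨_, k, rfl⟩⟩, h⟩ := IsLocalizedModule.surj (Submonoid.powers x) (toLoc x M) b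
  exact ⟨k, a, h⟩

lemma toLoc_eq_zero_iff (x : R) (a : M) : toLoc x M a = 0 ↔ ∃ k : ℕ, x ^ k • a = 0 := by
  rw [IsLocalizedModule.eq_zero_iff (Submonoid.powers x)]
  constructor
  · rintro ⟨⟨_, k, rfl⟩, h⟩; exact ⟨k, h⟩
  · rintro ⟨k, h⟩; exact ⟨⟨_, k, rfl⟩, h⟩

lemma loc_smul_inj (x : R) {k : ℕ} {b c : Loc x M} (h : x ^ k • b = x ^ k • c) : b = c :=
  IsLocalizedModule.smul_injective (toLoc x M) (⟨x ^ k, k, rfl⟩ : Submonoid.powers x) h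

lemma loc_smul_surj (x : R) (k : ℕ) (b : Loc x M) : ∃ c : Loc x M, x ^ k • c = b := by
  have := IsLocalizedModule.map_units (toLoc x M) (⟨x ^ k, k, rfl⟩ : Submonoid.powers x)
  obtain ⟨c, hc⟩ := ((Module.End.isUnit_iff _).1 this).2 b
  exact ⟨c, hc⟩

lemma locMap_injective (x : R) {f : M →ₗ[R] N} (hf : Function.Injective f) :
    Function.Injective (locMap x f) := IsLocalizedModule.map_injective _ _ _ _ hf

lemma locMap_surjective (x : R) {f : M →ₗ[R] N} (hf : Function.Surjective f) :
    Function.Surjective (locMap x f) := IsLocalizedModule.map_surjective _ _ _ _ hf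

lemma locMap_exact (x : R) {f : M →ₗ[R] N} {g : N →ₗ[R] P} (h : Function.Exact f g) :
    Function.Exact (locMap x f) (locMap x g) := IsLocalizedModule.map_exact _ _ _ _ _ _ h

lemma locMap_eq_of_comp (x : R) {Q : Type u} [AddCommGroup Q] [Module R Q]
    {f : M →ₗ[R] N} {g : N →ₗ[R] P} {f' : M →ₗ[R] Q} {g' : Q →ₗ[R] P}
    (h : ∀ a, g (f a) = g' (f' a)) (b : Loc x M) :
    locMap x g (locMap x f b) = locMap x g' (locMap x f' b) := by
  obtain ⟨k, a, ha⟩ := toLoc_surj x b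
  refine loc_smul_inj x (k := k) ?_
  simp only [← map_smul, ha, locMap_toLoc, h]

lemma locMap_comp_eq_zero (x : R) {f : M →ₗ[R] N} {g : N →ₗ[R] P} (h : ∀ a, g (f a) = 0)
    (b : Loc x M) : locMap x g (locMap x f b) = 0 := by
  obtain ⟨k, a, ha⟩ := toLoc_surj x b
  refine loc_smul_inj x (k := k) ?_
  simp only [← map_smul, ha, locMap_toLoc, h, map_zero, smul_zero]

lemma locMap_smul (x y : R) (f : M →ₗ[R] M) (hf : ∀ a, f a = y • a) (b : Loc x M) :
    locMap x f b = y • b := by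
  obtain ⟨k, a, ha⟩ := toLoc_surj x b
  refine loc_smul_inj x (k := k) ?_
  rw [← map_smul, ha, locMap_toLoc, hf, map_smul, ← ha, smul_comm]

/-! ### Čech cohomology through differential modules -/

variable (R) in
/-- A differential module: a module with an endomorphism `d` such that `d² = 0`. -/
structure DiffModule where
  /-- the underlying type -/
  carrier : Type u
  [ac : AddCommGroup carrier]
  [mod : Module R carrier]
  /-- the differential -/
  d : carrier →ₗ[R] carrier
  dd : ∀ a, d (d a) = 0

attribute [instance] DiffModule.ac DiffModule.mod

namespace DiffModule

/-- The cohomology `ker d / im d`. -/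
abbrev H (X : DiffModule R) : Type u :=
  LinearMap.ker X.d ⧸ (LinearMap.range X.d).submoduleOf (LinearMap.ker X.d)

/-- The class of a cocycle. -/
abbrev cls (X : DiffModule R) : LinearMap.ker X.d →ₗ[R] X.H := Submodule.mkQ _

lemma cls_eq_zero_iff (X : DiffModule R) (a : LinearMap.ker X.d) :
    X.cls a = 0 ↔ ∃ b, X.d b = a := by
  rw [Submodule.mkQ_apply, Submodule.Quotient.mk_eq_zero]
  exact Iff.rfl

/-- The cone of `X → X_x`; iterating it computes the Čech complex. -/
noncomputable def step (x : R) (X : DiffModule R) : DiffModule R where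
  carrier := X.carrier × Loc x X.carrier
  d := LinearMap.prod (X.d ∘ₗ LinearMap.fst _ _ _)
    (toLoc x _ ∘ₗ LinearMap.fst _ _ _ - locMap x X.d ∘ₗ LinearMap.snd _ _ _)
  dd := by
    rintro ⟨a, b⟩
    have h1 := locMap_toLoc x X.d a
    have h2 := locMap_comp_eq_zero x X.dd b
    simp only [LinearMap.prod_apply, Function.prod_apply, LinearMap.comp_apply, LinearMap.sub_apply,
      LinearMap.fst_apply, LinearMap.snd_apply, map_sub, X.dd, h1, h2, sub_zero, sub_self]
    rfl

lemma step_d (x : R) (X : DiffModule R) (a : X.carrier) (b : Loc x X.carrier) :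
    (step x X).d (a, b) = (X.d a, toLoc x _ a - locMap x X.d b) := rfl

/-- The Čech differential module of a list of elements. -/
noncomputable def cech (l : List R) (X : DiffModule R) : DiffModule R := l.foldr step X

lemma cech_cons (x : R) (l : List R) (X : DiffModule R) : cech (x :: l) X = step x (cech l X) := rfl

lemma cech_append (x : R) (l : List R) (X : DiffModule R) :
    cech (l ++ [x]) X = cech l (step x X) := by simp [cech]

/-- Short exact sequences of differential modules. -/
structure SES {X Y Z : DiffModule R} (f : X.carrier →ₗ[R] Y.carrier)
    (g : Y.carrier →ₗ[R] Z.carrier) : Prop where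
  hf : ∀ a, f (X.d a) = Y.d (f a)
  hg : ∀ a, g (Y.d a) = Z.d (g a)
  inj : Function.Injective f
  surj : Function.Surjective g
  exact : Function.Exact f g

/-- The map induced on cones. -/
noncomputable def stepMap (x : R) {X Y : DiffModule R} (f : X.carrier →ₗ[R] Y.carrier) :
    (step x X).carrier →ₗ[R] (step x Y).carrier := LinearMap.prodMap f (locMap x f)

lemma stepMap_apply (x : R) {X Y : DiffModule R} (f : X.carrier →ₗ[R] Y.carrier)
    (a : X.carrier) (b : Loc x X.carrier) :
    stepMap x f (a, b) = ((f a, locMap x f b) : Y.carrier × Loc x Y.carrier) := rfl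

lemma stepMap_d (x : R) {X Y : DiffModule R} {f : X.carrier →ₗ[R] Y.carrier}
    (hf : ∀ a, f (X.d a) = Y.d (f a)) (a) : stepMap x f ((step x X).d a) =
      (step x Y).d (stepMap x f a) := by
  obtain ⟨a, b⟩ := a
  rw [step_d, stepMap_apply, stepMap_apply, step_d, hf, map_sub, locMap_toLoc,
    locMap_eq_of_comp x hf]

lemma SES.step (x : R) {X Y Z : DiffModule R} {f : X.carrier →ₗ[R] Y.carrier}
    {g : Y.carrier →ₗ[R] Z.carrier} (h : SES f g) : SES (stepMap x f) (stepMap x g) where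
  hf := stepMap_d x h.hf
  hg := stepMap_d x h.hg
  inj := by
    rintro ⟨a, b⟩ ⟨a', b'⟩ e
    obtain ⟨e1, e2⟩ := Prod.ext_iff.1 e
    exact Prod.ext (h.inj e1) (locMap_injective x h.inj e2)
  surj := by
    rintro ⟨a, b⟩
    obtain ⟨a, rfl⟩ := h.surj a
    obtain ⟨b, rfl⟩ := locMap_surjective x h.surj b
    exact ⟨(a, b), rfl⟩
  exact := by
    rintro ⟨a, b⟩
    rw [stepMap_apply]
    constructor
    · intro e
      obtain ⟨e1, e2⟩ := Prod.ext_iff.1 e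
      obtain ⟨a', rfl⟩ := (h.exact a).1 e1
      obtain ⟨b', rfl⟩ := (locMap_exact x h.exact b).1 e2
      exact ⟨(a', b'), rfl⟩
    · rintro ⟨⟨a', b₂⟩, e⟩
      obtain ⟨e1, e2⟩ := Prod.ext_iff.1 e
      exact Prod.ext ((h.exact a).2 ⟨a', e1⟩) ((locMap_exact x h.exact b).2 ⟨b₂, e2⟩)

/-- The map induced on cohomology. -/
noncomputable def Hmap {X Y : DiffModule R} (f : X.carrier →ₗ[R] Y.carrier)
    (hf : ∀ a, f (X.d a) = Y.d (f a)) : X.H →ₗ[R] Y.H :=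
  Submodule.mapQ _ _ (f.restrict (p := LinearMap.ker X.d) (q := LinearMap.ker Y.d) fun a ha => by
    rw [LinearMap.mem_ker] at ha ⊢; rw [← hf, ha, map_zero]) (by
    rintro ⟨a, ha⟩ ⟨b, hb⟩
    exact ⟨f b, by rw [← hf, hb]; rfl⟩)

/-- From the exact sequence `H(X) → H(Y) → H(Z)`. -/
lemma isArtinian_H_of_SES {X Y Z : DiffModule R} {f : X.carrier →ₗ[R] Y.carrier}
    {g : Y.carrier →ₗ[R] Z.carrier} (h : SES f g) (hX : IsArtinian R X.H) (hZ : IsArtinian R Z.H) :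
    IsArtinian R Y.H := by
  refine isArtinian_of_range_eq_ker (Hmap f h.hf) (Hmap g h.hg) (le_antisymm ?_ ?_)
  · rintro _ ⟨a, rfl⟩
    obtain ⟨⟨a, ha⟩, rfl⟩ := Submodule.mkQ_surjective _ a
    refine (cls_eq_zero_iff _ _).2 ⟨0, ?_⟩
    rw [map_zero]
    exact (h.exact.apply_apply_eq_zero a).symm
  · intro a ha
    obtain ⟨⟨a, ha'⟩, rfl⟩ := Submodule.mkQ_surjective _ a
    obtain ⟨z, hz⟩ := (cls_eq_zero_iff _ _).1 (LinearMap.mem_ker.1 ha)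
    obtain ⟨y, rfl⟩ := h.surj z
    change Z.d (g y) = g a at hz
    rw [LinearMap.mem_ker] at ha'
    obtain ⟨c, hc⟩ := (h.exact (a - Y.d y)).1 (by rw [map_sub, h.hg, hz, sub_self])
    have hc0 : X.d c = 0 := h.inj (by rw [h.hf, hc, map_sub, Y.dd, ha', map_zero, sub_zero])
    refine ⟨X.cls ⟨c, hc0⟩, ?_⟩
    change Y.cls _ = Y.cls _
    rw [← sub_eq_zero, ← map_sub, cls_eq_zero_iff]
    refine ⟨-y, ?_⟩
    change Y.d (-y) = f c - a
    rw [hc, map_neg]; abel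

lemma isArtinian_cech_of_SES (l : List R) : ∀ {X Y Z : DiffModule R}
    {f : X.carrier →ₗ[R] Y.carrier} {g : Y.carrier →ₗ[R] Z.carrier}, SES f g →
    IsArtinian R (cech l X).H → IsArtinian R (cech l Z).H → IsArtinian R (cech l Y).H := by
  induction l using List.reverseRecOn with
  | nil => exact fun h => isArtinian_H_of_SES h
  | append_singleton l x ih =>
    intro X Y Z f g h
    rw [cech_append, cech_append, cech_append]
    exact ih (h.step x)

/-- Every cohomology class is killed by a power of `y`. -/
def Tors (X : DiffModule R) (y : R) : Prop := ∀ a, X.d a = 0 → ∃ (k : ℕ) (b : _), X.d b = y ^ k • a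

lemma tors_step_self (x : R) (X : DiffModule R) : Tors (step x X) x := by
  rintro ⟨a, b⟩ h
  rw [step_d] at h
  obtain ⟨h1, h2⟩ := Prod.ext_iff.1 h
  change X.d a = 0 at h1
  change toLoc x _ a - locMap x X.d b = 0 at h2
  obtain ⟨k, c, hc⟩ := toLoc_surj x b
  obtain ⟨j, hj⟩ : ∃ j : ℕ, x ^ j • (x ^ k • a - X.d c) = 0 := by
    rw [← toLoc_eq_zero_iff, map_sub, map_smul, ← locMap_toLoc, ← hc, map_smul, ← smul_sub, h2,
      smul_zero]
  refine ⟨j + k, ((x ^ j • c, 0) : X.carrier × Loc x X.carrier), ?_⟩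
  rw [step_d]
  refine Prod.ext ?_ ?_
  · change X.d (x ^ j • c) = x ^ (j + k) • a
    rw [smul_sub, sub_eq_zero] at hj
    rw [map_smul, ← hj, smul_smul, pow_add]
  · change toLoc x _ (x ^ j • c) - locMap x X.d 0 = x ^ (j + k) • b
    rw [map_zero, sub_zero, map_smul, ← hc, smul_smul, pow_add]

lemma tors_step (x : R) {y : R} {X : DiffModule R} (hX : Tors X y) : Tors (step x X) y := by
  rintro ⟨a, b⟩ h
  rw [step_d] at h
  obtain ⟨h1, h2⟩ := Prod.ext_iff.1 h
  change X.d a = 0 at h1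
  change toLoc x _ a - locMap x X.d b = 0 at h2
  obtain ⟨k, α, hα⟩ := hX a h1
  have h3 : locMap x X.d (y ^ k • b - toLoc x _ α) = 0 := by
    rw [map_sub, map_smul, locMap_toLoc, hα, map_smul, ← smul_sub, ← neg_sub, h2, neg_zero,
      smul_zero]
  obtain ⟨j, c, hc⟩ := toLoc_surj x (y ^ k • b - toLoc x _ α)
  obtain ⟨i, hi⟩ : ∃ i : ℕ, x ^ i • X.d c = 0 := by
    rw [← toLoc_eq_zero_iff, ← locMap_toLoc, ← hc, map_smul, h3, smul_zero]
  obtain ⟨K, e, he⟩ := hX (x ^ i • c) (by rw [map_smul, hi])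
  obtain ⟨β, hβ⟩ := loc_smul_surj x (i + j) (toLoc x _ e)
  refine ⟨K + k, ((y ^ K • α, -β) : X.carrier × Loc x X.carrier), ?_⟩
  rw [step_d]
  refine Prod.ext ?_ ?_
  · change X.d (y ^ K • α) = y ^ (K + k) • a
    rw [map_smul, hα, smul_smul, pow_add]
  · change toLoc x _ (y ^ K • α) - locMap x X.d (-β) = y ^ (K + k) • b
    have h4 : locMap x X.d β = y ^ K • (y ^ k • b - toLoc x _ α) := by
      refine loc_smul_inj x (k := i + j) ?_
      rw [← map_smul, hβ, locMap_toLoc, he, map_smul, map_smul, ← hc, smul_comm, pow_add, mul_smul,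
        smul_comm (y ^ K) (x ^ j)]
    rw [map_neg, h4, map_smul, smul_sub, smul_smul, ← pow_add]
    abel

lemma tors_cech {l : List R} {y : R} (hy : y ∈ l) (X : DiffModule R) : Tors (cech l X) y := by
  induction l with
  | nil => simp at hy
  | cons x l ih =>
    rw [cech_cons]
    rcases List.mem_cons.1 hy with rfl | hy
    · exact tors_step_self _ _
    · exact tors_step _ (ih hy)

lemma tors_of_mem_radical {X : DiffModule R} {s : Set R} (hs : ∀ y ∈ s, Tors X y) {y : R}
    (hy : y ∈ (Ideal.span s).radical) : Tors X y := by
  intro a ha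
  let I : Ideal R := (LinearMap.range X.d).comap (LinearMap.toSpanSingleton R _ a)
  have hI : ∀ y, y ∈ I ↔ ∃ b, X.d b = y • a := fun y => Iff.rfl
  have h1 : Ideal.span s ≤ I.radical := Ideal.span_le.2 fun y hy => by
    obtain ⟨k, hk⟩ := hs y hy a ha
    exact ⟨k, (hI _).2 hk⟩
  obtain ⟨k, hk⟩ := Ideal.radical_le_radical_iff.2 h1 hy
  exact ⟨k, (hI _).1 hk⟩

end DiffModule
end Artinian

/-! ### Artinianness of Čech cohomology -/

section Artinian2
universe u
variable {R : Type u} [CommRing R]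
namespace DiffModule

/-- If `y` is a nonzerodivisor on `X`, the cohomology of `X` is `y`-power torsion and `X/yX` has
Artinian cohomology, then so does `X`: the connecting map sends `H(X/yX)` onto `0 :_{H(X)} y`. -/
lemma isArtinian_H_of_smul {X Z : DiffModule R} {y : R} {f : X.carrier →ₗ[R] X.carrier}
    {g : X.carrier →ₗ[R] Z.carrier} (h : SES f g) (hf : ∀ a, f a = y • a) (hT : Tors X y)
    (hZ : IsArtinian R Z.H) : IsArtinian R X.H := by
  refine isArtinian_of_torsion y ?_ ?_
  · intro a
    obtain ⟨a, rfl⟩ := Submodule.mkQ_surjective _ a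
    obtain ⟨k, b, hb⟩ := hT a a.2
    exact ⟨k, by rw [← map_smul]; exact (cls_eq_zero_iff _ _).2 ⟨b, hb⟩⟩
  · let W : Submodule R (X.carrier × X.carrier) :=
      LinearMap.ker (X.d ∘ₗ LinearMap.fst _ _ _ - f ∘ₗ LinearMap.snd _ _ _)
    have hW : ∀ w : W, X.d w.1.1 = f w.1.2 := fun w => sub_eq_zero.1 w.2
    let ψ : W →ₗ[R] Z.H := Z.cls ∘ₗ LinearMap.codRestrict (LinearMap.ker Z.d)
      (g ∘ₗ LinearMap.fst _ _ _ ∘ₗ W.subtype) fun w => by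
        rw [LinearMap.mem_ker]
        change Z.d (g w.1.1) = 0
        rw [← h.hg, hW, h.exact.apply_apply_eq_zero]
    let φ0 : W →ₗ[R] X.H := X.cls ∘ₗ LinearMap.codRestrict (LinearMap.ker X.d)
      (LinearMap.snd _ _ _ ∘ₗ W.subtype) fun w => by
        rw [LinearMap.mem_ker]
        change X.d w.1.2 = 0
        apply h.inj
        rw [h.hf, ← hW, X.dd, map_zero]
    let φ : W →ₗ[R] LinearMap.ker (LinearMap.lsmul R X.H y) :=
      LinearMap.codRestrict _ φ0 fun w => by
        rw [LinearMap.mem_ker]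
        change y • φ0 w = 0
        rw [← map_smul]
        refine (cls_eq_zero_iff _ _).2 ⟨w.1.1, ?_⟩
        rw [hW, hf]; rfl
    refine isArtinian_of_ker_le ψ φ ?_ ?_
    · intro w hw
      obtain ⟨z, hz⟩ := (cls_eq_zero_iff _ _).1 (LinearMap.mem_ker.1 hw)
      obtain ⟨c, rfl⟩ := h.surj z
      change Z.d (g c) = g w.1.1 at hz
      obtain ⟨e, he⟩ := (h.exact (w.1.1 - X.d c)).1 (by rw [map_sub, h.hg, hz, sub_self])
      refine LinearMap.mem_ker.2 (Subtype.ext ?_)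
      refine (cls_eq_zero_iff _ _).2 ⟨e, ?_⟩
      apply h.inj
      change f (X.d e) = f w.1.2
      rw [h.hf, he, map_sub, X.dd, sub_zero, hW]
    · rintro ⟨a, ha⟩
      obtain ⟨a, rfl⟩ := Submodule.mkQ_surjective _ a
      rw [LinearMap.mem_ker, LinearMap.lsmul_apply, ← map_smul] at ha
      obtain ⟨b, hb⟩ := (cls_eq_zero_iff _ _).1 ha
      refine ⟨⟨(b, a.1), ?_⟩, Subtype.ext rfl⟩
      refine sub_eq_zero.2 ?_
      change X.d b = f a
      rw [hb, hf]; rfl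

lemma isArtinian_cech_of_smul (l : List R) {y : R} (hT : ∀ X, Tors (cech l X) y) :
    ∀ {X Z : DiffModule R} {f : X.carrier →ₗ[R] X.carrier} {g : X.carrier →ₗ[R] Z.carrier},
    SES f g → (∀ a, f a = y • a) → IsArtinian R (cech l Z).H → IsArtinian R (cech l X).H := by
  -- the exact sequence is carried through the cones one at a time
  have key : ∀ (l : List R) {X Z : DiffModule R} {f : X.carrier →ₗ[R] X.carrier}
      {g : X.carrier →ₗ[R] Z.carrier}, SES f g → (∀ a, f a = y • a) →
      ∃ (f' : (cech l X).carrier →ₗ[R] (cech l X).carrier)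
        (g' : (cech l X).carrier →ₗ[R] (cech l Z).carrier), SES f' g' ∧ ∀ a, f' a = y • a := by
    intro l
    induction l with
    | nil => exact fun h hf => ⟨_, _, h, hf⟩
    | cons x l ih =>
      intro X Z f g h hf
      obtain ⟨f', g', h', hf'⟩ := ih h hf
      refine ⟨_, _, h'.step x, ?_⟩
      rintro ⟨a, b⟩
      exact Prod.ext (hf' a) (locMap_smul x y f' hf' b)
  intro X Z f g h hf hZ
  obtain ⟨f', g', h', hf'⟩ := key l h hf
  exact isArtinian_H_of_smul h' hf' (hT X) hZ

lemma isArtinian_H (X : DiffModule R) [IsArtinian R X.carrier] : IsArtinian R X.H := inferInstance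

lemma isArtinian_cech_of_torsion (l : List R) (X : DiffModule R) (hX : IsArtinian R X.carrier)
    (h : ∀ x ∈ l, ∀ a : X.carrier, ∃ k : ℕ, x ^ k • a = 0) : IsArtinian R (cech l X).H := by
  suffices IsArtinian R (cech l X).carrier from isArtinian_H _
  have key : ∀ l' : List R, (∀ x ∈ l', x ∈ l) → IsArtinian R (cech l' X).carrier ∧
      ∀ x ∈ l, ∀ a : (cech l' X).carrier, ∃ k : ℕ, x ^ k • a = 0 := by
    intro l'
    induction l' with
    | nil => exact fun _ => ⟨hX, h⟩
    | cons y l' ih =>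
      intro hl
      obtain ⟨h1, h2⟩ := ih fun x hx => hl x (List.mem_cons_of_mem _ hx)
      have h0 : ∀ b : Loc y (cech l' X).carrier, b = 0 := by
        intro b
        obtain ⟨k, a, ha⟩ := toLoc_surj y b
        refine loc_smul_inj y (k := k) ?_
        rw [ha, smul_zero, toLoc_eq_zero_iff]
        exact h2 y (hl y (List.mem_cons_self)) a
      refine ⟨?_, ?_⟩
      · have : Function.Injective (LinearMap.fst R (cech l' X).carrier
            (Loc y (cech l' X).carrier)) := by
          rintro ⟨a, b⟩ ⟨a', b'⟩ e
          exact Prod.ext e ((h0 b).trans (h0 b').symm)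
        exact isArtinian_of_injective _ this
      · rintro x hx ⟨a, b⟩
        obtain ⟨k, hk⟩ := h2 x hx a
        exact ⟨k, Prod.ext hk (h0 _)⟩
  exact (key l fun _ h => h).1

variable (R) in
/-- A module with zero differential. -/
def ofModule (M : Type u) [AddCommGroup M] [Module R M] : DiffModule R := ⟨M, 0, fun _ => rfl⟩

end DiffModule

/-- If the maximal ideal is not associated to `R/N`, it contains a nonzerodivisor on `R/N`, by prime
avoidance. -/
lemma exists_regular_mem_maximalIdeal [IsNoetherianRing R] [IsLocalRing R] {N : Ideal R}
    (h : ∀ a ∉ N, ∃ x ∈ maximalIdeal R, x * a ∉ N) :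
    ∃ x ∈ maximalIdeal R, ∀ a, x * a ∈ N → a ∈ N := by
  by_contra! hcon
  have h1 : (maximalIdeal R : Set R) ⊆
      ⋃ p ∈ (associatedPrimes.finite R (R ⧸ N)).toFinset, (p : Set R) := by
    intro x hx
    obtain ⟨a, ha, ha'⟩ := hcon x hx
    have : x ∈ {r : R | ∃ x : R ⧸ N, x ≠ 0 ∧ r • x = 0} :=
      ⟨Ideal.Quotient.mk N a, fun h => ha' (Ideal.Quotient.eq_zero_iff_mem.1 h), by
        rw [← Ideal.Quotient.mk_eq_mk, ← Submodule.Quotient.mk_smul]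
        exact Ideal.Quotient.eq_zero_iff_mem.2 ha⟩
    rw [← biUnion_associatedPrimes_eq_zero_divisors] at this
    simpa using this
  obtain ⟨p, hp, hmp⟩ := (Ideal.subset_union_prime (f := id) ⊤ ⊤ (fun p hp _ _ =>
    ((Set.Finite.mem_toFinset _).1 hp).isPrime)).1 h1
  obtain ⟨hp1, a, ha⟩ := isAssociatedPrime_iff.1 ((Set.Finite.mem_toFinset _).1 hp)
  obtain ⟨a, rfl⟩ := Ideal.Quotient.mk_surjective a
  have hmem : ∀ x, x ∈ p ↔ x * a ∈ N := by
    intro x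
    rw [ha, Submodule.mem_colon_singleton, Submodule.mem_bot, ← Ideal.Quotient.eq_zero_iff_mem,
      map_mul]
    rfl
  by_cases haN : a ∈ N
  · exact hp1.ne_top ((Ideal.eq_top_iff_one p).2 ((hmem 1).2 (by rwa [one_mul])))
  · obtain ⟨x, hx, hxa⟩ := h a haN
    exact hxa ((hmem x).1 (hmp hx))

namespace DiffModule

/-- The Čech cohomology of a cyclic module with respect to elements generating an
`m`-primary ideal is Artinian. -/
lemma isArtinian_cech_quotient [IsNoetherianRing R] [IsLocalRing R] (l : List R)
    (hl : ∀ y ∈ l, y ∈ maximalIdeal R)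
    (hm : maximalIdeal R ≤ (Ideal.span {y | y ∈ l}).radical) (N : Ideal R) :
    IsArtinian R (cech l (ofModule R (R ⧸ N))).H := by
  induction N using IsNoetherian.induction with
  | hgt N ih =>
  by_cases hN : N = ⊤
  · refine isArtinian_cech_of_torsion l _ ?_ ?_
    · subst hN
      have : Subsingleton (R ⧸ (⊤ : Ideal R)) := Ideal.Quotient.subsingleton_iff.2 rfl
      change IsArtinian R (R ⧸ (⊤ : Ideal R))
      infer_instance
    · subst hN
      have : Subsingleton (R ⧸ (⊤ : Ideal R)) := Ideal.Quotient.subsingleton_iff.2 rfl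
      intro x _ a
      exact ⟨0, Subsingleton.elim (α := R ⧸ (⊤ : Ideal R)) _ _⟩
  by_cases h : ∃ a, a ∉ N ∧ ∀ x ∈ maximalIdeal R, x * a ∈ N
  · obtain ⟨a, haN, ha⟩ := h
    let f : (R ⧸ maximalIdeal R) →ₗ[R] R ⧸ N :=
      Submodule.mapQ _ _ (LinearMap.toSpanSingleton R R a) fun x hx => by
        simpa using ha x hx
    let g : (R ⧸ N) →ₗ[R] R ⧸ (N ⊔ Ideal.span {a}) :=
      Submodule.factor le_sup_left
    have hS : SES (X := ofModule R (R ⧸ maximalIdeal R)) (Y := ofModule R (R ⧸ N))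
        (Z := ofModule R (R ⧸ (N ⊔ Ideal.span {a}))) f g := by
      refine ⟨fun _ => map_zero f, fun _ => map_zero g, ?_, ?_, ?_⟩
      · refine (injective_iff_map_eq_zero f).2 fun c hc => ?_
        obtain ⟨c, rfl⟩ := Submodule.mkQ_surjective _ c
        by_contra hc0
        have hcu : IsUnit c := by
          by_contra hcu
          exact hc0 ((Submodule.Quotient.mk_eq_zero _).2 hcu)
        have : c * a ∈ N := (Submodule.Quotient.mk_eq_zero _).1 hc
        obtain ⟨d, hd⟩ := hcu.exists_left_inv
        apply haN
        have := Ideal.mul_mem_left N d this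
        rwa [← mul_assoc, hd, one_mul] at this
      · exact Submodule.factor_surjective le_sup_left
      · intro c
        obtain ⟨c, rfl⟩ := Submodule.mkQ_surjective _ c
        constructor
        · intro hc
          have hc : c ∈ N ⊔ Ideal.span {a} := (Submodule.Quotient.mk_eq_zero _).1 hc
          obtain ⟨n, hn, b, hb, rfl⟩ := Submodule.mem_sup.1 hc
          obtain ⟨d, rfl⟩ := Ideal.mem_span_singleton'.1 hb
          refine ⟨Submodule.mkQ _ d, ?_⟩
          refine ((Submodule.Quotient.eq N).2 ?_)
          simpa using hn
        · rintro ⟨d, hd⟩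
          obtain ⟨d, rfl⟩ := Submodule.mkQ_surjective _ d
          rw [← hd]
          refine (Submodule.Quotient.mk_eq_zero _).2 ?_
          exact Ideal.mem_sup_right (Ideal.mul_mem_left _ _ (Ideal.mem_span_singleton_self a))
    refine isArtinian_cech_of_SES l hS ?_ (ih _ ?_)
    · refine isArtinian_cech_of_torsion l _ ?_ ?_
      · have : IsSimpleModule R (R ⧸ maximalIdeal R) :=
          isSimpleModule_iff_isCoatom.2 (maximalIdeal.isMaximal R).out
        change IsArtinian R (R ⧸ maximalIdeal R)
        infer_instance
      · intro x hx c
        obtain ⟨c, rfl⟩ := Submodule.mkQ_surjective (maximalIdeal R) c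
        refine ⟨1, ?_⟩
        rw [pow_one]
        exact (Submodule.Quotient.mk_eq_zero _).2 (Ideal.mul_mem_right _ _ (hl x hx))
    · exact left_lt_sup.2 fun h => haN (h (Ideal.mem_span_singleton_self a))
  · push Not at h
    obtain ⟨x, hx, hreg⟩ := exists_regular_mem_maximalIdeal h
    let f : (R ⧸ N) →ₗ[R] R ⧸ N := LinearMap.lsmul R _ x
    let g : (R ⧸ N) →ₗ[R] R ⧸ (N ⊔ Ideal.span {x}) := Submodule.factor le_sup_left
    have hS : SES (X := ofModule R (R ⧸ N)) (Y := ofModule R (R ⧸ N))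
        (Z := ofModule R (R ⧸ (N ⊔ Ideal.span {x}))) f g := by
      refine ⟨fun _ => map_zero f, fun _ => map_zero g, ?_, ?_, ?_⟩
      · refine (injective_iff_map_eq_zero f).2 fun c hc => ?_
        obtain ⟨c, rfl⟩ := Submodule.mkQ_surjective _ c
        exact (Submodule.Quotient.mk_eq_zero _).2 (hreg c ((Submodule.Quotient.mk_eq_zero _).1 hc))
      · exact Submodule.factor_surjective le_sup_left
      · intro c
        obtain ⟨c, rfl⟩ := Submodule.mkQ_surjective _ c
        constructor
        · intro hc
          have hc : c ∈ N ⊔ Ideal.span {x} := (Submodule.Quotient.mk_eq_zero _).1 hc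
          obtain ⟨n, hn, b, hb, rfl⟩ := Submodule.mem_sup.1 hc
          obtain ⟨d, rfl⟩ := Ideal.mem_span_singleton'.1 hb
          refine ⟨Submodule.mkQ _ d, ?_⟩
          refine ((Submodule.Quotient.eq N).2 ?_)
          change x * d - (n + d * x) ∈ N
          rw [mul_comm x, sub_add_cancel_right]
          exact neg_mem hn
        · rintro ⟨d, hd⟩
          obtain ⟨d, rfl⟩ := Submodule.mkQ_surjective _ d
          rw [← hd]
          refine (Submodule.Quotient.mk_eq_zero _).2 ?_
          exact Ideal.mem_sup_right (Ideal.mul_mem_right _ _ (Ideal.mem_span_singleton_self x))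
    refine isArtinian_cech_of_smul l
      (fun X => tors_of_mem_radical (fun y hy => tors_cech hy X) (hm hx)) hS (fun _ => rfl)
      (ih _ ?_)
    refine left_lt_sup.2 fun h => hN ((Ideal.eq_top_iff_one N).2 (hreg 1 ?_))
    rw [mul_one]
    exact h (Ideal.mem_span_singleton_self x)

end DiffModule
end Artinian2

/-! ### Top local cohomology and generalized fractions -/

section TopCohomology
universe u
variable {R : Type u} [CommRing R]

/-- A model of the top local cohomology module `colim R / (x₁ⁿ, …, x_tⁿ)`, with `f = x₁ ⋯ x_t` and
`P n = (x₁ⁿ, …, x_tⁿ)`: every element is a generalized fraction `frac n a = [a / fⁿ]`. -/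
structure FracModel (f : R) (P : ℕ → Ideal R) where
  /-- the underlying type -/
  T : Type u
  [ac : AddCommGroup T]
  [mod : Module R T]
  /-- the generalized fraction `[a / fⁿ]` -/
  frac : ℕ → R →ₗ[R] T
  surj : ∀ θ, ∃ n a, frac n a = θ
  frac_succ : ∀ n a, frac n a = frac (n + 1) (f * a)
  zero_iff : ∀ n a, frac n a = 0 ↔ ∃ j, f ^ j * a ∈ P (n + j)

attribute [instance] FracModel.ac FracModel.mod

namespace FracModel
variable {f : R} {P : ℕ → Ideal R} (F : FracModel f P)

lemma frac_add (n j : ℕ) (a : R) : F.frac n a = F.frac (n + j) (f ^ j * a) := by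
  induction j with
  | zero => simp
  | succ j ih => rw [ih, F.frac_succ]; congr 1; ring

lemma surj_le (θ : F.T) : ∃ m, ∀ n, m ≤ n → ∃ a, F.frac n a = θ := by
  obtain ⟨m, a, rfl⟩ := F.surj θ
  refine ⟨m, fun n hn => ?_⟩
  obtain ⟨j, rfl⟩ := Nat.exists_eq_add_of_le hn
  exact ⟨_, (F.frac_add m j a).symm⟩

/-- The submodule of elements killed by a power of `z`. -/
def torsion (z : R) : Submodule R F.T where
  carrier := {θ | ∃ k : ℕ, z ^ k • θ = 0}
  zero_mem' := ⟨0, smul_zero _⟩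
  add_mem' := by
    rintro a b ⟨k, hk⟩ ⟨j, hj⟩
    refine ⟨k + j, ?_⟩
    rw [smul_add, pow_add, mul_smul, mul_smul, hj, smul_comm, hk, smul_zero, smul_zero, add_zero]
  smul_mem' := by
    rintro c a ⟨k, hk⟩
    exact ⟨k, by rw [smul_comm, hk, smul_zero]⟩

lemma mem_torsion {z : R} {θ : F.T} : θ ∈ F.torsion z ↔ ∃ k : ℕ, z ^ k • θ = 0 := Iff.rfl

end FracModel

/-- The ideal of `n`-th powers of the members of a list. -/
def listPowSpan (l : List R) (n : ℕ) : Ideal R := Ideal.span ((fun y => y ^ n) '' {y | y ∈ l})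

lemma listPowSpan_cons (x : R) (l : List R) (n : ℕ) :
    listPowSpan (x :: l) n = Ideal.span {x ^ n} ⊔ listPowSpan l n := by
  rw [listPowSpan, listPowSpan, ← Ideal.span_union, ← Set.image_singleton (f := fun y : R => y ^ n), ← Set.image_union]
  congr 2
  ext y
  simp [or_comm]

lemma prod_pow_mul_mem_listPowSpan (l : List R) (n s : ℕ) {a : R} (ha : a ∈ listPowSpan l n) :
    l.prod ^ s * a ∈ listPowSpan l (n + s) := by
  refine mul_mem_of_mem_span ?_ ha
  rintro _ ⟨y, hy, rfl⟩
  obtain ⟨c, hc⟩ := pow_dvd_pow_of_dvd (List.dvd_prod hy) s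
  have : l.prod ^ s * y ^ n = c * y ^ (n + s) := by rw [hc, pow_add]; ring
  change l.prod ^ s * y ^ n ∈ _
  rw [this]
  exact Ideal.mul_mem_left _ _ (Ideal.subset_span ⟨y, hy, rfl⟩)

lemma smul_divBy (x : R) (n : ℕ) {M : Type u} [AddCommGroup M] [Module R M] (b : Loc x M) :
    x ^ n • LocalizedModule.divBy (⟨x ^ n, n, rfl⟩ : Submonoid.powers x) b = b :=
  LocalizedModule.mul_by_divBy (⟨x ^ n, n, rfl⟩ : Submonoid.powers x) b

/-- The model for `x :: l` is `T_x / T`. -/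
noncomputable def FracModel.step (x : R) {l : List R} (F : FracModel l.prod (listPowSpan l)) :
    FracModel (x :: l).prod (listPowSpan (x :: l)) where
  T := Loc x F.T ⧸ LinearMap.range (toLoc x F.T)
  frac n := Submodule.mkQ _ ∘ₗ LocalizedModule.divBy (⟨x ^ n, n, rfl⟩ : Submonoid.powers x) ∘ₗ
    toLoc x F.T ∘ₗ F.frac n
  surj := by
    intro θ
    obtain ⟨b, rfl⟩ := Submodule.mkQ_surjective _ θ
    obtain ⟨k, θ, hθ⟩ := toLoc_surj x b
    obtain ⟨m, a, rfl⟩ := F.surj θ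
    refine ⟨m + k, l.prod ^ k * (x ^ m * a), ?_⟩
    simp only [LinearMap.comp_apply]
    congr 1
    refine loc_smul_inj x (k := m + k) ?_
    rw [smul_divBy, ← F.frac_add, ← smul_eq_mul, map_smul, map_smul, ← hθ, smul_smul, pow_add]
  frac_succ := by
    intro n a
    simp only [LinearMap.comp_apply]
    congr 1
    refine loc_smul_inj x (k := n + 1) ?_
    rw [smul_divBy, pow_succ', mul_smul, smul_divBy, List.prod_cons, mul_assoc, ← smul_eq_mul,
      map_smul, map_smul, ← F.frac_succ]
  zero_iff := by
    intro n a
    simp only [LinearMap.comp_apply, Submodule.mkQ_apply, Submodule.Quotient.mk_eq_zero]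
    rw [List.prod_cons]
    constructor
    · rintro ⟨θ, hθ⟩
      have h1 : toLoc x F.T (F.frac n a - x ^ n • θ) = 0 := by
        rw [map_sub, map_smul, hθ, smul_divBy, sub_self]
      obtain ⟨k, hk⟩ := (toLoc_eq_zero_iff _ _).1 h1
      obtain ⟨j, hj⟩ := F.surj_le θ
      obtain ⟨c, rfl⟩ := hj (n + j) (Nat.le_add_left _ _)
      rw [F.frac_add n j, ← map_smul, ← map_sub, ← map_smul, F.zero_iff] at hk
      obtain ⟨i, hi⟩ := hk
      refine ⟨k + i + j, ?_⟩
      rw [listPowSpan_cons]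
      have h2 := prod_pow_mul_mem_listPowSpan l _ k hi
      have h3 : (x * l.prod) ^ (k + i + j) * a = x ^ (i + j) * (l.prod ^ k * (l.prod ^ i *
          (x ^ k • (l.prod ^ j * a - x ^ n • c)))) +
          (l.prod ^ (k + i) * c) * x ^ (n + (k + i + j)) := by
        simp only [smul_eq_mul]; ring
      rw [h3]
      refine add_mem (Ideal.mul_mem_left _ _ (Ideal.mem_sup_right ?_))
        (Ideal.mul_mem_left _ _ (Ideal.mem_sup_left (Ideal.mem_span_singleton_self _)))
      convert h2 using 2
      ring
    · rintro ⟨J, hJ⟩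
      rw [listPowSpan_cons] at hJ
      obtain ⟨c, hc⟩ := mem_span_singleton_sup hJ
      have h1 : F.frac (n + J) (x ^ J • (l.prod ^ J * a - x ^ n • c)) = 0 := by
        rw [F.zero_iff]
        refine ⟨0, ?_⟩
        rw [add_zero]
        convert hc using 1
        rw [smul_eq_mul, smul_eq_mul]; ring
      rw [map_smul, map_sub, ← F.frac_add, map_smul] at h1
      refine ⟨F.frac (n + J) c, ?_⟩
      refine loc_smul_inj x (k := n) ?_
      rw [smul_divBy, ← map_smul]
      symm
      rw [← sub_eq_zero, ← map_sub, toLoc_eq_zero_iff]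
      exact ⟨J, h1⟩

/-- The model for the empty sequence is `R` itself. -/
noncomputable def FracModel.nil : FracModel ([] : List R).prod (listPowSpan ([] : List R)) where
  T := R ⧸ (⊥ : Ideal R)
  frac _ := Submodule.mkQ _
  surj θ := by
    obtain ⟨a, rfl⟩ := Submodule.mkQ_surjective _ θ
    exact ⟨0, a, rfl⟩
  frac_succ n a := by simp
  zero_iff n a := by
    rw [Submodule.mkQ_apply, Submodule.Quotient.mk_eq_zero]
    simp [listPowSpan]

/-- An augmentation `X → T` of a differential module identifying `T` with a direct summand of its
cohomology, in the form of a module `W` of cocycles mapping onto `T`. -/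
structure Augmentation (X : DiffModule R) (T : Type u) [AddCommGroup T] [Module R T] where
  /-- the augmentation -/
  τ : X.carrier →ₗ[R] T
  /-- the module of top-degree cocycles -/
  W : Submodule R X.carrier
  τ_d : ∀ a, τ (X.d a) = 0
  d_W : ∀ w ∈ W, X.d w = 0
  surj : ∀ θ, ∃ w ∈ W, τ w = θ
  inj : ∀ w ∈ W, τ w = 0 → ∃ c, X.d c = w

/-- The augmentation of the cone of `X → X_x`. -/
noncomputable def Augmentation.step (x : R) {X : DiffModule R} {T : Type u} [AddCommGroup T]
    [Module R T] (A : Augmentation X T) :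
    Augmentation (DiffModule.step x X) (Loc x T ⧸ LinearMap.range (toLoc x T)) where
  τ := Submodule.mkQ _ ∘ₗ locMap x A.τ ∘ₗ LinearMap.snd R X.carrier (Loc x X.carrier)
  W := 
    { carrier := {c : X.carrier × Loc x X.carrier | c.1 = 0 ∧ ∃ k : ℕ, ∃ w ∈ A.W,
        x ^ k • c.2 = toLoc x _ w}
      zero_mem' := ⟨rfl, 0, 0, zero_mem _, by rw [map_zero]; exact smul_zero _⟩
      add_mem' := by
        rintro ⟨a, b⟩ ⟨a', b'⟩ ⟨h1, k, w, hw, hb⟩ ⟨h1', k', w', hw', hb'⟩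
        refine ⟨?_, k + k', x ^ k' • w + x ^ k • w', ?_, ?_⟩
        · simp only at h1 h1'
          change a + a' = 0
          rw [h1, h1', add_zero]
        · exact add_mem (Submodule.smul_mem _ _ hw) (Submodule.smul_mem _ _ hw')
        · change x ^ (k + k') • (b + b') = _
          rw [map_add, map_smul, map_smul, ← hb, ← hb', smul_add, smul_smul, smul_smul, pow_add,
            mul_comm (x ^ k)]
      smul_mem' := by
        rintro r ⟨a, b⟩ ⟨h1, k, w, hw, hb⟩
        refine ⟨?_, k, r • w, Submodule.smul_mem _ _ hw, ?_⟩
        · simp only at h1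
          change r • a = 0
          rw [h1, smul_zero]
        · change x ^ k • r • b = _
          rw [map_smul, ← hb, smul_comm] }
  τ_d := by
    rintro ⟨a, b⟩
    rw [DiffModule.step_d]
    change Submodule.mkQ _ (locMap x A.τ (toLoc x _ a - locMap x X.d b)) = 0
    rw [map_sub, locMap_toLoc, locMap_comp_eq_zero x A.τ_d, sub_zero, Submodule.mkQ_apply,
      Submodule.Quotient.mk_eq_zero]
    exact ⟨_, rfl⟩
  d_W := by
    rintro ⟨a, b⟩ ⟨h1, k, w, hw, hb⟩
    simp only at h1 hb
    subst h1
    rw [DiffModule.step_d]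
    refine Prod.ext (map_zero _) ?_
    change toLoc x _ 0 - locMap x X.d b = 0
    rw [map_zero, zero_sub, neg_eq_zero]
    refine loc_smul_inj x (k := k) ?_
    rw [← map_smul, hb, locMap_toLoc, A.d_W w hw, map_zero, smul_zero]
  surj := by
    intro θ
    obtain ⟨c, rfl⟩ := Submodule.mkQ_surjective _ θ
    obtain ⟨k, θ, hθ⟩ := toLoc_surj x c
    obtain ⟨w, hw, rfl⟩ := A.surj θ
    obtain ⟨b, hb⟩ := loc_smul_surj x k (toLoc x _ w)
    refine ⟨((0, b) : X.carrier × Loc x X.carrier), ⟨rfl, k, w, hw, hb⟩, ?_⟩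
    change Submodule.mkQ _ (locMap x A.τ b) = _
    congr 1
    refine loc_smul_inj x (k := k) ?_
    rw [← map_smul, hb, locMap_toLoc, hθ]
  inj := by
    rintro ⟨a, b⟩ ⟨h1, k, w, hw, hb⟩ h
    simp only at h1 hb
    subst h1
    change Submodule.mkQ _ (locMap x A.τ b) = 0 at h
    rw [Submodule.mkQ_apply, Submodule.Quotient.mk_eq_zero] at h
    obtain ⟨θ, hθ⟩ := h
    obtain ⟨w0, hw0, rfl⟩ := A.surj θ
    have h2 : toLoc x _ (A.τ (w - x ^ k • w0)) = 0 := by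
      rw [← locMap_toLoc, map_sub, ← hb, map_smul, ← smul_sub, map_smul, map_sub, locMap_toLoc,
        ← hθ, sub_self, smul_zero]
    obtain ⟨j, hj⟩ := (toLoc_eq_zero_iff _ _).1 h2
    rw [← map_smul] at hj
    obtain ⟨c, hc⟩ := A.inj _ (Submodule.smul_mem _ _
      (sub_mem hw (Submodule.smul_mem _ _ hw0))) hj
    obtain ⟨e, he⟩ := loc_smul_surj x (j + k) (toLoc x _ c)
    refine ⟨((w0, -e) : X.carrier × Loc x X.carrier), ?_⟩
    rw [DiffModule.step_d]
    refine Prod.ext (A.d_W w0 hw0) ?_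
    change toLoc x _ w0 - locMap x X.d (-e) = b
    rw [map_neg, sub_neg_eq_add, ← sub_eq_zero]
    refine loc_smul_inj x (k := j + k) ?_
    rw [smul_zero, smul_sub, smul_add, ← map_smul (locMap x X.d), he, locMap_toLoc, hc, map_smul,
      map_sub, map_smul, ← hb, smul_sub, smul_smul, smul_smul, ← pow_add]
    abel

lemma exists_fracModel_augmentation (l : List R) :
    ∃ F : FracModel l.prod (listPowSpan l),
      Nonempty (Augmentation (DiffModule.cech l (DiffModule.ofModule R (R ⧸ (⊥ : Ideal R)))) F.T) := by
  induction l with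
  | nil =>
    exact ⟨FracModel.nil, ⟨{
      τ := LinearMap.id (R := R) (M := R ⧸ (⊥ : Ideal R)), W := ⊤, τ_d := fun _ => rfl, d_W := fun _ _ => rfl
      surj := fun θ => ⟨θ, trivial, rfl⟩, inj := fun w _ h => ⟨0, h.symm⟩ }⟩⟩
  | cons x l ih =>
    obtain ⟨F, ⟨A⟩⟩ := ih
    exact ⟨F.step x, ⟨A.step x⟩⟩

/-- The `z`-power torsion of the top local cohomology of a sequence which becomes `m`-primary
after adding `z` is Artinian: it is a quotient of the Čech cohomology of the longer sequence. -/
lemma exists_fracModel_list [IsNoetherianRing R] [IsLocalRing R] (l : List R) (z : R)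
    (hl : ∀ y ∈ l, y ∈ maximalIdeal R) (hz : z ∈ maximalIdeal R)
    (hm : maximalIdeal R ≤ (Ideal.span {y | y ∈ z :: l}).radical) :
    ∃ F : FracModel l.prod (listPowSpan l), IsArtinian R (F.torsion z) := by
  obtain ⟨F, ⟨A⟩⟩ := exists_fracModel_augmentation l
  refine ⟨F, ?_⟩
  set X := DiffModule.cech l (DiffModule.ofModule R (R ⧸ (⊥ : Ideal R))) with hX
  have hA : IsArtinian R (DiffModule.step z X).H :=
    DiffModule.isArtinian_cech_quotient (z :: l) (List.forall_mem_cons.2 ⟨hz, hl⟩) hm ⊥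
  have hker : ∀ (a : X.carrier) (b : Loc z X.carrier), (DiffModule.step z X).d (a, b) = 0 ↔
      X.d a = 0 ∧ toLoc z _ a = locMap z X.d b := by
    intro a b
    rw [DiffModule.step_d, ← sub_eq_zero (a := toLoc z _ a)]
    exact Prod.ext_iff
  let φ : LinearMap.ker (DiffModule.step z X).d →ₗ[R] F.torsion z :=
    LinearMap.codRestrict _ (A.τ ∘ₗ LinearMap.fst R X.carrier (Loc z X.carrier) ∘ₗ
      Submodule.subtype (LinearMap.ker (DiffModule.step z X).d)) (by
        rintro ⟨⟨a, b⟩, hab⟩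
        change ∃ k : ℕ, z ^ k • A.τ a = 0
        rw [← toLoc_eq_zero_iff, ← locMap_toLoc, ((hker a b).1 hab).2,
          locMap_comp_eq_zero z A.τ_d])
  refine isArtinian_of_ker_le (DiffModule.step z X).cls φ ?_ ?_
  · rintro ⟨⟨a, b⟩, hab⟩ h
    obtain ⟨⟨a', b'⟩, h'⟩ := (DiffModule.cls_eq_zero_iff _ _).1 (LinearMap.mem_ker.1 h)
    have h1 : X.d a' = a := (Prod.ext_iff.1 h').1
    refine LinearMap.mem_ker.2 (Subtype.ext ?_)
    change A.τ a = 0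
    rw [← h1, A.τ_d]
  · rintro ⟨θ, k, hk⟩
    obtain ⟨w, hw, rfl⟩ := A.surj θ
    rw [← map_smul] at hk
    obtain ⟨c, hc⟩ := A.inj _ (Submodule.smul_mem _ _ hw) hk
    obtain ⟨b, hb⟩ := loc_smul_surj z k (toLoc z _ c)
    refine ⟨⟨((w, b) : X.carrier × Loc z X.carrier), (hker w b).2 ⟨A.d_W w hw, ?_⟩⟩,
      Subtype.ext rfl⟩
    refine loc_smul_inj z (k := k) ?_
    rw [← map_smul, ← map_smul, hb, locMap_toLoc, hc]

lemma exists_fracModel [IsNoetherianRing R] [IsLocalRing R] {t : ℕ} (g : Fin t → R) (z : R)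
    (hg : ∀ i, g i ∈ maximalIdeal R) (hz : z ∈ maximalIdeal R)
    (hm : maximalIdeal R ≤ (Ideal.span {z} ⊔ Ideal.span (Set.range g)).radical) :
    ∃ F : FracModel (∏ i, g i) (powSpan g), IsArtinian R (F.torsion z) := by
  have h1 : (List.ofFn g).prod = ∏ i, g i := List.prod_ofFn
  have h2 : {y | y ∈ List.ofFn g} = Set.range g := by ext; simp [List.mem_ofFn]
  have h3 : listPowSpan (List.ofFn g) = powSpan g := by
    funext n
    rw [listPowSpan, h2, ← Set.range_comp]; rfl
  have := exists_fracModel_list (List.ofFn g) z (by simpa [List.mem_ofFn] using hg) hz (by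
    refine hm.trans (Ideal.radical_mono ?_)
    rw [← Ideal.span_union, ← h2]
    exact Ideal.span_mono fun y => by simp)
  rwa [h1, h3] at this

end TopCohomology

/-! ### Secondary representations and generic elements -/

section Secondary
universe u
variable {R : Type u} [CommRing R]

/-- The part of secondary representation theory needed below: for an Artinian module `L` and an
ideal `p`, all `z ∈ p` outside finitely many primes not containing `p` satisfy `p^e L ⊆ z^s L` for
all `s`, with a uniform `e`. -/
lemma exists_pow_smul_le [IsNoetherianRing R] {L : Type*} [AddCommGroup L] [Module R L]
    [IsArtinian R L] (p : Ideal R) (N : Submodule R L) :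
    ∃ S : Set (Ideal R), S.Finite ∧ (∀ q ∈ S, q.IsPrime ∧ ¬ p ≤ q) ∧ ∃ e : ℕ, ∀ z ∈ p,
      (∀ q ∈ S, z ∉ q) → ∀ (s : ℕ), ∀ c ∈ p ^ e, ∀ θ ∈ N, ∃ θ' ∈ N, c • θ = z ^ s • θ' := by
  induction N using WellFoundedLT.induction with
  | ind N ih =>
  by_cases hN : ∃ N₁ N₂, N₁ < N ∧ N₂ < N ∧ N₁ ⊔ N₂ = N
  · obtain ⟨N₁, N₂, h₁, h₂, rfl⟩ := hN
    obtain ⟨S₁, hS₁, hS₁', e₁, H₁⟩ := ih N₁ h₁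
    obtain ⟨S₂, hS₂, hS₂', e₂, H₂⟩ := ih N₂ h₂
    refine ⟨S₁ ∪ S₂, hS₁.union hS₂, ?_, max e₁ e₂, ?_⟩
    · rintro q (hq | hq)
      exacts [hS₁' q hq, hS₂' q hq]
    · intro z hz hzS s c hc θ hθ
      obtain ⟨a, ha, b, hb, rfl⟩ := Submodule.mem_sup.1 hθ
      obtain ⟨a', ha', ea⟩ := H₁ z hz (fun q hq => hzS q (Or.inl hq)) s c
        (Ideal.pow_le_pow_right (le_max_left _ _) hc) a ha
      obtain ⟨b', hb', eb⟩ := H₂ z hz (fun q hq => hzS q (Or.inr hq)) s c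
        (Ideal.pow_le_pow_right (le_max_right _ _) hc) b hb
      exact ⟨a' + b', add_mem (Submodule.mem_sup_left ha') (Submodule.mem_sup_right hb'),
        by rw [smul_add, smul_add, ea, eb]⟩
  -- `N` is not a sum of smaller submodules, so every element acts nilpotently or surjectively
  have hdich : ∀ x : R, (∃ n : ℕ, ∀ θ ∈ N, x ^ n • θ = 0) ∨ ∀ θ ∈ N, ∃ θ' ∈ N, x • θ' = θ := by
    intro x
    obtain ⟨n, hn⟩ := Filter.eventually_atTop.1
      (LinearMap.eventually_codisjoint_ker_pow_range_pow (LinearMap.lsmul R N x))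
    have hpow : ∀ (n : ℕ) (θ : N), (LinearMap.lsmul R N x ^ n) θ = x ^ n • θ := by
      intro n θ
      induction n with
      | zero => simp
      | succ n ihn => rw [pow_succ', Module.End.mul_apply, ihn, LinearMap.lsmul_apply, smul_smul,
          pow_succ']
    have h1 := codisjoint_iff.1 (hn (n + 1) (Nat.le_succ n))
    set K := (LinearMap.ker (LinearMap.lsmul R N x ^ (n + 1))).map N.subtype
    set Q := (LinearMap.range (LinearMap.lsmul R N x ^ (n + 1))).map N.subtype
    have hK : K ≤ N := Submodule.map_subtype_le _ _
    have hQ : Q ≤ N := Submodule.map_subtype_le _ _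
    have hKQ : K ⊔ Q = N := by
      rw [← Submodule.map_sup, h1, Submodule.map_subtype_top]
    by_cases hKN : K = N
    · refine Or.inl ⟨n + 1, fun θ hθ => ?_⟩
      rw [← hKN] at hθ
      obtain ⟨θ, hθ, rfl⟩ := hθ
      have : (LinearMap.lsmul R N x ^ (n + 1)) θ = 0 := hθ
      rw [hpow] at this
      exact congrArg Subtype.val this
    · have hQN : Q = N := by
        by_contra hQN
        exact hN ⟨K, Q, lt_of_le_of_ne hK hKN, lt_of_le_of_ne hQ hQN, hKQ⟩
      refine Or.inr fun θ hθ => ?_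
      rw [← hQN] at hθ
      obtain ⟨_, ⟨θ, rfl⟩, rfl⟩ := hθ
      refine ⟨x ^ n • θ.1, N.smul_mem _ θ.2, ?_⟩
      rw [hpow, smul_smul, ← pow_succ']
      rfl
  have hsurj : ∀ x : R, (∀ θ ∈ N, ∃ θ' ∈ N, x • θ' = θ) → ∀ (s : ℕ), ∀ θ ∈ N,
      ∃ θ' ∈ N, x ^ s • θ' = θ := by
    intro x hx s
    induction s with
    | zero => exact fun θ hθ => ⟨θ, hθ, by simp⟩
    | succ s ihs =>
      intro θ hθ
      obtain ⟨θ', h', rfl⟩ := ihs θ hθ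
      obtain ⟨θ'', h'', rfl⟩ := hx θ' h'
      exact ⟨θ'', h'', by rw [smul_smul, pow_succ]⟩
  let Q : Ideal R := N.annihilator.radical
  have hQ : ∀ x, x ∈ Q ↔ ∃ n : ℕ, ∀ θ ∈ N, x ^ n • θ = 0 := by
    intro x
    simp only [Q, Ideal.mem_radical_iff, Submodule.mem_annihilator]
  by_cases hp : p ≤ Q
  · obtain ⟨e, he⟩ := Ideal.exists_pow_le_of_le_radical_of_fg hp (IsNoetherian.noetherian p)
    refine ⟨∅, Set.finite_empty, by simp, e, fun z _ _ s c hc θ hθ => ⟨0, zero_mem _, ?_⟩⟩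
    rw [smul_zero]
    exact Submodule.mem_annihilator.1 (he hc) θ hθ
  · have hQp : Q.IsPrime := by
      refine ⟨fun h => hp (h ▸ le_top), fun {x y} hxy => ?_⟩
      by_contra! hcon
      have hx := (hdich x).resolve_left fun h => hcon.1 ((hQ x).2 h)
      have hy := (hdich y).resolve_left fun h => hcon.2 ((hQ y).2 h)
      obtain ⟨n, hn⟩ := (hQ _).1 hxy
      apply hp
      suffices Q = ⊤ from this ▸ le_top
      rw [Ideal.eq_top_iff_one, hQ]
      refine ⟨1, fun θ hθ => ?_⟩
      obtain ⟨θ₁, hθ₁, rfl⟩ := hsurj x hx n θ hθ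
      obtain ⟨θ₂, hθ₂, rfl⟩ := hsurj y hy n θ₁ hθ₁
      rw [smul_smul (x ^ n), ← mul_pow, hn θ₂ hθ₂, smul_zero]
    refine ⟨{Q}, Set.finite_singleton _, ?_, 0, ?_⟩
    · rintro q rfl
      exact ⟨hQp, hp⟩
    · intro z _ hzQ s c _ θ hθ
      have hz := (hdich z).resolve_left fun h => hzQ Q rfl ((hQ z).2 h)
      obtain ⟨θ', h', e'⟩ := hsurj z hz s (c • θ) (N.smul_mem _ hθ)
      exact ⟨θ', h', e'.symm⟩

variable {t : ℕ}

lemma mem_limitClosure_pow_iff {g : Fin t → R} {n : ℕ} (hn : 0 < n) {a : R} :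
    a ∈ limitClosure (M := R) (fun i => g i ^ n) ↔ ∃ j, (∏ i, g i) ^ j * a ∈ powSpan g (n + j) := by
  rw [mem_limitClosure]
  simp only [powSpan_pow, Finset.prod_pow]
  constructor
  · rintro ⟨j, hj⟩
    refine ⟨n * j, ?_⟩
    rwa [pow_mul, show n + n * j = n * (j + 1) by ring]
  · rintro ⟨j, hj⟩
    obtain ⟨n, rfl⟩ := Nat.exists_eq_add_of_lt hn
    refine ⟨j, ?_⟩
    have := prod_pow_mul_mem_powSpan (k := n * j) hj
    rw [← mul_assoc, ← pow_add] at this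
    convert this using 2
    · ring
    · rw [← pow_mul]; congr 1; ring

lemma FracModel.zero_iff_mem {g : Fin t → R} (F : FracModel (∏ i, g i) (powSpan g)) {n : ℕ}
    (hn : 0 < n) (a : R) : F.frac n a = 0 ↔ a ∈ limitClosure (M := R) (fun i => g i ^ n) := by
  rw [F.zero_iff, mem_limitClosure_pow_iff hn]

lemma FracModel.exists_pow_smul_eq_zero {g : Fin t → R} (F : FracModel (∏ i, g i) (powSpan g))
    {I : Ideal R} (θ : F.T) (hI : ∀ y ∈ I, ∃ k : ℕ, y ^ k • θ = 0) {y : R}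
    (hy : y ∈ (I ⊔ Ideal.span (Set.range g)).radical) : ∃ k : ℕ, y ^ k • θ = 0 := by
  let J : Ideal R := LinearMap.ker (LinearMap.toSpanSingleton R _ θ)
  have hJ : ∀ y, y ∈ J ↔ y • θ = 0 := fun y => Iff.rfl
  have h1 : I ⊔ Ideal.span (Set.range g) ≤ J.radical := by
    refine sup_le (fun y hy => ?_) (Ideal.span_le.2 ?_)
    · obtain ⟨k, hk⟩ := hI y hy
      exact ⟨k, hk⟩
    · rintro _ ⟨i, rfl⟩
      obtain ⟨n, a, rfl⟩ := F.surj θ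
      refine ⟨n, (hJ _).2 ?_⟩
      rw [← map_smul, F.zero_iff]
      refine ⟨0, ?_⟩
      rw [pow_zero, one_mul, smul_eq_mul]
      exact Ideal.mul_mem_right _ _ (pow_mem_powSpan _ _ _)
  obtain ⟨k, hk⟩ := Ideal.radical_le_radical_iff.2 h1 hy
  exact ⟨k, hk⟩

/-- For a generic `z ∈ p`, an element of the limit closure of `(z^s, gⁿ)` lies, after
multiplication by any element of `p^e`, in the limit closure of `gⁿ` modulo `z^s`. -/
lemma exists_generic_limitClosure [IsNoetherianRing R] [IsLocalRing R] (g : Fin t → R) (z₁ : R)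
    (hg : ∀ i, g i ∈ maximalIdeal R) (hz₁ : z₁ ∈ maximalIdeal R)
    (hm : maximalIdeal R ≤ (Ideal.span {z₁} ⊔ Ideal.span (Set.range g)).radical) (p : Ideal R) :
    ∃ S : Set (Ideal R), S.Finite ∧ (∀ q ∈ S, q.IsPrime ∧ ¬ p ≤ q) ∧ ∃ e : ℕ, ∀ z ∈ p,
      (∀ q ∈ S, z ∉ q) → z₁ ∈ (Ideal.span {z} ⊔ Ideal.span (Set.range g)).radical →
      ∀ (s n : ℕ), 0 < n → ∀ ρ,
        ρ ∈ limitClosure (M := R) (Fin.cons (z ^ s) fun i => g i ^ n : Fin (t + 1) → R) →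
        ∀ c ∈ p ^ e, Ideal.Quotient.mk (Ideal.span {z ^ s}) (c * ρ) ∈
          limitClosure (M := R ⧸ Ideal.span {z ^ s})
            fun i => Ideal.Quotient.mk (Ideal.span {z ^ s}) (g i) ^ n := by
  obtain ⟨F, hF⟩ := exists_fracModel g z₁ hg hz₁ hm
  obtain ⟨S, hS, hS', e, H⟩ := exists_pow_smul_le p (⊤ : Submodule R (F.torsion z₁))
  refine ⟨S, hS, hS', e, ?_⟩
  intro z hz hzS hz₁z s n hn ρ hρ c hc
  obtain ⟨j, hj⟩ := mem_limitClosure.1 hρ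
  rw [powSpan_cons, powSpan_pow, Fin.prod_cons, Finset.prod_pow] at hj
  obtain ⟨d, hd⟩ := mem_span_singleton_sup hj
  have h1 : z ^ (s * j) • F.frac (n * (j + 1)) ((∏ i, g i) ^ (n * j) * ρ - z ^ s * d) = 0 := by
    rw [← map_smul, F.zero_iff]
    refine ⟨0, ?_⟩
    rw [pow_zero, one_mul, add_zero]
    convert hd using 1
    rw [smul_eq_mul]; ring
  obtain ⟨θ', -, hθ'⟩ := H z hz hzS s c hc ⟨F.frac (n * (j + 1)) ((∏ i, g i) ^ (n * j) * ρ - z ^ s * d), by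
    refine F.exists_pow_smul_eq_zero _ (I := Ideal.span {z}) ?_ hz₁z
    intro y hy
    obtain ⟨y, rfl⟩ := Ideal.mem_span_singleton'.1 hy
    exact ⟨s * j, by rw [mul_pow, mul_smul, h1, smul_zero]⟩⟩ trivial
  have hθ2 : c • F.frac (n * (j + 1)) ((∏ i, g i) ^ (n * j) * ρ - z ^ s * d) = z ^ s • (θ' : F.T) :=
    congrArg Subtype.val hθ'
  obtain ⟨i, hi⟩ := F.surj_le θ'
  obtain ⟨b, hb⟩ := hi (n * (j + 1) + i) (Nat.le_add_left _ _)
  rw [← hb, F.frac_add _ i, ← map_smul, ← map_smul, ← sub_eq_zero, ← map_sub, F.zero_iff] at hθ2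
  obtain ⟨k, hk⟩ := hθ2
  rw [mem_limitClosure_pow_iff hn]
  refine ⟨k + i + n * j, ?_⟩
  have h2 := Ideal.mem_map_of_mem (Ideal.Quotient.mk (Ideal.span {z ^ s})) hk
  rw [map_powSpan] at h2
  have hz0 : Ideal.Quotient.mk (Ideal.span {z ^ s}) z ^ s = 0 := by
    rw [← map_pow]
    exact Ideal.Quotient.eq_zero_iff_mem.2 (Ideal.mem_span_singleton_self _)
  simp only [map_mul, map_sub, map_pow, hz0, smul_eq_mul, zero_mul, sub_zero] at h2
  rw [← map_prod, map_mul]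
  convert h2 using 1
  · congr 1; ring
  · ring

end Secondary

/-! ### Dimension theory and parameters -/

section Dimension
universe u
variable {R : Type u} [CommRing R]

lemma le_radical_of_forall_isPrime {I J : Ideal R} (h : ∀ q : Ideal R, q.IsPrime → I ≤ q → J ≤ q) :
    J ≤ I.radical := by
  rw [Ideal.radical_eq_sInf]
  exact le_sInf fun q hq => h q hq.2 hq.1

lemma eq_maximalIdeal_of_le_radical [IsLocalRing R] {I q : Ideal R} (hq : q.IsPrime)
    (h : maximalIdeal R ≤ I.radical) (hI : I ≤ q) : q = maximalIdeal R :=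
  le_antisymm (le_maximalIdeal hq.ne_top) (h.trans (hq.radical_le_iff.2 hI))

lemma exists_mem_forall_notMem (p : Ideal R) {S : Set (Ideal R)} (hS : S.Finite)
    (h : ∀ q ∈ S, q.IsPrime ∧ ¬ p ≤ q) : ∃ z ∈ p, ∀ q ∈ S, z ∉ q := by
  by_contra! hcon
  have h1 : (p : Set R) ⊆ ⋃ q ∈ (hS.toFinset : Set (Ideal R)), ((id q : Ideal R) : Set R) := by
    intro z hz
    obtain ⟨q, hq, hzq⟩ := hcon z hz
    simp only [Set.mem_iUnion]
    exact ⟨q, by simpa using hq, hzq⟩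
  obtain ⟨q, hq, hpq⟩ := (Ideal.subset_union_prime (f := id) ⊤ ⊤ (fun q hq _ _ =>
    (h q ((Set.Finite.mem_toFinset _).1 hq)).1)).1 h1
  exact (h q ((Set.Finite.mem_toFinset _).1 hq)).2 hpq

/-- Krull's principal ideal theorem: there is no prime strictly between `q₀` and a minimal prime
of `q₀ + (w)`. -/
lemma not_lt_lt_of_principal [IsNoetherianRing R] [IsLocalRing R] {q₀ q : Ideal R} {w : R}
    (h₀ : q₀.IsPrime) (hq : q.IsPrime)
    (hw : ∀ q : Ideal R, q.IsPrime → q₀ ≤ q → w ∈ q → q = maximalIdeal R)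
    (h1 : q₀ < q) (h2 : q ≠ maximalIdeal R) (hwm : w ∈ maximalIdeal R) : False := by
  have hqm : q < maximalIdeal R := lt_of_le_of_ne (le_maximalIdeal hq.ne_top) h2
  have hmin : maximalIdeal R ∈ (q₀ ⊔ Ideal.span {w}).minimalPrimes := by
    refine ⟨⟨inferInstance, sup_le (h1.le.trans hqm.le)
      ((Ideal.span_singleton_le_iff_mem _).2 hwm)⟩, fun q' hq' _ => ?_⟩
    exact (hw q' hq'.1 (le_sup_left.trans hq'.2)
      (hq'.2 (Ideal.mem_sup_right (Ideal.mem_span_singleton_self w)))).ge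
  have h3 := Ideal.map_height_le_one_of_mem_minimalPrimes hmin
  have hsurj := Ideal.Quotient.mk_surjective (I := q₀)
  have hp1 : (q.map (Ideal.Quotient.mk q₀)).IsPrime :=
    Ideal.map_isPrime_of_surjective hsurj (by rw [Ideal.mk_ker]; exact h1.le)
  have hp2 : ((maximalIdeal R).map (Ideal.Quotient.mk q₀)).IsPrime :=
    Ideal.map_isPrime_of_surjective hsurj (by rw [Ideal.mk_ker]; exact (h1.trans hqm).le)
  have hlt : ∀ {a b : Ideal R}, q₀ ≤ a → a < b →
      a.map (Ideal.Quotient.mk q₀) < b.map (Ideal.Quotient.mk q₀) := by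
    intro a b ha hab
    refine lt_of_le_of_ne (Ideal.map_mono hab.le) fun e => hab.ne ?_
    have := congrArg (Ideal.comap (Ideal.Quotient.mk q₀)) e
    rwa [Ideal.comap_map_of_surjective' _ hsurj, Ideal.comap_map_of_surjective' _ hsurj,
      Ideal.mk_ker, sup_eq_left.2 ha, sup_eq_left.2 (ha.trans hab.le)] at this
  have hp0 : (q₀.map (Ideal.Quotient.mk q₀)).IsPrime :=
    Ideal.map_isPrime_of_surjective hsurj (by rw [Ideal.mk_ker])
  have a1 := Ideal.height_add_one_le_of_lt_of_isPrime (hlt le_rfl h1)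
  have a2 := Ideal.height_add_one_le_of_lt_of_isPrime (hlt h1.le hqm)
  have a3 : (1 : ℕ∞) + 1 ≤ 1 := le_trans (add_le_add_left (le_trans le_add_self a1) 1)
    (a2.trans h3)
  norm_num at a3

/-- In a local ring of dimension at most `r + 1`, a prime `p ≠ m` of height at least `r` contains
`r` members of a system of generators of an `m`-primary ideal. -/
lemma exists_cons_mem [IsNoetherianRing R] [IsLocalRing R] {r : ℕ} {p : Ideal R} (hp : p.IsPrime)
    (hpm : p ≠ maximalIdeal R) (hdim : ringKrullDim R ≤ (r + 1 : ℕ)) (hr : (r : ℕ∞) ≤ p.height) :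
    ∃ (w : R) (Z : Fin r → R), w ∈ maximalIdeal R ∧ (∀ i, Z i ∈ p) ∧
      maximalIdeal R ≤ (Ideal.span (Set.range (Fin.cons w Z : Fin (r + 1) → R))).radical := by
  have hm : (maximalIdeal R).height ≤ (r + 1 : ℕ) := by
    rw [← maximalIdeal_height_eq_ringKrullDim] at hdim
    exact_mod_cast hdim
  have hplt : p < maximalIdeal R := lt_of_le_of_ne (le_maximalIdeal hp.ne_top) hpm
  have hpr : p.height = r := by
    refine le_antisymm ?_ hr
    have := (Ideal.height_add_one_le_of_lt_of_isPrime hplt).trans hm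
    push_cast at this
    exact (ENat.add_le_add_iff_right (by simp)).1 this
  obtain ⟨I, hIp, hI1, hI2⟩ := Ideal.exists_spanRank_eq_and_height_eq p hp.ne_top
  rw [hpr] at hI1 hI2
  obtain ⟨s, hs, hsI⟩ := (Submodule.FG.spanRank_le_iff_exists_span_set_card_le I).1 hI1.le
  obtain ⟨Z, hZ⟩ : ∃ Z : Fin r → R, Ideal.span (Set.range Z) = I := by
    have hs' : Cardinal.mk s ≤ r := by simpa using hs
    have hfin : s.Finite := Cardinal.lt_aleph0_iff_set_finite.1
      (lt_of_le_of_lt hs' (Cardinal.natCast_lt_aleph0))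
    have := hfin.fintype
    have hc : Fintype.card s ≤ r := by
      rw [Cardinal.mk_fintype] at hs'
      exact_mod_cast hs'
    let e := Fintype.equivFin s
    refine ⟨fun i => if h : i.1 < Fintype.card s then (e.symm ⟨i.1, h⟩ : R) else 0, ?_⟩
    refine le_antisymm (Ideal.span_le.2 ?_) ?_
    · rintro _ ⟨i, rfl⟩
      dsimp only
      split_ifs with h
      · rw [← hsI]; exact Ideal.subset_span (e.symm ⟨i.1, h⟩).2
      · exact zero_mem _
    · rw [← hsI]
      refine Ideal.span_le.2 fun a ha => Ideal.subset_span ?_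
      refine ⟨⟨(e ⟨a, ha⟩).1, lt_of_lt_of_le (e ⟨a, ha⟩).2 hc⟩, ?_⟩
      dsimp only
      rw [dif_pos (e ⟨a, ha⟩).2, Fin.eta, Equiv.symm_apply_apply]
  obtain ⟨w, hw, hw'⟩ := exists_mem_forall_notMem (maximalIdeal R)
    (S := I.minimalPrimes \ {maximalIdeal R})
    ((Ideal.finite_minimalPrimes_of_isNoetherianRing R I).subset Set.diff_subset) (by
      rintro q ⟨hq, hqm⟩
      exact ⟨hq.1.1, fun h => hqm (le_antisymm (le_maximalIdeal hq.1.1.ne_top) h)⟩)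
  refine ⟨w, Z, hw, fun i => hIp (hZ ▸ Ideal.subset_span ⟨i, rfl⟩), ?_⟩
  refine le_radical_of_forall_isPrime fun q hq hle => ?_
  rw [span_range_cons, hZ] at hle
  by_contra hqm
  have hqlt : q < maximalIdeal R := lt_of_le_of_ne (le_maximalIdeal hq.ne_top) fun h => hqm h.ge
  obtain ⟨q₀, hq₀, hq₀q⟩ := Ideal.exists_minimalPrimes_le (le_sup_right.trans hle)
  have := hq₀.1.1
  have hwq₀ : w ∉ q₀ := hw' q₀ ⟨hq₀, fun h => hqlt.not_ge (h ▸ hq₀q)⟩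
  have hlt : q₀ < q := lt_of_le_of_ne hq₀q fun h =>
    hwq₀ (h ▸ hle (Ideal.mem_sup_left (Ideal.mem_span_singleton_self w)))
  have a0 : (r : ℕ∞) ≤ q₀.height := hI2 ▸ Ideal.height_mono hq₀.1.2
  have a1 := Ideal.height_add_one_le_of_lt_of_isPrime hlt
  have a2 := (Ideal.height_add_one_le_of_lt_of_isPrime hqlt).trans hm
  have a3 : (r : ℕ∞) + 1 + 1 ≤ (r + 1 : ℕ) :=
    le_trans (add_le_add_left ((add_le_add_left a0 1).trans a1) 1) a2
  have a4 : r + 1 + 1 ≤ r + 1 := by exact_mod_cast a3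
  omega

lemma exists_notMem_mul_pow_mem [IsNoetherianRing R] {I p : Ideal R} (hp : p ∈ I.minimalPrimes)
    {v : R} (hv : v ∈ p) : ∃ u, u ∉ p ∧ ∃ c : ℕ, u * v ^ c ∈ I := by
  have hfin := (Ideal.finite_minimalPrimes_of_isNoetherianRing R I).subset
    (Set.diff_subset (t := {p}))
  have h1 : ¬ hfin.toFinset.inf id ≤ p := by
    intro h
    obtain ⟨q, hq, hqp⟩ := (Ideal.IsPrime.inf_le' hp.1.1).1 h
    obtain ⟨hq1, hq2⟩ := (Set.Finite.mem_toFinset _).1 hq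
    exact hq2 (le_antisymm hqp (hp.2 hq1.1 hqp))
  obtain ⟨u, hu, hup⟩ := SetLike.not_le_iff_exists.1 h1
  have h2 : u * v ∈ I.radical := by
    rw [← Ideal.sInf_minimalPrimes, Ideal.mem_sInf]
    intro q hq
    by_cases hqp : q = p
    · exact hqp ▸ Ideal.mul_mem_left _ _ hv
    · refine Ideal.mul_mem_right _ _ ?_
      exact (Finset.inf_le (f := id) ((Set.Finite.mem_toFinset hfin).2 ⟨hq, hqp⟩)) hu
  obtain ⟨c, hc⟩ := h2
  refine ⟨u ^ c, fun h => hup (hp.1.1.mem_of_pow_mem _ h), c, ?_⟩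
  rwa [← mul_pow]

/-- The auxiliary elements `v ∈ p`, `u ∉ p` attached to a prime `p` just below `m` and to
parameters `Z ⊆ p`, `w`: `p` is the radical of `(v, Z)` and `v` is nilpotent modulo `Z` up to the
multiplier `u`. -/
lemma exists_adapted [IsNoetherianRing R] [IsLocalRing R] {r : ℕ} {p : Ideal R} (hp : p.IsPrime)
    (hpm : p ≠ maximalIdeal R) (hcov : ∀ q : Ideal R, q.IsPrime → p < q → q = maximalIdeal R)
    {w : R} {Z : Fin r → R} (hw : w ∈ maximalIdeal R) (hZ : ∀ i, Z i ∈ p)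
    (hm : maximalIdeal R ≤ (Ideal.span (Set.range (Fin.cons w Z : Fin (r + 1) → R))).radical) :
    w ∉ p ∧ ∃ v ∈ p, p ≤ (Ideal.span {v} ⊔ Ideal.span (Set.range Z)).radical ∧
      ∃ u, u ∉ p ∧ ∃ c : ℕ, u * v ^ c ∈ Ideal.span (Set.range Z) := by
  rw [span_range_cons] at hm
  have hZp : Ideal.span (Set.range Z) ≤ p := Ideal.span_le.2 (by rintro _ ⟨i, rfl⟩; exact hZ i)
  have hwp : w ∉ p := fun h => hpm (eq_maximalIdeal_of_le_radical hp hm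
    (sup_le ((Ideal.span_singleton_le_iff_mem _).2 h) hZp))
  have key : ∀ q₀ q : Ideal R, q₀.IsPrime → q.IsPrime → Ideal.span (Set.range Z) ≤ q₀ → q₀ < q →
      q = maximalIdeal R := by
    intro q₀ q h₀ hq hZq h1
    by_contra h2
    refine not_lt_lt_of_principal h₀ hq (w := w) (fun q' hq' hle hwq' => ?_) h1 h2 hw
    exact eq_maximalIdeal_of_le_radical hq' hm
      (sup_le ((Ideal.span_singleton_le_iff_mem _).2 hwq') (hZq.trans hle))
  have hpmin : p ∈ (Ideal.span (Set.range Z)).minimalPrimes := by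
    obtain ⟨q₀, hq₀, hle⟩ := Ideal.exists_minimalPrimes_le hZp
    rcases hle.eq_or_lt with h | h
    · exact h ▸ hq₀
    · exact absurd (key q₀ p hq₀.1.1 hp hq₀.1.2 h) hpm
  obtain ⟨v, hv, hv'⟩ := exists_mem_forall_notMem p
    (S := {q ∈ (Ideal.span (Set.range Z)).minimalPrimes | ¬ p ≤ q})
    ((Ideal.finite_minimalPrimes_of_isNoetherianRing R _).subset (Set.sep_subset _ _))
    (fun q hq => ⟨hq.1.1.1, hq.2⟩)
  refine ⟨hwp, v, hv, ?_, exists_notMem_mul_pow_mem hpmin hv⟩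
  refine le_radical_of_forall_isPrime fun q hq hle => ?_
  obtain ⟨q₀, hq₀, hq₀q⟩ := Ideal.exists_minimalPrimes_le (le_sup_right.trans hle)
  by_cases hpq : p ≤ q₀
  · exact hpq.trans hq₀q
  · have hlt : q₀ < q := lt_of_le_of_ne hq₀q fun h =>
      hv' q₀ ⟨hq₀, hpq⟩ (h ▸ hle (Ideal.mem_sup_left (Ideal.mem_span_singleton_self v)))
    rw [key q₀ q hq₀.1.1 hq hq₀.1.2 hlt]
    exact le_maximalIdeal hp.ne_top

lemma mem_radical_of_notMem [IsLocalRing R] {r : ℕ} {p : Ideal R}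
    (hcov : ∀ q : Ideal R, q.IsPrime → p < q → q = maximalIdeal R)
    {w u v : R} {Z : Fin r → R} (hw : w ∈ maximalIdeal R) (hu : u ∉ p)
    (hp : p ≤ (Ideal.span {v} ⊔ Ideal.span (Set.range Z)).radical) :
    w ∈ (Ideal.span {u} ⊔ Ideal.span {v} ⊔ Ideal.span (Set.range Z)).radical := by
  refine le_radical_of_forall_isPrime (J := maximalIdeal R) (fun q hq hle => ?_) hw
  rw [sup_assoc] at hle
  have h1 : p ≤ q := hp.trans (hq.radical_le_iff.2 (le_sup_right.trans hle))
  refine (hcov q hq (lt_of_le_of_ne h1 fun h => hu ?_)).ge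
  exact h ▸ hle (Ideal.mem_sup_left (Ideal.mem_span_singleton_self u))

lemma ringKrullDim_le_of_map_eq_zero {S : Type*} [CommRing S] [IsDomain R] {f : R →+* S}
    (hf : Function.Surjective f) {x : R} (hx : x ≠ 0) (hfx : f x = 0) {n : ℕ}
    (hdim : ringKrullDim R ≤ (n + 1 : ℕ)) : ringKrullDim S ≤ n := by
  have h1 := (ringKrullDim_quotient_succ_le_of_nonZeroDivisor
    (mem_nonZeroDivisors_of_ne_zero hx)).trans hdim
  have h2 : ringKrullDim S ≤ ringKrullDim (R ⧸ Ideal.span {x}) :=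
    ringKrullDim_le_of_surjective (Ideal.Quotient.lift _ f (by
      intro a ha
      obtain ⟨c, rfl⟩ := Ideal.mem_span_singleton'.1 ha
      rw [map_mul, hfx, mul_zero])) (Ideal.Quotient.lift_surjective_of_surjective _ _ hf)
  have h3 := (add_le_add_left h2 1).trans h1
  revert h3
  generalize ringKrullDim S = d
  intro h3
  push_cast at h3
  cases d with
  | bot => exact bot_le
  | coe d =>
    have h3' : d + 1 ≤ (n : ℕ∞) + 1 := by exact_mod_cast h3
    exact_mod_cast (ENat.add_le_add_iff_right (by simp)).1 h3'

lemma map_mk_lt_map_mk {I a b : Ideal R} (ha : I ≤ a) (hab : a < b) :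
    a.map (Ideal.Quotient.mk I) < b.map (Ideal.Quotient.mk I) := by
  refine lt_of_le_of_ne (Ideal.map_mono hab.le) fun e => hab.ne ?_
  have := congrArg (Ideal.comap (Ideal.Quotient.mk I)) e
  rwa [Ideal.comap_map_of_surjective' _ Ideal.Quotient.mk_surjective,
    Ideal.comap_map_of_surjective' _ Ideal.Quotient.mk_surjective,
    Ideal.mk_ker, sup_eq_left.2 ha, sup_eq_left.2 (ha.trans hab.le)] at this

lemma isPrime_map_mk {I p : Ideal R} (hp : p.IsPrime) (h : I ≤ p) :
    (p.map (Ideal.Quotient.mk I)).IsPrime :=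
  Ideal.map_isPrime_of_surjective Ideal.Quotient.mk_surjective (by rwa [Ideal.mk_ker])

/-- The height of a prime is computed modulo a suitable minimal prime. -/
lemma exists_minimalPrimes_height_le (k : ℕ) : ∀ {p : Ideal R}, p.IsPrime → (k : ℕ∞) ≤ p.height →
    ∃ P ∈ minimalPrimes R, P ≤ p ∧ (k : ℕ∞) ≤ (p.map (Ideal.Quotient.mk P)).height := by
  induction k with
  | zero =>
    intro p hp _
    obtain ⟨P, hP, hPp⟩ := Ideal.exists_minimalPrimes_le (bot_le (a := p))
    exact ⟨P, hP, hPp, by simp⟩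
  | succ k ih =>
    intro p hp hk
    have h1 : ¬ p.height ≤ k := fun h => by
      have : ((k + 1 : ℕ) : ℕ∞) ≤ k := hk.trans h
      have : k + 1 ≤ k := by exact_mod_cast this
      omega
    rw [Ideal.height_le_iff] at h1
    push Not at h1
    obtain ⟨q, hq, hqp, hkq⟩ := h1
    obtain ⟨P, hP, hPq, hk'⟩ := ih hq hkq
    refine ⟨P, hP, hPq.trans hqp.le, ?_⟩
    have i1 := isPrime_map_mk hq hPq
    have i2 := isPrime_map_mk hp (hPq.trans hqp.le)
    have := Ideal.height_add_one_le_of_lt_of_isPrime (map_mk_lt_map_mk hPq hqp)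
    push_cast
    exact (add_le_add_left hk' 1).trans this

end Dimension

/-! ### Generic coordinates -/

section
variable {R : Type*} [CommRing R]

lemma mem_limitClosure_cons_cons {r : ℕ} {w z a : R} {Z : Fin r → R} :
    a ∈ limitClosure (M := R) (Fin.cons w (Fin.cons z Z : Fin (r + 1) → R) : Fin (r + 2) → R) ↔
      a ∈ limitClosure (M := R)
        (Fin.cons z (Fin.cons w Z : Fin (r + 1) → R) : Fin (r + 2) → R) := by
  simp only [mem_limitClosure, powSpan_cons, Fin.prod_cons, sup_left_comm (Ideal.span {w ^ _}),
    mul_left_comm w z]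

lemma map_mem_radical_map {S : Type*} [CommRing S] (f : R →+* S) {I : Ideal R} {a : R}
    (h : a ∈ I.radical) : f a ∈ (I.map f).radical := by
  obtain ⟨n, hn⟩ := h
  exact ⟨n, by rw [← map_pow]; exact Ideal.mem_map_of_mem f hn⟩

lemma map_span_range {S : Type*} [CommRing S] (f : R →+* S) {r : ℕ} (Z : Fin r → R) :
    (Ideal.span (Set.range Z)).map f = Ideal.span (Set.range fun i => f (Z i)) := by
  rw [Ideal.map_span, ← Set.range_comp]; rfl

lemma map_cons {S : Type*} [CommRing S] (f : R →+* S) {r : ℕ} (w : R) (Z : Fin r → R) :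
    (fun i => f ((Fin.cons w Z : Fin (r + 1) → R) i)) = Fin.cons (f w) fun i => f (Z i) := by
  funext i; refine Fin.cases ?_ (fun i => ?_) i <;> simp

/-- A choice of coordinates `w, z, Z` with `z, Z ⊆ p` for which `z` is generic: multiplying by
`p ^ e` brings limit closures of `z ^ s, w ^ n, Z ^ n` down to limit closures modulo `z ^ s`,
and `z` avoids all minimal primes of `b` not containing `p`. -/
lemma exists_generic_coordinates [IsNoetherianRing R] [IsLocalRing R] [IsDomain R] {r : ℕ}
    {p : Ideal R} (hp : p.IsPrime) (hpm : p ≠ maximalIdeal R)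
    (hcov : ∀ q : Ideal R, q.IsPrime → p < q → q = maximalIdeal R)
    (hdim : ringKrullDim R ≤ (r + 1 + 1 : ℕ)) (hr : ((r + 1 : ℕ) : ℕ∞) ≤ p.height) (b : R) :
    ∃ (w z : R) (Z : Fin r → R) (e : ℕ), w ∈ maximalIdeal R ∧ z ∈ p ∧ (∀ i, Z i ∈ p) ∧ z ≠ 0 ∧
      (∀ q ∈ (Ideal.span {b}).minimalPrimes, ¬ p ≤ q → z ∉ q) ∧
      maximalIdeal R ≤ (Ideal.span (Set.range (Fin.cons w
        (Fin.cons z Z : Fin (r + 1) → R) : Fin (r + 1 + 1) → R))).radical ∧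
      ∀ (s n : ℕ), 0 < n → ∀ ρ,
        ρ ∈ limitClosure (M := R) (Fin.cons (z ^ s)
          fun i => (Fin.cons w Z : Fin (r + 1) → R) i ^ n : Fin (r + 1 + 1) → R) →
        ∀ c ∈ p ^ e, Ideal.Quotient.mk (Ideal.span {z ^ s}) (c * ρ) ∈
          limitClosure (M := R ⧸ Ideal.span {z ^ s})
            fun i => Ideal.Quotient.mk (Ideal.span {z ^ s})
              ((Fin.cons w Z : Fin (r + 1) → R) i) ^ n := by
  obtain ⟨w, Y, hw, hY, hm⟩ := exists_cons_mem hp hpm hdim hr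
  obtain ⟨hwp, -⟩ := exists_adapted hp hpm hcov hw hY hm
  have hpb : p ≠ ⊥ := by
    rintro rfl
    simp at hr
  have hple : p ≤ maximalIdeal R := le_maximalIdeal hp.ne_top
  set z₁ := Y 0 with hz₁
  set Z : Fin r → R := Fin.tail Y with hZ
  have hYc : Y = Fin.cons z₁ Z := (Fin.cons_self_tail Y).symm
  have hZp : ∀ i, Z i ∈ p := fun i => hY i.succ
  set g : Fin (r + 1) → R := Fin.cons w Z with hg
  have hgm : ∀ i, g i ∈ maximalIdeal R := by
    intro i
    refine Fin.cases ?_ (fun i => ?_) i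
    · simpa [hg] using hw
    · simpa [hg] using hple (hZp i)
  have hz₁m : z₁ ∈ maximalIdeal R := hple (hY 0)
  have hmg : maximalIdeal R ≤ (Ideal.span {z₁} ⊔ Ideal.span (Set.range g)).radical := by
    rwa [hYc, span_range_cons, span_range_cons, sup_left_comm, ← span_range_cons w Z] at hm
  obtain ⟨S, hS, hS', e, H⟩ := exists_generic_limitClosure g z₁ hgm hz₁m hmg p
  obtain ⟨z, hzp, hz⟩ := exists_mem_forall_notMem p
    (S := S ∪ {q | q ∈ (Ideal.span (Set.range g)).minimalPrimes ∧ ¬ p ≤ q} ∪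
      {q | q ∈ (Ideal.span {b}).minimalPrimes ∧ ¬ p ≤ q} ∪ {⊥})
    (((hS.union ((Ideal.finite_minimalPrimes_of_isNoetherianRing R _).subset
      fun _ h => h.1)).union ((Ideal.finite_minimalPrimes_of_isNoetherianRing R _).subset
      fun _ h => h.1)).union (Set.finite_singleton _)) (by
      rintro q (((hq | hq) | hq) | hq)
      · exact hS' q hq
      · exact ⟨hq.1.1.1, hq.2⟩
      · exact ⟨hq.1.1.1, hq.2⟩
      · rw [Set.mem_singleton_iff] at hq
        subst hq
        exact ⟨Ideal.isPrime_bot, fun h => hpb (le_bot_iff.1 h)⟩)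
  have hprim : maximalIdeal R ≤ (Ideal.span {z} ⊔ Ideal.span (Set.range g)).radical := by
    refine le_radical_of_forall_isPrime fun q hq hle => ?_
    by_contra hqm
    have hqm' : q ≠ maximalIdeal R := fun h => hqm h.ge
    have hzq : z ∈ q := hle (Ideal.mem_sup_left (Ideal.mem_span_singleton_self z))
    obtain ⟨q₀, hq₀, hq₀q⟩ := Ideal.exists_minimalPrimes_le (le_sup_right.trans hle)
    have hwq₀ : w ∈ q₀ := hq₀.1.2 (Ideal.subset_span ⟨0, by simp [hg]⟩)
    by_cases hpq : p ≤ q₀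
    · have hlt : p < q₀ := lt_of_le_of_ne hpq fun h => hwp (h ▸ hwq₀)
      have := hcov q₀ hq₀.1.1 hlt
      exact hqm (this ▸ hq₀q)
    · have hzq₀ : z ∉ q₀ := hz q₀ (Or.inl (Or.inl (Or.inr ⟨hq₀, hpq⟩)))
      refine not_lt_lt_of_principal (w := z₁) hq₀.1.1 hq (fun q' hq' h0 h1 => ?_)
        (lt_of_le_of_ne hq₀q fun h => hzq₀ (h ▸ hzq)) hqm' hz₁m
      exact eq_maximalIdeal_of_le_radical hq' hmg
        (sup_le ((Ideal.span_singleton_le_iff_mem _).2 h1) (hq₀.1.2.trans h0))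
  refine ⟨w, z, Z, e, hw, hzp, hZp, fun h => hz ⊥ (Or.inr rfl) (by simp [h]),
    fun q hq hpq => hz q (Or.inl (Or.inr ⟨hq, hpq⟩)), ?_, ?_⟩
  · rw [span_range_cons, span_range_cons, sup_left_comm, ← span_range_cons w Z]
    exact hprim
  · exact fun s n hn ρ hρ c hc => H z hzp (fun q hq => hz q (Or.inl (Or.inl (Or.inl hq))))
      (hprim hz₁m) s n hn ρ hρ c hc

/-- Elements `a` with `v ^ k * a ∈ (z ^ s, Z ^ n)` lie in the determinantal kernel of
`w ^ n, z ^ s, Z ^ n`. -/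
lemma mem_detKer_cons_cons [IsLocalRing R] {r : ℕ} {p : Ideal R} (hple : p ≤ maximalIdeal R)
    {w z v : R} {Z : Fin r → R}
    (hm : maximalIdeal R ≤ (Ideal.span (Set.range (Fin.cons w
        (Fin.cons z Z : Fin (r + 1) → R) : Fin (r + 1 + 1) → R))).radical)
    (hpv : p ≤ (Ideal.span {v} ⊔ Ideal.span
      (Set.range (Fin.cons z Z : Fin (r + 1) → R))).radical)
    {s n k : ℕ} {a : R} (ha : v ^ k * a ∈ Ideal.span {z ^ s} ⊔ powSpan Z n) :
    a ∈ detKer p (Fin.cons (w ^ n) (Fin.cons (z ^ s) fun i => Z i ^ n : Fin (r + 1) → R) :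
      Fin (r + 1 + 1) → R) := by
  refine mem_detKer_cons (v := v) (s := k) ?_ ?_
  · rw [span_range_cons]; exact ha
  · refine le_radical_of_forall_isPrime fun q hq hle => ?_
    rw [span_range_cons, span_range_cons] at hle
    have hz : z ∈ q := hq.mem_of_pow_mem s
      (hle (Ideal.mem_sup_right (Ideal.mem_sup_left (Ideal.mem_span_singleton_self _))))
    have hZ : ∀ i, Z i ∈ q := fun i => hq.mem_of_pow_mem n
      (hle (Ideal.mem_sup_right (Ideal.mem_sup_right (Ideal.subset_span ⟨i, rfl⟩))))
    have hzZ : Ideal.span (Set.range (Fin.cons z Z : Fin (r + 1) → R)) ≤ q := by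
      rw [span_range_cons]
      refine sup_le ((Ideal.span_singleton_le_iff_mem _).2 hz) (Ideal.span_le.2 ?_)
      rintro _ ⟨i, rfl⟩; exact hZ i
    rcases hq.mem_or_mem (hle (Ideal.mem_sup_left (Ideal.mem_span_singleton_self _))) with h | h
    · exact hpv.trans (hq.radical_le_iff.2 (sup_le ((Ideal.span_singleton_le_iff_mem _).2
        (hq.mem_of_pow_mem k h)) hzZ))
    · refine hple.trans (hm.trans (hq.radical_le_iff.2 ?_))
      rw [span_range_cons]
      exact sup_le ((Ideal.span_singleton_le_iff_mem _).2 (hq.mem_of_pow_mem n h)) hzZ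

/-- If, for every `j`, some `σ ∉ p` multiplies `b` into `p ^ j`, then `b = 0`. -/
lemma eq_zero_of_forall_exists_mul_mem_pow [IsNoetherianRing R] [IsDomain R] {p : Ideal R}
    (hp : p.IsPrime) {b : R} (h : ∀ j : ℕ, ∃ σ, σ ∉ p ∧ σ * b ∈ p ^ j) : b = 0 := by
  let L := Localization.AtPrime p
  have hinj : Function.Injective (algebraMap R L) :=
    IsLocalization.injective L p.primeCompl_le_nonZeroDivisors
  have : IsNoetherianRing L := IsLocalization.isNoetherianRing p.primeCompl L inferInstance
  apply hinj
  rw [map_zero]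
  have hI : algebraMap R L b ∈ (⨅ i : ℕ, maximalIdeal L ^ i : Ideal L) := by
    rw [Ideal.mem_iInf]
    intro j
    obtain ⟨σ, hσ, hσb⟩ := h j
    have hu : IsUnit (algebraMap R L σ) := IsLocalization.map_units L (⟨σ, hσ⟩ : p.primeCompl)
    rw [← Ideal.unit_mul_mem_iff_mem _ hu, ← map_mul]
    have := Ideal.mem_map_of_mem (algebraMap R L) hσb
    rwa [Ideal.map_pow, Localization.AtPrime.map_eq_maximalIdeal] at this
  rwa [Ideal.iInf_pow_eq_bot_of_isLocalRing _ (Ideal.IsPrime.ne_top'), Ideal.mem_bot] at hI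

end

/-! ### Nonvanishing of the determinantal kernel -/

section
universe u

/-- The element `b` detects the determinantal kernel of `p`: for some `r + 1` elements `x`
generating an ideal primary to the maximal ideal there is a class `a` of `R/(x)^lim` that is killed
by all determinantal maps to sequences inside `p`, while `b * a ∉ (x)^lim`. -/
def DetectsDetKer (D : Type u) [CommRing D] [IsLocalRing D] (r : ℕ) (p : Ideal D) (b : D) : Prop :=
  ∃ (x : Fin (r + 1) → D) (a : D), (∀ i, x i ∈ maximalIdeal D) ∧
    maximalIdeal D ≤ (Ideal.span (Set.range x)).radical ∧ a ∈ detKer p x ∧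
    b * a ∉ limitClosure (M := D) x

/-- Here `p = 0`: every class is killed by the determinantal maps into `p`, and the class of `b`
does not vanish modulo the limit closure of a high power of a parameter. -/
lemma detectsDetKer_zero {D : Type u} [CommRing D] [IsNoetherianRing D] [IsLocalRing D]
    [IsDomain D] {p : Ideal D} (hp : p.IsPrime) (hpm : p ≠ maximalIdeal D)
    (hcov : ∀ q : Ideal D, q.IsPrime → p < q → q = maximalIdeal D)
    (hdim : ringKrullDim D ≤ (0 + 1 : ℕ)) {b : D} (hb : b ≠ 0) : DetectsDetKer D 0 p b := by
  have hplt : p < maximalIdeal D := lt_of_le_of_ne (le_maximalIdeal hp.ne_top) hpm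
  have hpb : p = ⊥ := by
    by_contra hpb
    have h1 : (maximalIdeal D).height ≤ (0 + 1 : ℕ) := by
      rw [← maximalIdeal_height_eq_ringKrullDim] at hdim
      exact_mod_cast hdim
    have h2 := Ideal.height_add_one_le_of_lt_of_isPrime (bot_lt_iff_ne_bot.2 hpb)
    have h3 := (Ideal.height_add_one_le_of_lt_of_isPrime hplt).trans h1
    have h4 : p.height ≤ 0 := (ENat.add_le_add_iff_right (by simp)).1 h3
    have h5 : (1 : ℕ∞) ≤ 0 := le_trans (le_trans le_add_self h2) h4
    norm_num at h5
  subst hpb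
  obtain ⟨w, hw, hw0⟩ := SetLike.exists_of_lt hplt
  have hw0 : w ≠ 0 := by simpa using hw0
  obtain ⟨n, hn, hbn⟩ := exists_notMem_limitClosure_pow hw
    (a := b) fun N => mul_ne_zero (pow_ne_zero N hw0) hb
  refine ⟨fun _ => w ^ n, 1, fun _ => Ideal.pow_mem_of_mem _ hw n hn, ?_, ?_, by rwa [mul_one]⟩
  · refine le_radical_of_forall_isPrime fun q hq hle => ?_
    have hwq : w ∈ q := hq.mem_of_pow_mem n (hle (Ideal.subset_span ⟨0, rfl⟩))
    refine (hcov q hq (bot_lt_iff_ne_bot.2 fun h => hw0 ?_)).ge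
    simpa [h] using hwq
  · have := mem_detKer_cons (p := (⊥ : Ideal D)) (W := w ^ n) (v := 0) (s := 1)
      (Z := (Fin.elim0 : Fin 0 → D)) (a := 1) (by simp) bot_le
    convert this using 2
    funext i
    fin_cases i
    rfl

/-- The two-dimensional case. With coordinates `w, z` and `z` generic, `u ^ s` lies in the
determinantal kernel of `w ^ n, z ^ s` for a fixed `u ∉ p`. If its multiples by `b` all vanished, then
`z ^ e * b * u ^ s` would be `w`-power torsion modulo `z ^ s`, which puts a multiple of `b` by an
element outside `p` into arbitrarily high powers of `p`; hence `b = 0` by Krull's theorem. -/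
lemma detectsDetKer_one {D : Type u} [CommRing D] [IsNoetherianRing D] [IsLocalRing D]
    [IsDomain D] {p : Ideal D} (hp : p.IsPrime) (hpm : p ≠ maximalIdeal D)
    (hcov : ∀ q : Ideal D, q.IsPrime → p < q → q = maximalIdeal D)
    (hdim : ringKrullDim D ≤ (0 + 1 + 1 : ℕ)) (hr : ((0 + 1 : ℕ) : ℕ∞) ≤ p.height)
    {b : D} (hb : b ≠ 0) : DetectsDetKer D (0 + 1) p b := by
  by_contra hcon
  obtain ⟨w, z, Z, e, hw, hzp, hZp, hz0, -, hm, H⟩ :=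
    exists_generic_coordinates hp hpm hcov hdim hr b
  have hple : p ≤ maximalIdeal D := le_maximalIdeal hp.ne_top
  obtain ⟨hwp, v, hvp, hpv, u, hu, c, huv⟩ := exists_adapted hp hpm hcov hw
    (Z := Fin.cons z Z) (fun i => by
      refine Fin.cases ?_ (fun i => ?_) i
      · simpa using hzp
      · simpa using hZp i) hm
  rw [span_range_cons, Set.range_eq_empty, Ideal.span_empty, sup_bot_eq] at huv
  refine hb (eq_zero_of_forall_exists_mul_mem_pow hp fun j => ?_)
  -- cancelling `z ^ e` from `z ^ s` has to leave at least `z ^ j`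
  set s := e + j + 1 with hs
  have hloc : IsLocalRing (D ⧸ Ideal.span {z ^ s}) := by
    have : Nontrivial (D ⧸ Ideal.span {z ^ s}) := Ideal.Quotient.nontrivial_iff.2 fun h => by
      have : Ideal.span {z ^ s} ≤ p := (Ideal.span_singleton_le_iff_mem _).2
        (Ideal.pow_mem_of_mem _ hzp _ (by omega))
      exact hp.ne_top (top_le_iff.1 (h ▸ this))
    exact IsLocalRing.of_surjective' _ Ideal.Quotient.mk_surjective
  have hkey : ∀ n, 0 < n → Ideal.Quotient.mk (Ideal.span {z ^ s}) (z ^ e * (b * u ^ s)) ∈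
      limitClosure (M := D ⧸ Ideal.span {z ^ s})
        fun _ : Fin 1 => Ideal.Quotient.mk (Ideal.span {z ^ s}) w ^ n := by
    intro n hn
    have h1 : u ^ s ∈ detKer p (Fin.cons (w ^ n) (Fin.cons (z ^ s) fun i => Z i ^ n :
        Fin (0 + 1) → D) : Fin (0 + 1 + 1) → D) := by
      refine mem_detKer_cons_cons (k := c * s) hple hm hpv (Ideal.mem_sup_left ?_)
      rw [pow_mul, ← mul_pow, mul_comm, Ideal.mem_span_singleton]
      exact pow_dvd_pow_of_dvd (Ideal.mem_span_singleton.1 huv) s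
    have h2 : b * u ^ s ∈ limitClosure (M := D) (Fin.cons (w ^ n) (Fin.cons (z ^ s)
        fun i => Z i ^ n : Fin (0 + 1) → D) : Fin (0 + 1 + 1) → D) := by
      by_contra h2
      refine hcon ⟨_, _, ?_, ?_, h1, h2⟩
      · intro i
        refine Fin.cases ?_ (fun i => Fin.cases ?_ (fun i => i.elim0) i) i
        · simpa using Ideal.pow_mem_of_mem _ hw n hn
        · simpa using Ideal.pow_mem_of_mem _ (hple hzp) s (by omega)
      · refine hm.trans (Ideal.radical_le_radical_iff.2 (Ideal.span_le.2 ?_))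
        rintro _ ⟨i, rfl⟩
        refine Fin.cases ?_ (fun i => Fin.cases ?_ (fun i => i.elim0) i) i
        · exact ⟨n, Ideal.subset_span ⟨0, by simp⟩⟩
        · exact ⟨s, Ideal.subset_span ⟨1, by simp⟩⟩
    rw [mem_limitClosure_cons_cons] at h2
    have h3 := H s n hn (b * u ^ s) (by rwa [cons_pow]) (z ^ e) (Ideal.pow_mem_pow hzp e)
    convert h3 using 2
    funext i
    fin_cases i
    rfl
  obtain ⟨N, hN⟩ : ∃ N, Ideal.Quotient.mk (Ideal.span {z ^ s}) w ^ N *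
      Ideal.Quotient.mk (Ideal.span {z ^ s}) (z ^ e * (b * u ^ s)) = 0 := by
    by_contra! hne
    obtain ⟨n, hn, h⟩ := exists_notMem_limitClosure_pow
      (w := Ideal.Quotient.mk (Ideal.span {z ^ s}) w) (by
        rw [mem_maximalIdeal, mem_nonunits_iff]
        intro hun
        have := IsLocalHom.of_surjective _ (Ideal.Quotient.mk_surjective (I := Ideal.span {z ^ s}))
        exact (mem_nonunits_iff.1 ((mem_maximalIdeal w).1 hw)) (isUnit_of_map_unit _ _ hun)) hne
    exact h (hkey n hn)
  rw [← map_pow, ← map_mul, Ideal.Quotient.eq_zero_iff_mem, Ideal.mem_span_singleton] at hN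
  refine ⟨w ^ N * u ^ s, ?_, ?_⟩
  · intro h
    rcases hp.mem_or_mem h with h | h
    · exact hwp (hp.mem_of_pow_mem _ h)
    · exact hu (hp.mem_of_pow_mem _ h)
  · have h4 : z ^ (j + 1) ∣ w ^ N * u ^ s * b := by
      refine (mul_dvd_mul_iff_left (pow_ne_zero e hz0)).1 ?_
      rw [← pow_add, ← add_assoc]
      convert hN using 1
      ring
    exact Ideal.mem_of_dvd _ ((pow_dvd_pow z j.le_succ).trans h4) (Ideal.pow_mem_pow hzp j)

end

section
universe u

lemma map_ne_maximalIdeal {R S : Type*} [CommRing R] [IsLocalRing R] [CommRing S] [IsLocalRing S]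
    {f : R →+* S} (hf : Function.Surjective f) {p : Ideal R} (hp : p ≠ maximalIdeal R)
    (hk : RingHom.ker f ≤ p) : p.map f ≠ maximalIdeal S := by
  intro h
  have h1 := congrArg (Ideal.comap f) h
  have : IsLocalHom f := IsLocalHom.of_surjective f hf
  rw [Ideal.comap_map_of_surjective' _ hf, sup_eq_left.2 hk] at h1
  exact hp (h1.trans (((local_hom_TFAE f).out 0 4).1 this))

lemma map_maximalIdeal_of_surjective {R S : Type*} [CommRing R] [IsLocalRing R] [CommRing S]
    [IsLocalRing S] {f : R →+* S} (hf : Function.Surjective f) :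
    (maximalIdeal R).map f = maximalIdeal S := by
  have : IsLocalHom f := IsLocalHom.of_surjective f hf
  have h2 := ((local_hom_TFAE f).out 0 4).1 this
  rw [← h2, Ideal.map_comap_of_surjective f hf]

lemma covers_map {R S : Type*} [CommRing R] [IsLocalRing R] [CommRing S]
    [IsLocalRing S] {f : R →+* S} (hf : Function.Surjective f) {p : Ideal R}
    (hcov : ∀ q : Ideal R, q.IsPrime → p < q → q = maximalIdeal R) :
    ∀ q : Ideal S, q.IsPrime → p.map f < q → q = maximalIdeal S := by
  intro q hq hlt
  have h1 : q.comap f = maximalIdeal R := by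
    refine hcov _ (hq.comap f) (lt_of_le_of_ne (Ideal.map_le_iff_le_comap.1 hlt.le) fun h => ?_)
    rw [h, Ideal.map_comap_of_surjective f hf] at hlt
    exact hlt.ne rfl
  rw [← map_maximalIdeal_of_surjective hf, ← h1, Ideal.map_comap_of_surjective f hf]

/-- The dimension of a local ring exceeds the height of any prime other than the maximal ideal. -/
lemma height_lt_of_ringKrullDim_le {R : Type*} [CommRing R] [IsLocalRing R] [IsNoetherianRing R]
    {p : Ideal R} (hp : p.IsPrime) (hpm : p ≠ maximalIdeal R) {n : ℕ}
    (hdim : ringKrullDim R ≤ n) : p.height < n := by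
  rw [← maximalIdeal_height_eq_ringKrullDim] at hdim
  have h1 : (maximalIdeal R).height ≤ n := by exact_mod_cast hdim
  have h2 := (Ideal.height_add_one_le_of_lt_of_isPrime
    (lt_of_le_of_ne (le_maximalIdeal hp.ne_top) hpm)).trans h1
  exact (ENat.add_one_le_iff (ne_top_of_le_ne_top (by simp) (le_self_add.trans h2))).1 h2

/-- The inductive step, in dimension at least three. For a generic `z ∈ p` the image of `b` is nonzero
in the quotient `S` of `D/(z)` by a suitable minimal prime. The induction hypothesis is applied in `S`
to `q₀ ^ e * b` with `q₀ ∈ p` nonzero in `S`; the class found there is lifted to `D/(z)`, and the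
factor `q₀ ^ e ∈ p ^ e` compensates for passing from limit closures in `D` to limit closures modulo
`z`. -/
lemma detectsDetKer_succ {D : Type u} [CommRing D] [IsNoetherianRing D] [IsLocalRing D]
    [IsDomain D] {r : ℕ} (hr1 : 1 ≤ r)
    (ih : ∀ (S : Type u) [CommRing S] [IsNoetherianRing S] [IsLocalRing S] [IsDomain S]
      (p : Ideal S), p.IsPrime → p ≠ maximalIdeal S →
      (∀ q : Ideal S, q.IsPrime → p < q → q = maximalIdeal S) →
      ringKrullDim S ≤ (r + 1 : ℕ) → (r : ℕ∞) ≤ p.height → ∀ b : S, b ≠ 0 → DetectsDetKer S r p b)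
    {p : Ideal D} (hp : p.IsPrime) (hpm : p ≠ maximalIdeal D)
    (hcov : ∀ q : Ideal D, q.IsPrime → p < q → q = maximalIdeal D)
    (hdim : ringKrullDim D ≤ (r + 1 + 1 : ℕ)) (hr : ((r + 1 : ℕ) : ℕ∞) ≤ p.height)
    {b : D} (hb : b ≠ 0) : DetectsDetKer D (r + 1) p b := by
  by_contra hcon
  obtain ⟨w, z, Z, e, hw, hzp, hZp, hz0, hzb, hm, H⟩ :=
    exists_generic_coordinates hp hpm hcov hdim hr b
  have hple : p ≤ maximalIdeal D := le_maximalIdeal hp.ne_top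
  obtain ⟨hwp, v, hvp, hpv, u, hu, c, huv⟩ := exists_adapted hp hpm hcov hw
    (Z := Fin.cons z Z) (fun i => by
      refine Fin.cases ?_ (fun i => ?_) i
      · simpa using hzp
      · simpa using hZp i) hm
  have hwr := mem_radical_of_notMem hcov hw hu hpv
  let A := D ⧸ Ideal.span {z ^ 1}
  let π : D →+* A := Ideal.Quotient.mk (Ideal.span {z ^ 1})
  have hπ : Function.Surjective π := Ideal.Quotient.mk_surjective
  have hπz : π z = 0 := Ideal.Quotient.eq_zero_iff_mem.2 (by simp [Ideal.mem_span_singleton_self])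
  have hzle : Ideal.span {z ^ 1} ≤ p := by simpa using hzp
  have hpA : (p.map π).IsPrime := isPrime_map_mk hp hzle
  have hAnt : Nontrivial A := Ideal.Quotient.nontrivial_iff.2 fun h =>
      hp.ne_top (top_le_iff.1 (h ▸ hzle))
  have hAloc : IsLocalRing A := IsLocalRing.of_surjective' π hπ
  have hhtA : (r : ℕ∞) ≤ (p.map π).height := by
    have h2 : p.height ≤ (p.map π).height + 1 :=
      Ideal.height_le_height_add_one_of_mem (by simpa using hzp)
    have h3 : ((r : ℕ∞) + 1) ≤ (p.map π).height + 1 := by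
      refine le_trans ?_ h2
      exact_mod_cast hr
    exact (ENat.add_le_add_iff_right (by simp)).1 h3
  obtain ⟨P, hP, hPp, hPht⟩ := exists_minimalPrimes_height_le r hpA hhtA
  have hPprime : P.IsPrime := hP.1.1
  let S := A ⧸ P
  let τ : A →+* S := Ideal.Quotient.mk P
  have hτ : Function.Surjective τ := Ideal.Quotient.mk_surjective
  have hSloc : IsLocalRing S := IsLocalRing.of_surjective' τ hτ
  have hSdom : IsDomain S := Ideal.Quotient.isDomain P
  let f : D →+* S := τ.comp π
  have hf : Function.Surjective f := hτ.comp hπ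
  have hpS : ((p.map π).map τ).IsPrime := isPrime_map_mk hpA hPp
  have hpmA : p.map π ≠ maximalIdeal A := map_ne_maximalIdeal hπ hpm (by
    rw [Ideal.mk_ker]; exact hzle)
  have hpmS : (p.map π).map τ ≠ maximalIdeal S := map_ne_maximalIdeal hτ hpmA (by
    rw [Ideal.mk_ker]; exact hPp)
  have hcovS := covers_map hτ (covers_map hπ hcov)
  have hdimS : ringKrullDim S ≤ (r + 1 : ℕ) :=
    ringKrullDim_le_of_map_eq_zero hf hz0 (by simp [f, hπz]) hdim
  have hltS := fun n hn => height_lt_of_ringKrullDim_le (n := n) hpS hpmS hn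
  -- `p` is not contained in the kernel of `f`, because its image has height at least `r ≥ 1`
  have hker : ¬ p ≤ P.comap π := by
    intro h
    have h1 : (p.map π).map τ = ⊥ := by
      rw [eq_bot_iff, Ideal.map_le_iff_le_comap, ← RingHom.ker, Ideal.mk_ker,
        Ideal.map_le_iff_le_comap]
      exact h
    have h2 : (r : ℕ∞) ≤ ((p.map π).map τ).height := hPht
    rw [h1] at h2
    have : Ideal.height (⊥ : Ideal S) = 0 := by simp
    rw [this] at h2
    have : r ≤ 0 := by exact_mod_cast h2
    omega
  -- otherwise `S` would be a quotient by two independent elements `b` and `z`, hence too small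
  have hfb : f b ≠ 0 := by
    intro hfb
    have hbP : Ideal.span {b} ≤ P.comap π := by
      rw [Ideal.span_singleton_le_iff_mem, Ideal.mem_comap]
      exact Ideal.Quotient.eq_zero_iff_mem.1 hfb
    have : (P.comap π).IsPrime := hPprime.comap π
    obtain ⟨B, hB, hBP⟩ := Ideal.exists_minimalPrimes_le hbP
    have hBprime : B.IsPrime := hB.1.1
    have hzB : z ∉ B := hzb B hB fun h => hker (h.trans hBP)
    have hBdom : IsDomain (D ⧸ B) := Ideal.Quotient.isDomain B
    have hd1 : ringKrullDim (D ⧸ B) ≤ (r + 1 : ℕ) :=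
      ringKrullDim_le_of_map_eq_zero (Ideal.Quotient.mk_surjective (I := B)) hb
        (Ideal.Quotient.eq_zero_iff_mem.2 (hB.1.2 (Ideal.mem_span_singleton_self b))) hdim
    let φ : D ⧸ B →+* S := Ideal.Quotient.lift B f fun a ha =>
      Ideal.Quotient.eq_zero_iff_mem.2 (hBP ha)
    have hφ : Function.Surjective φ := Ideal.Quotient.lift_surjective_of_surjective _ _ hf
    have hd2 : ringKrullDim S ≤ r :=
      ringKrullDim_le_of_map_eq_zero hφ (x := Ideal.Quotient.mk B z)
        (fun h => hzB (Ideal.Quotient.eq_zero_iff_mem.1 h)) (by simp [φ, f, hπz]) hd1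
    exact absurd (hltS r hd2) (not_lt.2 hPht)
  obtain ⟨q₀, hq₀, hq₀P⟩ := SetLike.not_le_iff_exists.1 hker
  have hfq : f q₀ ≠ 0 := fun h =>
    hq₀P ((Ideal.Quotient.eq_zero_iff_mem (I := P) (a := π q₀)).1 h)
  obtain ⟨x, a, hxm, hxr, ha, hba⟩ := ih S _ hpS hpmS hcovS hdimS hPht (f (q₀ ^ e * b)) (by
    rw [map_mul, map_pow]; exact mul_ne_zero (pow_ne_zero _ hfq) hfb)
  -- the images of the coordinates in `A`
  have hmapspan : ∀ w' : D, (Ideal.span (Set.range (Fin.cons w' (Fin.cons z Z : Fin (r + 1) → D) :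
      Fin (r + 1 + 1) → D))).map π =
      Ideal.span (Set.range (Fin.cons (π w') fun i => π (Z i) : Fin (r + 1) → A)) := by
    intro w'
    rw [span_range_cons, span_range_cons, span_range_cons, Ideal.map_sup, Ideal.map_sup,
      Ideal.map_span, Ideal.map_span, Set.image_singleton, Set.image_singleton, hπz,
      map_span_range, Ideal.span_singleton_zero, bot_sup_eq]
  have hmapspan' : (Ideal.span (Set.range (Fin.cons z Z : Fin (r + 1) → D))).map π =
      Ideal.span (Set.range fun i => π (Z i)) := by
    rw [span_range_cons, Ideal.map_sup, Ideal.map_span, Set.image_singleton, hπz,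
      map_span_range, Ideal.span_singleton_zero, bot_sup_eq]
  have hmA : maximalIdeal A ≤ (Ideal.span
      (Set.range (Fin.cons (π w) fun i => π (Z i) : Fin (r + 1) → A))).radical := by
    rw [← map_maximalIdeal_of_surjective hπ, ← hmapspan, Ideal.map_le_iff_le_comap]
    exact fun a ha => map_mem_radical_map π (hm ha)
  have hmS : maximalIdeal S ≤ ((Ideal.span
      (Set.range (Fin.cons (π w) fun i => π (Z i) : Fin (r + 1) → A))).map τ).radical := by
    rw [← map_maximalIdeal_of_surjective hτ, Ideal.map_le_iff_le_comap]
    exact fun a ha => map_mem_radical_map τ (hmA ha)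
  have hπm : ∀ a ∈ maximalIdeal D, π a ∈ maximalIdeal A := fun a ha => by
    rw [← map_maximalIdeal_of_surjective hπ]; exact Ideal.mem_map_of_mem _ ha
  have hτm : ∀ a ∈ maximalIdeal A, τ a ∈ maximalIdeal S := fun a ha => by
    rw [← map_maximalIdeal_of_surjective hτ]; exact Ideal.mem_map_of_mem _ ha
  obtain ⟨N, b₀, s, hN, hb₀, hb₀'⟩ := exists_lift_detKer (f := τ) hτ (p := (p.map π).map τ)
    (w := π w) (v := π v) (u := π u) (c := c) (Z := fun i => π (Z i))
    (fun i => Ideal.mem_map_of_mem _ (Ideal.mem_map_of_mem _ (hZp i)))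
    (Ideal.mem_map_of_mem _ (Ideal.mem_map_of_mem _ hvp))
    (hmA (hπm v (hple hvp)))
    (by rw [← map_pow, ← map_mul, ← hmapspan']; exact Ideal.mem_map_of_mem _ huv)
    (by
      have := map_mem_radical_map π hwr
      rwa [Ideal.map_sup, Ideal.map_sup, Ideal.map_span, Ideal.map_span, Set.image_singleton,
        Set.image_singleton, hmapspan'] at this)
    (fun i => hmS (hxm i))
    (fun i => hxr (hτm _ (by
      refine Fin.cases ?_ (fun i => ?_) i
      · simpa using hπm w hw
      · simpa using hπm _ (hple (hZp i)))))
    (β := π (q₀ ^ e * b)) ha hba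
  obtain ⟨a₀, rfl⟩ := hπ b₀
  have ha₀ : v ^ s * a₀ ∈ Ideal.span {z ^ 1} ⊔ powSpan Z N := by
    have h1 : π (v ^ s * a₀) ∈ (powSpan Z N).map π := by
      rw [map_powSpan, map_mul, map_pow]; exact hb₀
    rw [← Ideal.mem_comap, Ideal.comap_map_of_surjective' _ hπ, Ideal.mk_ker, sup_comm] at h1
    exact h1
  have h1 := mem_detKer_cons_cons hple hm hpv ha₀
  have h2 : b * a₀ ∈ limitClosure (M := D) (Fin.cons (w ^ N) (Fin.cons (z ^ 1)
      fun i => Z i ^ N : Fin (r + 1) → D) : Fin (r + 1 + 1) → D) := by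
    by_contra h2
    refine hcon ⟨_, _, ?_, ?_, h1, h2⟩
    · intro i
      refine Fin.cases ?_ (fun i => Fin.cases ?_ (fun i => ?_) i) i
      · simpa using Ideal.pow_mem_of_mem _ hw N hN
      · simpa using hple hzp
      · simpa using Ideal.pow_mem_of_mem _ (hple (hZp i)) N hN
    · refine hm.trans (Ideal.radical_le_radical_iff.2 (Ideal.span_le.2 ?_))
      rintro _ ⟨i, rfl⟩
      refine Fin.cases ?_ (fun i => Fin.cases ?_ (fun i => ?_) i) i
      · exact ⟨N, Ideal.subset_span ⟨0, by simp⟩⟩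
      · exact ⟨1, Ideal.subset_span ⟨1, by simp⟩⟩
      · exact ⟨N, Ideal.subset_span ⟨i.succ.succ, by simp⟩⟩
  rw [mem_limitClosure_cons_cons] at h2
  have h3 := H 1 N hN (b * a₀) (by rwa [cons_pow]) (q₀ ^ e) (Ideal.pow_mem_pow hq₀ e)
  apply hb₀'
  rw [← map_cons, ← map_mul, mul_assoc]
  exact h3

/-- For a domain `D` of dimension at most `r + 1` and a prime `p` of height at least `r` directly
below the maximal ideal, every nonzero `b` detects the determinantal kernel of `p`. -/
theorem detectsDetKer (r : ℕ) : ∀ (D : Type u) [CommRing D] [IsNoetherianRing D] [IsLocalRing D]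
    [IsDomain D] (p : Ideal D), p.IsPrime → p ≠ maximalIdeal D →
    (∀ q : Ideal D, q.IsPrime → p < q → q = maximalIdeal D) →
    ringKrullDim D ≤ (r + 1 : ℕ) → (r : ℕ∞) ≤ p.height → ∀ b : D, b ≠ 0 →
    DetectsDetKer D r p b := by
  induction r with
  | zero => exact fun D _ _ _ _ p hp hpm hcov hdim _ b hb =>
      detectsDetKer_zero hp hpm hcov hdim hb
  | succ r ih =>
    intro D _ _ _ _ p hp hpm hcov hdim hr b hb
    rcases Nat.eq_zero_or_pos r with rfl | hr1
    · exact detectsDetKer_one hp hpm hcov hdim hr hb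
    · exact detectsDetKer_succ hr1 ih hp hpm hcov hdim hr hb

end

/-! ### Chains of primes in catenary rings -/

section

/-- Any strict series refines to a saturated one with the same ends. -/
lemma exists_covBy_refinement {α : Type*} [PartialOrder α] [WellFoundedLT α] [WellFoundedGT α]
    (s : LTSeries α) : ∃ c : RelSeries {(a, b) : α × α | a ⋖ b}, c.head = s.head ∧
      c.last = s.last ∧ s.length ≤ c.length := by
  obtain ⟨t, i, hi, h0, h1⟩ := s.exists_relSeries_covBy
  refine ⟨t, ?_, ?_, ?_⟩
  · change t 0 = s 0
    rw [← hi, ← h0]; rfl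
  · change t (Fin.last _) = s (Fin.last _)
    rw [← hi, ← h1]; rfl
  · have := Fintype.card_le_of_injective i i.injective
    simpa using this

/-- A saturated series regarded as a strict series. -/
def covByToLTSeries {α : Type*} [Preorder α] (c : RelSeries {(a, b) : α × α | a ⋖ b}) :
    LTSeries α :=
  ⟨c.length, c, fun i => (c.step i).lt⟩

/-- In a catenary equidimensional local ring, a prime directly below the maximal ideal has
height one less than the dimension modulo each minimal prime it contains. -/
lemma le_height_map_mk_of_catenary {R : Type*} [CommRing R] [IsNoetherianRing R] [IsLocalRing R]
    {r : ℕ} (hcat : IsCatenaryRing R) {P p : Ideal R} (hP : P.IsPrime)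
    (hdim : ringKrullDim (R ⧸ P) = (r + 1 : ℕ)) (hp : p.IsPrime) (hPp : P ≤ p)
    (hpm : p ≠ maximalIdeal R) (hcov : ∀ q : Ideal R, q.IsPrime → p < q → q = maximalIdeal R) :
    (r : ℕ∞) ≤ (p.map (Ideal.Quotient.mk P)).height ∧ (r : ℕ∞) ≤ p.height := by
  have hsurj : Function.Surjective (Ideal.Quotient.mk P) := Ideal.Quotient.mk_surjective
  have hdom : IsDomain (R ⧸ P) := Ideal.Quotient.isDomain P
  have hloc : IsLocalRing (R ⧸ P) := IsLocalRing.of_surjective' _ hsurj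
  have hp' : (p.map (Ideal.Quotient.mk P)).IsPrime := isPrime_map_mk hp hPp
  let ι : PrimeSpectrum (R ⧸ P) → PrimeSpectrum R := PrimeSpectrum.comap (Ideal.Quotient.mk P)
  have hle : ∀ a b, ι a ≤ ι b ↔ a ≤ b := fun a b =>
    Ideal.comap_le_comap_iff_of_surjective _ hsurj a.asIdeal b.asIdeal
  let E : PrimeSpectrum (R ⧸ P) ↪o PrimeSpectrum R := OrderEmbedding.ofMapLEIff ι hle
  have hrange : (Set.range E).OrdConnected := by
    refine ⟨?_⟩
    rintro _ ⟨a, rfl⟩ _ - c ⟨hac, -⟩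
    have hPc : P ≤ c.asIdeal := by
      refine le_trans ?_ (show (E a).asIdeal ≤ c.asIdeal from hac)
      exact fun x hx => Ideal.mem_comap.2 (by
        rw [Ideal.Quotient.eq_zero_iff_mem.2 hx]; exact zero_mem _)
    refine ⟨⟨c.asIdeal.map (Ideal.Quotient.mk P), isPrime_map_mk c.2 hPc⟩, PrimeSpectrum.ext ?_⟩
    change Ideal.comap _ (Ideal.map _ _) = _
    rw [Ideal.comap_map_of_surjective' _ hsurj, Ideal.mk_ker, sup_eq_left.2 hPc]
  let p₁ : PrimeSpectrum (R ⧸ P) := ⟨_, hp'⟩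
  let m₁ : PrimeSpectrum (R ⧸ P) := ⟨maximalIdeal (R ⧸ P), inferInstance⟩
  let o₁ : PrimeSpectrum (R ⧸ P) := ⟨⊥, Ideal.isPrime_bot⟩
  have ho : ∀ q : PrimeSpectrum (R ⧸ P), o₁ ≤ q := fun q => bot_le (a := q.asIdeal)
  have hpm₁ : p₁ ⋖ m₁ := by
    refine ⟨lt_of_le_of_ne (le_maximalIdeal hp'.ne_top) fun h =>
      map_ne_maximalIdeal hsurj hpm (by rwa [Ideal.mk_ker])
        (congrArg PrimeSpectrum.asIdeal h), fun q h1 h2 => ?_⟩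
    exact h2.ne (PrimeSpectrum.ext (covers_map hsurj hcov q.asIdeal q.2 h1))
  have hfd : FiniteDimensionalOrder (PrimeSpectrum (R ⧸ P)) :=
    (inferInstance : FiniteRingKrullDim (R ⧸ P))
  have hWF : WellFoundedLT (PrimeSpectrum (R ⧸ P)) :=
    ⟨SetRel.IsWellFounded.of_finiteDimensional {(a, b) : PrimeSpectrum (R ⧸ P) × _ | a < b}⟩
  have hWF' : WellFoundedGT (PrimeSpectrum (R ⧸ P)) :=
    ⟨SetRel.IsWellFounded.inv_of_finiteDimensional {(a, b) : PrimeSpectrum (R ⧸ P) × _ | a < b}⟩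
  -- a saturated chain from `0` to `p`
  obtain ⟨s₁, hs₁, hs₁'⟩ : ∃ s : LTSeries (PrimeSpectrum (R ⧸ P)), s.head = o₁ ∧ s.last = p₁ := by
    rcases (ho p₁).eq_or_lt with h | h
    · exact ⟨RelSeries.singleton _ o₁, rfl, h⟩
    · exact ⟨RelSeries.snoc (RelSeries.singleton _ o₁) p₁ h, RelSeries.head_snoc _ _ _,
        RelSeries.last_snoc _ _ _⟩
  obtain ⟨c₁, hc₁, hc₁', -⟩ := exists_covBy_refinement s₁
  rw [hs₁'] at hc₁'
  rw [hs₁] at hc₁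
  -- a saturated chain from `0` to the maximal ideal of maximal length
  have hm₁ : ((r + 1 : ℕ) : ℕ∞) ≤ Order.height m₁ := by
    rw [← PrimeSpectrum.height_eq_orderHeight]
    have := maximalIdeal_height_eq_ringKrullDim (R := R ⧸ P)
    rw [hdim] at this
    exact_mod_cast this.ge
  obtain ⟨s₂, hs₂, hs₂'⟩ := Order.exists_series_of_le_height m₁ hm₁
  obtain ⟨s₃, hs₃, hs₃', hs₃''⟩ : ∃ s : LTSeries (PrimeSpectrum (R ⧸ P)), s.head = o₁ ∧
      s.last = m₁ ∧ r + 1 ≤ s.length := by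
    rcases (ho s₂.head).eq_or_lt with h | h
    · exact ⟨s₂, h.symm, hs₂, hs₂'.ge⟩
    · refine ⟨s₂.cons o₁ h, by simp, by simp [hs₂], by simp [hs₂']⟩
  obtain ⟨c₂, hc₂, hc₂', hlen⟩ := exists_covBy_refinement s₃
  rw [hs₃] at hc₂
  rw [hs₃'] at hc₂'
  let c₃ := c₁.snoc m₁ (by rw [hc₁']; exact hpm₁)
  have h₃ : c₃.head = o₁ := (RelSeries.head_snoc _ _ _).trans hc₁
  have h₃' : c₃.last = m₁ := RelSeries.last_snoc _ _ _
  have hfinal := hcat (E o₁) (E m₁) (E.monotone (ho m₁))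
    ((covByToLTSeries c₃).map E E.strictMono) ((covByToLTSeries c₂).map E E.strictMono)
    (congrArg E h₃) (congrArg E h₃') (congrArg E hc₂) (congrArg E hc₂')
    (fun i => (c₃.step i).image E hrange) (fun i => (c₂.step i).image E hrange)
  have hl : c₁.length + 1 = c₂.length := hfinal
  have hr : (r : ℕ∞) ≤ Order.height p₁ := by
    refine le_trans ?_ (Order.length_le_height (p := covByToLTSeries c₁) hc₁'.le)
    exact Nat.cast_le.2 (show r ≤ c₁.length by omega)
  have hrp : (r : ℕ∞) ≤ Order.height (E p₁) :=
    hr.trans (Order.height_le_height_apply_of_strictMono _ E.strictMono p₁)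
  rw [← PrimeSpectrum.height_eq_orderHeight] at hr hrp
  refine ⟨hr, ?_⟩
  have : (E p₁).asIdeal = p := by
    change Ideal.comap _ (Ideal.map _ _) = _
    rw [Ideal.comap_map_of_surjective' _ hsurj, Ideal.mk_ker, sup_eq_left.2 hPp]
  rwa [this] at hrp

end

/-! ### The uniform level -/

section
universe u
variable {R : Type u} [CommRing R]

lemma isNoetherian_of_isArtinian_of_smul_eq_zero [IsLocalRing R] {N : Type*} [AddCommGroup N]
    [Module R N] [IsArtinian R N] (h : ∀ y ∈ maximalIdeal R, ∀ a : N, y • a = 0) :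
    IsNoetherian R N := by
  have hT : Module.IsTorsionBySet R N (maximalIdeal R) := fun a y => h y y.2 a
  have hs : IsSemisimpleModule R N := by
    rw [← hT.isSemisimpleModule_iff]
    letI : Field (R ⧸ maximalIdeal R) := Ideal.Quotient.field _
    letI := hT.module
    infer_instance
  have hiff : IsArtinian R N ↔ IsNoetherian R N :=
    (IsSemisimpleModule.finite_tfae (R := R) (M := N)).out 2 1
  exact hiff.1 inferInstance

/-- The top local cohomology module has a finitely generated socle, so a single finite level
of fractions meets every nonzero cyclic submodule. -/
lemma exists_level [IsNoetherianRing R] [IsLocalRing R] {t : ℕ} {z : Fin t → R}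
    (hz : ∀ i, z i ∈ maximalIdeal R)
    (hzr : maximalIdeal R ≤ (Ideal.span (Set.range z)).radical) :
    ∃ (F : FracModel (∏ i, z i) (powSpan z)) (n₀ : ℕ), 0 < n₀ ∧
      ∀ θ : F.T, θ ≠ 0 → ∃ c a : R, c • θ = F.frac n₀ a ∧ c • θ ≠ 0 := by
  have hzr' : maximalIdeal R ≤ (Ideal.span {(0 : R)} ⊔ Ideal.span (Set.range z)).radical := by
    simpa using hzr
  obtain ⟨F, hF⟩ := exists_fracModel z 0 hz (zero_mem _) hzr'
  have htop : F.torsion 0 = ⊤ := by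
    rw [eq_top_iff]
    exact fun θ _ => ⟨1, by simp⟩
  have hT : IsArtinian R F.T := by
    rw [htop] at hF
    exact isArtinian_of_linearEquiv (Submodule.topEquiv (R := R) (M := F.T))
  let N : Submodule R F.T :=
    { carrier := {θ | ∀ y ∈ maximalIdeal R, y • θ = 0}
      add_mem' := fun ha hb y hy => by rw [smul_add, ha y hy, hb y hy, add_zero]
      zero_mem' := fun y _ => smul_zero y
      smul_mem' := fun c a ha y hy => by rw [smul_comm, ha y hy, smul_zero] }
  have hN : IsNoetherian R N := isNoetherian_of_isArtinian_of_smul_eq_zero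
    fun y hy a => Subtype.ext (a.2 y hy)
  let G : ℕ →o Submodule R N := ⟨fun n => (LinearMap.range (F.frac n)).comap N.subtype,
    monotone_nat_of_le_succ fun n a => by
      rintro ⟨b, hb⟩
      exact ⟨_, (F.frac_succ n b).symm.trans hb⟩⟩
  obtain ⟨k, hk⟩ := monotone_stabilizes_iff_noetherian.2 hN G
  refine ⟨F, k + 1, k.succ_pos, fun θ hθ => ?_⟩
  let J : Ideal R := LinearMap.ker (LinearMap.toSpanSingleton R _ θ)
  have hJ : ∀ y, y ∈ J ↔ y • θ = 0 := fun y => Iff.rfl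
  have hJr : maximalIdeal R ≤ J.radical := by
    intro y hy
    obtain ⟨j, hj⟩ := F.exists_pow_smul_eq_zero θ (I := Ideal.span {(0 : R)}) (by
      intro y hy
      exact ⟨1, by simp [show y = 0 by simpa using hy]⟩) (hzr' hy)
    exact ⟨j, hj⟩
  have hex := Ideal.exists_pow_le_of_le_radical_of_fg hJr (IsNoetherian.noetherian _)
  classical
  obtain ⟨j, hj⟩ : ∃ j, Nat.find hex = j + 1 := by
    refine Nat.exists_eq_succ_of_ne_zero fun h0 => hθ ?_
    have h1 := Nat.find_spec hex
    rw [h0, pow_zero, Ideal.one_eq_top] at h1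
    have : (1 : R) ∈ J := h1 trivial
    simpa [hJ] using this
  have h1 : ¬ maximalIdeal R ^ j ≤ J := Nat.find_min hex (by omega)
  have h2 : maximalIdeal R ^ (j + 1) ≤ J := hj ▸ Nat.find_spec hex
  obtain ⟨c, hc, hcJ⟩ := SetLike.not_le_iff_exists.1 h1
  have hcN : c • θ ∈ N := fun y hy => by
    rw [smul_smul, ← hJ]
    exact h2 (by rw [pow_succ']; exact Ideal.mul_mem_mul hy hc)
  obtain ⟨n, hn⟩ := F.surj_le (c • θ)
  obtain ⟨a, ha⟩ := hn (max n (k + 1)) (le_max_left _ _)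
  have h3 : (⟨c • θ, hcN⟩ : N) ∈ G (max n (k + 1)) := ⟨a, ha⟩
  rw [← hk _ (k.le_succ.trans (le_max_right _ _)), hk (k + 1) k.le_succ] at h3
  obtain ⟨b, hb⟩ := h3
  exact ⟨c, b, hb.symm, fun h => hcJ ((hJ c).2 h)⟩

lemma diagonal_mulVec_pow {t : ℕ} (z : Fin t → R) (n j : ℕ) :
    (Matrix.diagonal fun i => z i ^ j).mulVec (fun i => z i ^ n) = fun i => z i ^ (n + j) := by
  funext i; simp [Matrix.mulVec_diagonal, pow_add, mul_comm]

/-- A catenary equidimensional local ring of dimension `r + 1` detects the determinantal kernel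
of every prime directly below the maximal ideal. -/
lemma detectsDetKer_of_catenary [IsNoetherianRing R] [IsLocalRing R] {r : ℕ}
    (hdim : ringKrullDim R = (r + 1 : ℕ)) (hcat : IsCatenaryRing R)
    (hequi : IsEquidimensionalRing R) {p : Ideal R} (hp : p.IsPrime) (hpm : p ≠ maximalIdeal R)
    (hcov : ∀ q : Ideal R, q.IsPrime → p < q → q = maximalIdeal R) : DetectsDetKer R r p 1 := by
  obtain ⟨P, hP, hPp⟩ := Ideal.exists_minimalPrimes_le (bot_le (a := p))
  have hPprime : P.IsPrime := hP.1.1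
  have hdimP : ringKrullDim (R ⧸ P) = (r + 1 : ℕ) := (hequi P hP).trans hdim
  obtain ⟨hht, hht'⟩ := le_height_map_mk_of_catenary hcat hPprime hdimP hp hPp hpm hcov
  let τ : R →+* R ⧸ P := Ideal.Quotient.mk P
  have hτ : Function.Surjective τ := Ideal.Quotient.mk_surjective
  have hSloc : IsLocalRing (R ⧸ P) := IsLocalRing.of_surjective' τ hτ
  have hSdom : IsDomain (R ⧸ P) := Ideal.Quotient.isDomain P
  have hτm : ∀ a ∈ maximalIdeal R, τ a ∈ maximalIdeal (R ⧸ P) := fun a ha => by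
    rw [← map_maximalIdeal_of_surjective hτ]; exact Ideal.mem_map_of_mem _ ha
  obtain ⟨x, a, hxm, hxr, ha, hba⟩ := detectsDetKer r (R ⧸ P) (p.map τ) (isPrime_map_mk hp hPp)
    (map_ne_maximalIdeal hτ hpm (by rwa [Ideal.mk_ker])) (covers_map hτ hcov) hdimP.le hht 1
    one_ne_zero
  obtain ⟨w, Z, hw, hZ, hm⟩ := exists_cons_mem hp hpm hdim.le hht'
  have hple : p ≤ maximalIdeal R := le_maximalIdeal hp.ne_top
  obtain ⟨hwp, v, hvp, hpv, u, hu, c, huv⟩ := exists_adapted hp hpm hcov hw hZ hm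
  have hZm : ∀ i, (Fin.cons w Z : Fin (r + 1) → R) i ∈ maximalIdeal R := by
    intro i
    refine Fin.cases ?_ (fun i => ?_) i
    · simpa using hw
    · simpa using hple (hZ i)
  obtain ⟨N, b, s, hN, hb, hb'⟩ := exists_lift_detKer (f := τ) hτ (β := 1)
    (fun i => Ideal.mem_map_of_mem _ (hZ i)) (Ideal.mem_map_of_mem _ hvp)
    (hm (hple hvp)) huv (mem_radical_of_notMem hcov hw hu hpv)
    (x := x) (fun i => by
      have : maximalIdeal (R ⧸ P) ≤ ((Ideal.span
          (Set.range (Fin.cons w Z : Fin (r + 1) → R))).map τ).radical := by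
        rw [← map_maximalIdeal_of_surjective hτ, Ideal.map_le_iff_le_comap]
        exact fun a ha => map_mem_radical_map τ (hm ha)
      exact this (hxm i))
    (fun i => hxr (hτm _ (hZm i))) ha (by rwa [map_one])
  refine ⟨_, b, fun i => Ideal.pow_mem_of_mem _ (hZm i) N hN, ?_, ?_, hb'⟩
  · exact hm.trans (Ideal.radical_le_radical_iff.2 (Ideal.span_le.2 (by
      rintro _ ⟨i, rfl⟩
      exact ⟨N, Ideal.subset_span ⟨i, rfl⟩⟩)))
  · rw [cons_pow]
    refine mem_detKer_cons (v := v) (s := s) hb (le_radical_of_forall_isPrime fun q hq hle => ?_)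
    rw [span_range_cons] at hle
    have hZq : Ideal.span (Set.range Z) ≤ q := by
      refine Ideal.span_le.2 ?_
      rintro _ ⟨i, rfl⟩
      exact hq.mem_of_pow_mem N (hle (Ideal.mem_sup_right (Ideal.subset_span ⟨i, rfl⟩)))
    rcases hq.mem_or_mem (hle (Ideal.mem_sup_left (Ideal.mem_span_singleton_self _))) with h | h
    · exact hpv.trans (hq.radical_le_iff.2 (sup_le ((Ideal.span_singleton_le_iff_mem _).2
        (hq.mem_of_pow_mem s h)) hZq))
    · refine hple.trans (hm.trans (hq.radical_le_iff.2 ?_))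
      rw [span_range_cons]
      exact sup_le ((Ideal.span_singleton_le_iff_mem _).2 (hq.mem_of_pow_mem N h)) hZq

/-- A nonzero determinantal kernel is already visible at the level `n₀`. -/
lemma exists_mem_detKer_level [IsNoetherianRing R] [IsLocalRing R] {t : ℕ} {z : Fin t → R}
    (hz : ∀ i, z i ∈ maximalIdeal R)
    (hzr : maximalIdeal R ≤ (Ideal.span (Set.range z)).radical)
    {F : FracModel (∏ i, z i) (powSpan z)} {n₀ : ℕ} (hn₀ : 0 < n₀)
    (hF : ∀ θ : F.T, θ ≠ 0 → ∃ c a : R, c • θ = F.frac n₀ a ∧ c • θ ≠ 0) {p : Ideal R}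
    {x : Fin t → R} {a : R} (hx : ∀ i, x i ∈ maximalIdeal R)
    (hxr : maximalIdeal R ≤ (Ideal.span (Set.range x)).radical) (ha : a ∈ detKer p x)
    (hax : a ∉ limitClosure (M := R) x) :
    ∃ a₀ ∈ detKer p fun i => z i ^ n₀, a₀ ∉ limitClosure (M := R) fun i => z i ^ n₀ := by
  obtain ⟨N, hN⟩ := exists_uniform_pow fun i => hxr (hz i)
  obtain ⟨C, hC⟩ := exists_mulVec_eq hN
  have h1 := detKer_mulVec hC ha
  have h2 : C.det * a ∉ limitClosure (M := R) fun i => z i ^ (N + 1) := fun h =>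
    hax (mem_of_det_mul_mem_limitClosure hC (fun i => by
      refine (hzr.trans (Ideal.radical_le_radical_iff.2 (Ideal.span_le.2 ?_))) (hx i)
      rintro _ ⟨i, rfl⟩
      exact ⟨N + 1, Ideal.subset_span ⟨i, rfl⟩⟩) h)
  rw [← F.zero_iff_mem N.succ_pos] at h2
  obtain ⟨c, a₀, hc, hc0⟩ := hF _ h2
  refine ⟨a₀, ?_, fun h => hc0 ?_⟩
  · have h3 : F.frac (N + 1) (c * (C.det * a)) = F.frac n₀ a₀ := by
      rw [← hc, ← map_smul, smul_eq_mul]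
    rw [F.frac_add (N + 1) n₀, F.frac_add n₀ (N + 1), add_comm n₀, ← sub_eq_zero, ← map_sub,
      F.zero_iff_mem (by omega)] at h3
    have h4 := detKer_mulVec (diagonal_mulVec_pow z (N + 1) n₀) (Ideal.mul_mem_left _ c h1)
    rw [Matrix.det_diagonal, Finset.prod_pow] at h4
    have h5 := sub_mem h4 (limitClosure_le_detKer p _ h3)
    rw [sub_sub_cancel] at h5
    refine mem_detKer_of_mulVec (diagonal_mulVec_pow z n₀ (N + 1)) (fun i => ?_) ?_
    · have h6 : z i ∈ (Ideal.span (Set.range fun i => z i ^ (n₀ + (N + 1)))).radical :=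
        ⟨n₀ + (N + 1), Ideal.subset_span ⟨i, rfl⟩⟩
      exact Ideal.pow_mem_of_mem _ h6 n₀ hn₀
    · rwa [Matrix.det_diagonal, Finset.prod_pow, add_comm n₀]
  · rw [hc, F.zero_iff_mem hn₀]; exact h

/-- Every prime other than the maximal ideal lies below a prime directly below it. -/
lemma exists_le_covered [IsNoetherianRing R] [IsLocalRing R] {q : Ideal R} (hq : q.IsPrime)
    (hqm : q ≠ maximalIdeal R) : ∃ p : Ideal R, p.IsPrime ∧ q ≤ p ∧ p ≠ maximalIdeal R ∧
      ∀ q' : Ideal R, q'.IsPrime → p < q' → q' = maximalIdeal R := by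
  obtain ⟨p, ⟨hp, hqp, hpm⟩, hmax⟩ := set_has_maximal_iff_noetherian.2 ‹IsNoetherianRing R›
    {p : Ideal R | p.IsPrime ∧ q ≤ p ∧ p ≠ maximalIdeal R} ⟨q, hq, le_rfl, hqm⟩
  refine ⟨p, hp, hqp, hpm, fun q' hq' hlt => ?_⟩
  by_contra h
  exact hmax q' ⟨hq', hqp.trans hlt.le, h⟩ hlt

end

/-- **Theorem C**: let `(R, m)` be a catenary equidimensional Noetherian local ring of
dimension `t`.  There is a positive integer `ℓ`, depending only on `R`, such that whenever
`x = x₁, …, x_t` is a system of parameters of `R` with `(x) ⊆ m^ℓ` and `y = y₁, …, y_t`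
satisfies `(y) ⊆^A (x)` (i.e. `yᵢ = Σ_j A i j * x j`), then `y` is a system of parameters
of `R` if and only if the determinantal map `det A : R/(x)^lim → R/(y)^lim` is injective
(expressed elementwise: `det A * r ∈ (y)^lim → r ∈ (x)^lim` for all `r`). -/
theorem exists_bound_sop_iff_determinantal_map_injective
    {R : Type*} [CommRing R] [IsNoetherianRing R] [IsLocalRing R]
    {t : ℕ} (hdim : ringKrullDim R = t)
    (hcat : IsCatenaryRing R) (hequi : IsEquidimensionalRing R) :
    ∃ ℓ : ℕ, 0 < ℓ ∧
      ∀ (x y : Fin t → R) (A : Matrix (Fin t) (Fin t) R),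
        IsSOP R x → Ideal.span (Set.range x) ≤ maximalIdeal R ^ ℓ →
        (∀ i, y i = ∑ j, A i j * x j) →
        (IsSOP R y ↔
          ∀ r : R, A.det * r ∈ limitClosure (M := R) y → r ∈ limitClosure (M := R) x) := by
  rcases t with _ | r
  · refine ⟨1, one_pos, fun x y A hx _ _ => ?_⟩
    obtain rfl : x = y := Subsingleton.elim x y
    exact ⟨fun _ r hr => by simpa using hr, fun _ => hx⟩
  -- without systems of parameters there is nothing to prove
  by_cases hex : ∃ z : Fin (r + 1) → R, IsSOP R z
  swap
  · exact ⟨1, one_pos, fun x y A hx => absurd ⟨x, hx⟩ hex⟩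
  obtain ⟨z, hz, hzr⟩ := hex
  obtain ⟨F, n₀, hn₀, hF⟩ := exists_level hz hzr.ge
  obtain ⟨l, hl⟩ := Ideal.exists_pow_le_of_le_radical_of_fg
    (I := maximalIdeal R) (J := powSpan z n₀)
    (hzr.ge.trans (Ideal.radical_le_radical_iff.2 (Ideal.span_le.2 (by
      rintro _ ⟨i, rfl⟩; exact radical_powSpan z n₀ i)))) (IsNoetherian.noetherian _)
  refine ⟨l + 1, l.succ_pos, fun x y A hx hxl hy => ?_⟩
  have hA : A.mulVec x = y := by
    funext i; rw [hy i]; rfl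
  constructor
  · intro hysop a ha
    exact mem_of_det_mul_mem_limitClosure hA (fun i => hysop.2.ge (hx.1 i)) ha
  · intro hinj
    have hym : ∀ i, y i ∈ maximalIdeal R := fun i => by
      rw [hy i]
      exact Ideal.sum_mem _ fun j _ => Ideal.mul_mem_left _ _ (hx.1 j)
    have hyle : Ideal.span (Set.range y) ≤ maximalIdeal R :=
      Ideal.span_le.2 (by rintro _ ⟨i, rfl⟩; exact hym i)
    refine ⟨hym, le_antisymm ((Ideal.IsPrime.radical_le_iff inferInstance).2 hyle) ?_⟩
    refine le_radical_of_forall_isPrime fun q hq hle => ?_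
    by_contra hqm
    obtain ⟨p, hp, hqp, hpm, hcov⟩ := exists_le_covered hq fun h => hqm h.ge
    -- `a₀` is killed by every determinantal map from `z ^ n₀` into `p`; its image in `R/(x)^lim` is
    -- nonzero and lies in the kernel of the determinantal map to `y`
    obtain ⟨X, a, hXm, hXr, ha, haX⟩ := detectsDetKer_of_catenary hdim hcat hequi hp hpm hcov
    rw [one_mul] at haX
    obtain ⟨a₀, ha₀, ha₀'⟩ := exists_mem_detKer_level hz hzr.ge hn₀ hF hXm hXr ha haX
    obtain ⟨B, hB⟩ := exists_mulVec_eq (x := fun i => z i ^ n₀) (y := x) fun i =>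
      hl (Ideal.pow_le_pow_right l.le_succ (hxl (Ideal.subset_span ⟨i, rfl⟩)))
    refine ha₀' (mem_of_det_mul_mem_limitClosure hB (fun i => ?_) (hinj _ ?_))
    · exact Ideal.pow_mem_of_mem _ (hx.2.ge (hz i)) n₀ hn₀
    · exact detKer_mulVec hB ha₀ y A
        (fun i => hqp (hle (Ideal.subset_span ⟨i, rfl⟩))) hA
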